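/- arXiv:1604.08277 — 3 statements merged into one kernel-verified Lean document; each statement's English description precedes it below -/
import Mathlib

section
/- Let p be an odd prime and W a finite p-free Coxeter group. Then the mod p cohomology H^k(A_W, F_p) of the alternating subgroup A_W vanishes for 0 < k < p - 2. -/
/-- The sign homomorphism of a Coxeter system, sending every simple reflection to `-1`. -/
noncomputable def CoxeterSystem.signHom {B W : Type*} [Group W] {M : CoxeterMatrix B}
    (cs : CoxeterSystem M W) : W →* ℤˣ :=
  cs.lift ⟨fun _ => -1, fun i i' => by simp⟩

/-- A Coxeter matrix is `p`-free if every entry `m(s,t)` is prime to `p`.  (In Mathlib's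
convention the entry `0` stands for `∞`, which counts as prime to every prime.) -/
def CoxeterMatrix.IsPFree {B : Type*} (M : CoxeterMatrix B) (p : ℕ) : Prop :=
  ∀ i i' : B, p ∣ M i i' → M i i' = 0

/-!
Put `M_I = k[W_I \ W]`, viewed inside the functions on `W`. The indicator functions of the cosets
`W_{A(w)} w`, with `A(w)` the left ascent set of `w`, are triangular with respect to length and
form a basis adapted to all `M_I`, so sums and intersections of the `M_I` distribute. Hence
`Q(I, J) = M_I / (M_I ∩ ∑_{j ∈ J} M_j)` fits into short exact sequences
`Q(I ∪ {t}, J) → Q(I, J) → Q(I, J ∪ {t})`. For `I ≠ ∅`, Shapiro's lemma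
identifies the cohomology of `Q(I, ∅)` with that of the alternating subgroup of `W_I`, and dimension
shifting passes the vanishing below `N` from the proper parabolic subgroups to `W` as long as `N`
is smaller than the rank.

This allows induction on the rank. If `p` does not divide `|W|`, averaging kills all positive
degrees. Otherwise an element of order `p` acts faithfully in the geometric representation, which
is defined over a real subfield of some `ℚ(ζ_n)` with `n` prime to `p`; over this field `Φ_p` is
irreducible, so the rank is at least `p - 1`.
-/

namespace CoxeterCohomology

open CoxeterSystem Module Polynomial

section GeometricRepresentation

variable {B : Type*} (M : CoxeterMatrix B)

/-- The entry `-2 cos (π / m(i, j))` of the Cartan matrix of the geometric representation.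
For `m(i, j) = ∞`, encoded by `M i j = 0`, division by zero yields the customary value `-2`. -/
noncomputable def cartanEntry (i j : B) : ℝ := -2 * Real.cos (Real.pi / M i j)

lemma cartanEntry_self (i : B) : cartanEntry M i i = 2 := by
  simp [cartanEntry]

lemma cartanEntry_comm (i j : B) : cartanEntry M i j = cartanEntry M j i := by
  rw [cartanEntry, cartanEntry, M.symmetric]

/-- The basis vector `α_i` of the geometric representation. -/
noncomputable def simpleRoot (i : B) : B →₀ ℝ := Finsupp.single i 1

/-- The linear form `α_i^∨` defining the simple reflection `v ↦ v - α_i^∨(v) α_i`. -/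
noncomputable def simpleCoroot (i : B) : Dual ℝ (B →₀ ℝ) :=
  Finsupp.linearCombination ℝ (cartanEntry M i)

lemma simpleRoot_pos (i : B) : 0 < simpleRoot i := by
  classical
  refine lt_of_le_of_ne (fun j => ?_) (by simp [simpleRoot, eq_comm])
  rw [simpleRoot, Finsupp.single_apply]
  split_ifs <;> simp

lemma simpleCoroot_simpleRoot (i j : B) :
    simpleCoroot M i (simpleRoot j) = cartanEntry M i j := by
  simp [simpleCoroot, simpleRoot]

lemma simpleCoroot_simpleRoot_self (i : B) : simpleCoroot M i (simpleRoot i) = 2 := by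
  rw [simpleCoroot_simpleRoot, cartanEntry_self]

/-- The reflection by which the `i`-th generator acts in the geometric representation. -/
noncomputable def simpleReflection (i : B) : (B →₀ ℝ) ≃ₗ[ℝ] (B →₀ ℝ) :=
  reflection (simpleCoroot_simpleRoot_self M i)

lemma simpleReflection_apply (i : B) (v : B →₀ ℝ) :
    simpleReflection M i v = v - simpleCoroot M i v • simpleRoot i :=
  reflection_apply _ _

lemma simpleReflection_simpleRoot (i j : B) :
    simpleReflection M i (simpleRoot j) = simpleRoot j - cartanEntry M i j • simpleRoot i := by
  rw [simpleReflection_apply, simpleCoroot_simpleRoot]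

lemma chebyshevS_eval_eq_zero {θ : ℝ} {n : ℤ} (hθ : Real.sin θ ≠ 0)
    (h : Real.sin ((n + 1) * θ) = 0) : (Chebyshev.S ℝ n).eval (2 * Real.cos θ) = 0 := by
  refine (mul_eq_zero.1 ?_).resolve_right hθ
  rw [Chebyshev.S_two_mul_real_cos, h]

lemma chebyshevS_eval_add_eq_zero {θ : ℝ} {n : ℤ} (hθ : Real.sin θ ≠ 0)
    (h : Real.sin ((n + 1) * θ) + Real.sin (n * θ) = 0) :
    (Chebyshev.S ℝ n).eval (2 * Real.cos θ) + (Chebyshev.S ℝ (n - 1)).eval (2 * Real.cos θ) =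
      0 := by
  refine (mul_eq_zero.1 ?_).resolve_right hθ
  rw [add_mul, Chebyshev.S_two_mul_real_cos, Chebyshev.S_two_mul_real_cos, ← h]
  push_cast
  ring_nf

lemma sin_two_pi_div_ne_zero {m : ℕ} (hm : 2 < m) : Real.sin (2 * Real.pi / m) ≠ 0 := by
  have hm' : (2 : ℝ) < m := by exact_mod_cast hm
  refine (Real.sin_pos_of_pos_of_lt_pi (by positivity) ?_).ne'
  rw [div_lt_iff₀ (by positivity)]
  nlinarith [Real.pi_pos]

/-- Both coefficients in the expansion of `(s_i s_j) ^ m v - v` have one of the following factors,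
depending on the parity of `m`; each of them vanishes because `s_i s_j` is a rotation by `2π/m`. -/
lemma chebyshevS_two_pi_div {m : ℕ} (hm : 2 < m) :
    (∀ q : ℕ, m = 2 * q →
      (Chebyshev.S ℝ (q - 1)).eval (2 * Real.cos (2 * Real.pi / m)) = 0) ∧
    ∀ q : ℕ, m = 2 * q + 1 →
      (Chebyshev.S ℝ q).eval (2 * Real.cos (2 * Real.pi / m)) +
        (Chebyshev.S ℝ (q - 1)).eval (2 * Real.cos (2 * Real.pi / m)) = 0 := by
  have hm0 : (m : ℝ) ≠ 0 := by exact_mod_cast (by omega : m ≠ 0)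
  refine ⟨fun q hq => chebyshevS_eval_eq_zero (sin_two_pi_div_ne_zero hm) ?_,
    fun q hq => chebyshevS_eval_add_eq_zero (sin_two_pi_div_ne_zero hm) ?_⟩
  · have : (((q : ℤ) - 1 : ℤ) + 1 : ℝ) * (2 * Real.pi / m) = Real.pi := by
      have : (m : ℝ) = 2 * q := by exact_mod_cast hq
      push_cast
      field_simp
      linarith
    rw [this, Real.sin_pi]
  · have : (((q : ℤ) : ℝ) + 1) * (2 * Real.pi / m) =
        2 * Real.pi - ((q : ℤ) : ℝ) * (2 * Real.pi / m) := by
      have : (m : ℝ) = 2 * q + 1 := by exact_mod_cast hq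
      push_cast
      field_simp
      linarith
    rw [this, Real.sin_two_pi_sub, neg_add_cancel]

lemma simpleReflection_mul_pow (i j : B) :
    (simpleReflection M i * simpleReflection M j) ^ M i j = 1 := by
  ext1 v
  rcases eq_or_ne i j with rfl | hij
  · rw [M.diagonal, pow_one]
    exact involutive_reflection (simpleCoroot_simpleRoot_self M i) v
  rw [simpleReflection, simpleReflection,
    reflection_mul_reflection_pow_apply _ _ _ _ (2 * Real.cos (2 * Real.pi / M i j)) (by
      rw [simpleCoroot_simpleRoot, simpleCoroot_simpleRoot, cartanEntry_comm M j i, cartanEntry,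
        mul_div_assoc, Real.cos_two_mul]
      ring)]
  have hM : M i j = 0 ∨ M i j = 2 ∨ 2 < M i j := by
    have := M.off_diagonal i j hij
    omega
  rcases hM with h | h | h
  · simp [h]
  · have : cartanEntry M i j = 0 := by simp [cartanEntry, h]
    simp only [simpleCoroot_simpleRoot, cartanEntry_comm M j i, this, h]
    norm_num
    abel
  obtain ⟨h_even, h_odd⟩ := chebyshevS_two_pi_div h
  rcases Nat.even_or_odd' (M i j) with ⟨q, hq | hq⟩
  · rw [show ((M i j : ℤ) - 2) / 2 = q - 1 by omega, show ((M i j : ℤ) - 1) / 2 = q - 1 by omega,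
      h_even q hq]
    simp
  · rw [show ((M i j : ℤ) - 2) / 2 = q - 1 by omega, show ((M i j : ℤ) - 1) / 2 = q by omega,
      show ((M i j : ℤ) - 3) / 2 = q - 1 by omega, show (M i j : ℤ) / 2 = q by omega,
      h_odd q hq]
    simp

variable {M} {W : Type*} [Group W] (cs : CoxeterSystem M W)

/-- The geometric representation of a Coxeter group on the free real vector space on its
generators. -/
noncomputable def geometricRep : W →* ((B →₀ ℝ) ≃ₗ[ℝ] (B →₀ ℝ)) :=
  cs.lift ⟨simpleReflection M, simpleReflection_mul_pow M⟩

lemma geometricRep_simple (i : B) : geometricRep cs (cs.simple i) = simpleReflection M i :=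
  cs.lift_apply_simple _ i

lemma geometricRep_mul_apply (u w : W) (v : B →₀ ℝ) :
    geometricRep cs (u * w) v = geometricRep cs u (geometricRep cs w v) := by
  rw [map_mul, LinearEquiv.mul_apply]

lemma geometricRep_alternatingWord_simpleRoot (i j : B) (k : ℕ) :
    geometricRep cs (cs.wordProd (alternatingWord i j k)) (simpleRoot i) =
      (Chebyshev.U ℝ k).eval (Real.cos (Real.pi / M i j)) •
        simpleRoot (if Even k then i else j) +
      (Chebyshev.U ℝ (k - 1)).eval (Real.cos (Real.pi / M i j)) •
        simpleRoot (if Even k then j else i) := by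
  induction k with
  | zero => simp [alternatingWord]
  | succ k ih =>
    have hU := congrArg (eval (Real.cos (Real.pi / M i j))) (Chebyshev.U_add_two ℝ (k - 1))
    rw [show (k : ℤ) - 1 + 2 = (k + 1 : ℕ) by push_cast; ring, sub_add_cancel] at hU
    simp only [eval_sub, eval_mul, eval_ofNat, eval_X] at hU
    rw [alternatingWord_succ', wordProd_cons, geometricRep_mul_apply, geometricRep_simple, ih, hU]
    by_cases h : Even k <;>
      simp only [h, Nat.even_add_one, not_true, not_false_eq_true, if_true, if_false, map_add,
        map_smul, simpleReflection_simpleRoot, cartanEntry_self, cartanEntry_comm M j i,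
        Nat.cast_add, Nat.cast_one, add_sub_cancel_right] <;>
      rw [cartanEntry] <;> module

lemma chebyshevU_cos_pi_div_nonneg {m k : ℕ} (hm : m ≠ 1) (hk : m ≠ 0 → k ≤ m) :
    0 ≤ (Chebyshev.U ℝ (k - 1)).eval (Real.cos (Real.pi / m)) := by
  rcases Nat.eq_zero_or_pos m with rfl | h0
  · simp
  have hm2 : (2 : ℝ) ≤ m := by exact_mod_cast (by omega : 2 ≤ m)
  have hkm : (k : ℝ) ≤ m := by exact_mod_cast hk h0.ne'
  have hpi := Real.pi_pos
  have hsin : 0 < Real.sin (Real.pi / m) := by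
    refine Real.sin_pos_of_pos_of_lt_pi (by positivity) ?_
    rw [div_lt_iff₀ (by positivity)]
    nlinarith
  refine nonneg_of_mul_nonneg_left ?_ hsin
  rw [Chebyshev.U_real_cos]
  push_cast
  rw [sub_add_cancel]
  refine Real.sin_nonneg_of_nonneg_of_le_pi (by positivity) ?_
  rw [← mul_div_assoc, div_le_iff₀ (by positivity)]
  nlinarith

lemma not_isRightDescent_of_length_mul_alternatingWord {v : W} {i j : B} {k : ℕ} (hk : 0 < k)
    (hlen : cs.length (v * cs.wordProd (alternatingWord i j k)) = cs.length v + k) :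
    ¬cs.IsRightDescent v (if Even k then i else j) := fun h => by
  obtain ⟨n, rfl⟩ : ∃ n, k = n + 1 := ⟨k - 1, by omega⟩
  have hn : v * cs.wordProd (alternatingWord i j (n + 1)) =
      v * cs.simple (if Even (n + 1) then i else j) * cs.wordProd (alternatingWord i j n) := by
    rw [alternatingWord_succ', wordProd_cons, mul_assoc]
    by_cases hn : Even n <;> simp [hn, Nat.even_add_one]
  have h1 := cs.length_mul_le (v * cs.simple (if Even (n + 1) then i else j))
    (cs.wordProd (alternatingWord i j n))
  have h2 := cs.length_wordProd_le (alternatingWord i j n)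
  rw [length_alternatingWord] at h2
  have := cs.isRightDescent_iff.1 h
  rw [hn] at hlen
  omega

lemma exists_eq_mul_alternatingWord {u : W} {j : B} (hj : cs.IsRightDescent u j) (i : B) :
    ∃ (v : W) (k : ℕ), u = v * cs.wordProd (alternatingWord i j k) ∧
      cs.length u = cs.length v + k ∧ 0 < k ∧
      ¬cs.IsRightDescent v i ∧ ¬cs.IsRightDescent v j := by
  classical
  let P : ℕ → Prop := fun k => ∃ v : W, u = v * cs.wordProd (alternatingWord i j k) ∧
    cs.length u = cs.length v + k
  have hP_le : ∀ k, P k → k ≤ cs.length u := by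
    rintro k ⟨v, -, hv⟩
    omega
  have hP_one : P 1 := by
    refine ⟨u * cs.simple j, by simp [alternatingWord], ?_⟩
    have := cs.isRightDescent_iff.1 hj
    omega
  obtain ⟨v, huv, hlen⟩ := Nat.findGreatest_spec (hP_le 1 hP_one) hP_one
  have hmax : ∀ {m}, m ≤ cs.length u → P m → m ≤ Nat.findGreatest P (cs.length u) :=
    Nat.le_findGreatest
  have hk : 1 ≤ Nat.findGreatest P (cs.length u) := hmax (hP_le 1 hP_one) hP_one
  generalize Nat.findGreatest P (cs.length u) = k at *
  have h_next : ¬cs.IsRightDescent v (if Even k then j else i) := fun h => by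
    have hP : P (k + 1) := by
      refine ⟨v * cs.simple (if Even k then j else i), ?_, ?_⟩
      · rw [alternatingWord_succ', wordProd_cons, mul_assoc, simple_mul_simple_cancel_left, huv]
      · have := cs.isRightDescent_iff.1 h
        omega
    have := hmax (hP_le _ hP) hP
    omega
  have h_last := not_isRightDescent_of_length_mul_alternatingWord cs hk (huv ▸ hlen)
  refine ⟨v, k, huv, hlen, hk, ?_⟩
  by_cases h : Even k
  · simpa [h] using And.intro h_last h_next
  · simpa [h] using And.intro h_next h_last

lemma succ_le_of_not_isRightDescent_mul_alternatingWord {v : W} {i j : B} {k : ℕ}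
    (hlen : cs.length (v * cs.wordProd (alternatingWord i j k)) = cs.length v + k)
    (hi : ¬cs.IsRightDescent (v * cs.wordProd (alternatingWord i j k)) i) (hM : M i j ≠ 0) :
    k + 1 ≤ M i j := by
  by_contra! hk
  refine cs.not_isReduced_alternatingWord j i (m := k + 1) (by rwa [M.symmetric])
    (by rw [M.symmetric]; exact hk) ?_
  have h1 := cs.not_isRightDescent_iff.1 hi
  have h2 := cs.length_mul_le v (cs.wordProd (alternatingWord j i (k + 1)))
  have h3 := cs.length_wordProd_le (alternatingWord j i (k + 1))
  rw [alternatingWord_succ, wordProd_concat, ← mul_assoc] at h2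
  rw [alternatingWord_succ, wordProd_concat] at h3
  rw [CoxeterSystem.IsReduced, alternatingWord_succ, wordProd_concat]
  simp only [List.length_concat, length_alternatingWord] at h3 ⊢
  omega

theorem geometricRep_simpleRoot_nonneg {u : W} {i : B} (hi : ¬cs.IsRightDescent u i) :
    0 ≤ geometricRep cs u (simpleRoot i) := by
  induction hn : cs.length u using Nat.strong_induction_on generalizing u i with
  | _ n ih =>
  subst hn
  by_cases hu : u = 1
  · simpa [hu] using (simpleRoot_pos i).le
  obtain ⟨j, hj⟩ := cs.exists_rightDescent_of_ne_one hu
  have hij : i ≠ j := by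
    rintro rfl
    exact hi hj
  obtain ⟨v, k, rfl, hlen, hk, hvi, hvj⟩ := exists_eq_mul_alternatingWord cs hj i
  have hv_lt : cs.length v < cs.length (v * cs.wordProd (alternatingWord i j k)) := by omega
  have hv : ∀ b ∈ ({i, j} : Set B), 0 ≤ geometricRep cs v (simpleRoot b) := by
    rintro b (rfl | rfl)
    exacts [ih _ hv_lt hvi rfl, ih _ hv_lt hvj rfl]
  have hkM := succ_le_of_not_isRightDescent_mul_alternatingWord cs hlen hi
  have hM := M.off_diagonal i j hij
  rw [geometricRep_mul_apply, geometricRep_alternatingWord_simpleRoot, map_add, map_smul, map_smul]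
  refine add_nonneg (smul_nonneg ?_ (hv _ (by split_ifs <;> simp)))
    (smul_nonneg ?_ (hv _ (by split_ifs <;> simp)))
  · simpa using chebyshevU_cos_pi_div_nonneg hM hkM
  · exact chebyshevU_cos_pi_div_nonneg hM fun h => (Nat.le_succ k).trans (hkM h)

theorem geometricRep_simpleRoot_neg {u : W} {i : B} (hi : cs.IsRightDescent u i) :
    geometricRep cs u (simpleRoot i) < 0 := by
  refine lt_of_le_of_ne ?_ ((LinearEquiv.map_ne_zero_iff _).2 (simpleRoot_pos i).ne')
  have h := geometricRep_simpleRoot_nonneg cs (cs.isRightDescent_iff_not_isRightDescent_mul.1 hi)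
  rw [geometricRep_mul_apply, geometricRep_simple, simpleReflection_simpleRoot,
    cartanEntry_self, two_smul, sub_add_cancel_left, map_neg] at h
  exact neg_nonneg.1 h

theorem geometricRep_injective : Function.Injective (geometricRep cs) := by
  refine (injective_iff_map_eq_one _).2 fun u hu => ?_
  by_contra hne
  obtain ⟨i, hi⟩ := cs.exists_rightDescent_of_ne_one hne
  have := geometricRep_simpleRoot_neg cs hi
  rw [hu] at this
  exact this.not_gt (simpleRoot_pos i)

end GeometricRepresentation

section Parabolic

variable {B W : Type*} [Group W] {M : CoxeterMatrix B} (cs : CoxeterSystem M W) (I : Set B)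

/-- The Coxeter matrix of the sub-diagram on the vertices `I`. -/
def restrictMatrix (M : CoxeterMatrix B) (I : Set B) : CoxeterMatrix I where
  M i j := M i j
  isSymm := by
    ext i j
    exact M.symmetric j i
  diagonal i := M.diagonal i
  off_diagonal i j h := M.off_diagonal i j fun h' => h (Subtype.ext h')

/-- The standard parabolic subgroup `W_I`. -/
def parabolic : Subgroup W := Subgroup.closure (cs.simple '' I)

variable {I} in
lemma simple_mem_parabolic {i : B} (hi : i ∈ I) : cs.simple i ∈ parabolic cs I :=
  Subgroup.subset_closure ⟨i, hi, rfl⟩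

lemma parabolic_univ : parabolic cs Set.univ = ⊤ := by
  rw [parabolic, Set.image_univ, cs.subgroup_closure_range_simple]

lemma parabolic_union (J : Set B) : parabolic cs (I ∪ J) = parabolic cs I ⊔ parabolic cs J := by
  rw [parabolic, Set.image_union, Subgroup.closure_union]
  rfl

lemma lmapDomain_simpleRoot (i : I) :
    Finsupp.lmapDomain ℝ ℝ Subtype.val (simpleRoot i) = simpleRoot (i : B) := by
  simp [simpleRoot]

variable {cs I} in
lemma geometricRep_lmapDomain {W' : Type*} [Group W'] {cs' : CoxeterSystem (restrictMatrix M I) W'}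
    {φ : W' →* W} (hφ : ∀ i, φ (cs'.simple i) = cs.simple i) (u : W') (v : I →₀ ℝ) :
    geometricRep cs (φ u) (Finsupp.lmapDomain ℝ ℝ Subtype.val v) =
      Finsupp.lmapDomain ℝ ℝ Subtype.val (geometricRep cs' u v) := by
  induction u using cs'.simple_induction_left generalizing v with
  | one => simp
  | mul_simple_left u i ih =>
    rw [map_mul, geometricRep_mul_apply, geometricRep_mul_apply, ih, hφ, geometricRep_simple,
      geometricRep_simple]
    induction geometricRep cs' u v using Finsupp.induction_linear with
    | zero => simp
    | add x y hx hy => simp only [map_add, hx, hy]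
    | single j c =>
      have : Finsupp.single j c = c • simpleRoot j := by simp [simpleRoot]
      simp only [this, map_smul, map_sub, lmapDomain_simpleRoot, simpleReflection_simpleRoot]
      rfl

variable {cs I} in
lemma injective_of_map_simple {W' : Type*} [Group W'] {cs' : CoxeterSystem (restrictMatrix M I) W'}
    {φ : W' →* W} (hφ : ∀ i, φ (cs'.simple i) = cs.simple i) : Function.Injective φ := by
  refine (injective_iff_map_eq_one _).2 fun u hu => geometricRep_injective cs' ?_
  ext1 v
  refine Finsupp.mapDomain_injective Subtype.val_injective ?_
  have := geometricRep_lmapDomain hφ u v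
  rw [hu, map_one] at this
  simpa using this.symm

/-- The homomorphism from the abstract Coxeter group of the sub-diagram on `I` to `W`. -/
def parabolicLift : (restrictMatrix M I).Group →* W :=
  (restrictMatrix M I).toCoxeterSystem.lift
    ⟨fun i => cs.simple i, fun i j => cs.simple_mul_simple_pow i j⟩

lemma parabolicLift_simple (i : I) :
    parabolicLift cs I ((restrictMatrix M I).toCoxeterSystem.simple i) = cs.simple i :=
  (restrictMatrix M I).toCoxeterSystem.lift_apply_simple _ i

lemma range_parabolicLift : (parabolicLift cs I).range = parabolic cs I := by
  rw [MonoidHom.range_eq_map, ← (restrictMatrix M I).toCoxeterSystem.subgroup_closure_range_simple,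
    MonoidHom.map_closure, ← Set.range_comp, parabolic, Set.image_eq_range]
  congr 2
  exact funext fun i => parabolicLift_simple cs I i

/-- A standard parabolic subgroup is a Coxeter group on its own generators. -/
noncomputable def parabolicSystem : CoxeterSystem (restrictMatrix M I) (parabolic cs I) :=
  (restrictMatrix M I).toCoxeterSystem.map <|
    (MonoidHom.ofInjective (injective_of_map_simple (parabolicLift_simple cs I))).trans
      (MulEquiv.subgroupCongr (range_parabolicLift cs I))

lemma parabolicSystem_simple (i : I) : ((parabolicSystem cs I).simple i : W) = cs.simple i :=
  parabolicLift_simple cs I i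

variable {I} in
lemma geometricRep_lmapDomain_nonneg {w : W} (hw : ∀ i ∈ I, ¬cs.IsRightDescent w i) {v : I →₀ ℝ}
    (hv : 0 ≤ v) : 0 ≤ geometricRep cs w (Finsupp.lmapDomain ℝ ℝ Subtype.val v) := by
  have : Finsupp.lmapDomain ℝ ℝ Subtype.val v = v.sum fun i c => c • simpleRoot (i : B) := by
    simp [Finsupp.mapDomain, simpleRoot]
  simp only [this, map_finsuppSum, map_smul]
  refine Finset.sum_nonneg fun i _ => ?_
  exact smul_nonneg (hv i) (geometricRep_simpleRoot_nonneg cs (hw i i.2))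

variable {I} in
lemma length_mul_coe_parabolic {w : W} (hw : ∀ i ∈ I, ¬cs.IsRightDescent w i)
    (u : parabolic cs I) :
    cs.length (w * u) = cs.length w + (parabolicSystem cs I).length u := by
  induction hn : (parabolicSystem cs I).length u generalizing u with
  | zero => simp [(parabolicSystem cs I).length_eq_zero_iff.1 hn]
  | succ n ih =>
    obtain ⟨j, hj⟩ := (parabolicSystem cs I).exists_rightDescent_of_ne_one (w := u) (by
      rintro rfl
      simp at hn)
    obtain ⟨u, rfl⟩ : ∃ u', u = u' * (parabolicSystem cs I).simple j :=
      ⟨u * (parabolicSystem cs I).simple j, by rw [simple_mul_simple_cancel_right]⟩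
    have hu : (parabolicSystem cs I).length u = n := by
      have := (parabolicSystem cs I).isRightDescent_iff.1 hj
      rw [simple_mul_simple_cancel_right] at this
      omega
    have hj_root : 0 ≤ geometricRep (parabolicSystem cs I) u (simpleRoot j) := by
      refine geometricRep_simpleRoot_nonneg _ ?_
      have := (parabolicSystem cs I).isRightDescent_iff_not_isRightDescent_mul.1 hj
      rwa [simple_mul_simple_cancel_right] at this
    have hwu : ¬cs.IsRightDescent (w * u) j := fun h => by
      refine (geometricRep_simpleRoot_neg cs h).not_ge ?_
      have := geometricRep_lmapDomain (cs' := parabolicSystem cs I)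
        (φ := (parabolic cs I).subtype) (parabolicSystem_simple cs I) u (simpleRoot j)
      rw [Subgroup.subtype_apply, lmapDomain_simpleRoot] at this
      rw [geometricRep_mul_apply, this]
      exact geometricRep_lmapDomain_nonneg cs hw hj_root
    rw [Subgroup.coe_mul, parabolicSystem_simple, ← mul_assoc, cs.not_isRightDescent_iff.1 hwu,
      ih u hu, add_assoc]

variable {I} in
lemma length_lt_length_mul_of_mem_parabolic {u w : W} (hw : ∀ i ∈ I, ¬cs.IsLeftDescent w i)
    (hu : u ∈ parabolic cs I) (hu1 : u ≠ 1) : cs.length w < cs.length (u * w) := by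
  have h := length_mul_coe_parabolic cs (w := w⁻¹)
    (fun i hi => cs.isRightDescent_inv_iff.not.2 (hw i hi)) ⟨u⁻¹, inv_mem hu⟩
  rw [← mul_inv_rev, cs.length_inv, cs.length_inv] at h
  have : (parabolicSystem cs I).length ⟨u⁻¹, inv_mem hu⟩ ≠ 0 := by
    rw [Ne, (parabolicSystem cs I).length_eq_zero_iff, Subtype.ext_iff]
    simpa using hu1
  omega

end Parabolic

section Triangular

variable {k α : Type*} [CommRing k] {ℓ : α → ℕ} {e : α → α → k}

lemma linearIndependent_of_triangular (he_self : ∀ a, e a a = 1)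
    (he_lt : ∀ a b, e a b ≠ 0 → b ≠ a → ℓ a < ℓ b) : LinearIndependent k e := by
  classical
  rw [linearIndependent_iff]
  intro c hc
  by_contra hne
  obtain ⟨a, ha, hmin⟩ := c.support.exists_min_image ℓ (Finsupp.support_nonempty_iff.2 hne)
  refine Finsupp.mem_support_iff.1 ha ?_
  have h := congrFun hc a
  rw [Finsupp.linearCombination_apply, Finsupp.sum, Finset.sum_apply,
    Finset.sum_eq_single_of_mem a ha fun b hb hba => ?_] at h
  · simpa [he_self] using h
  · by_contra hne'
    have := he_lt b a (fun h0 => hne' (by simp [h0])) hba.symm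
    exact (hmin b hb).not_gt this

lemma le_span_of_triangular [Finite α] (he_self : ∀ a, e a a = 1)
    (he_lt : ∀ a b, e a b ≠ 0 → b ≠ a → ℓ a < ℓ b) {N : Submodule k (α → k)} {S : Set α}
    (he_mem : ∀ a ∈ S, e a ∈ N)
    (hS : ∀ f ∈ N, ∀ a, f a ≠ 0 → (∀ b, ℓ b < ℓ a → f b = 0) → a ∈ S) :
    N ≤ Submodule.span k (e '' S) := by
  classical
  have := Fintype.ofFinite α
  suffices ∀ s : Finset α, (∀ a ∈ s, ∀ b, ℓ a < ℓ b → b ∈ s) →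
      ∀ f ∈ N, (∀ a ∉ s, f a = 0) → f ∈ Submodule.span k (e '' S) from
    fun f hf => this Finset.univ (by simp) f hf (by simp)
  intro s
  induction s using Finset.induction_on_min_value ℓ with
  | empty =>
    intro _ f _ h0
    rw [show f = 0 from funext fun a => h0 a (Finset.notMem_empty a)]
    exact zero_mem _
  | insert a s ha hmin ih =>
    intro hs f hf h0
    have hmem : f a ≠ 0 → a ∈ S := fun hfa => hS f hf a hfa fun b hb => h0 b fun hbs => by
      rcases Finset.mem_insert.1 hbs with rfl | hbs
      exacts [hb.false, (hmin b hbs).not_gt hb]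
    have hsmul : ∀ K : Submodule k (α → k), (a ∈ S → e a ∈ K) → f a • e a ∈ K := fun K hK => by
      rcases eq_or_ne (f a) 0 with hfa | hfa
      exacts [by simp [hfa], K.smul_mem _ (hK (hmem hfa))]
    rw [← sub_add_cancel f (f a • e a)]
    refine add_mem (ih (fun b hb c hc => ?_) _ (sub_mem hf (hsmul N (he_mem a))) fun b hb => ?_)
      (hsmul _ fun haS => Submodule.subset_span ⟨a, haS, rfl⟩)
    · refine (Finset.mem_insert.1 (hs b (Finset.mem_insert_of_mem hb) c hc)).resolve_left ?_
      rintro rfl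
      exact (hmin b hb).not_gt hc
    · rcases eq_or_ne b a with rfl | hba
      · simp [he_self]
      · have hb' : b ∉ insert a s := by simp [hb, hba]
        have : e a b = 0 := by
          by_contra hab
          exact hb' (hs a (Finset.mem_insert_self a s) b (he_lt a b hab hba))
        simp [h0 b hb', this]

end Triangular

lemma span_image_inf_sup_le {k V ι : Type*} [CommRing k] [AddCommGroup V] [Module k V] {v : ι → V}
    (hv : LinearIndependent k v) (S T U : Set ι) :
    Submodule.span k (v '' S) ⊓ (Submodule.span k (v '' T) ⊔ Submodule.span k (v '' U)) ≤
      Submodule.span k (v '' S) ⊓ Submodule.span k (v '' T) ⊔ Submodule.span k (v '' U) := by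
  rw [← Submodule.span_union, ← Set.image_union]
  simp only [Finsupp.span_image_eq_map_linearCombination]
  rw [← Submodule.map_inf _ hv, ← Submodule.map_inf _ hv, ← Submodule.map_sup,
    ← Finsupp.supported_inter, ← Finsupp.supported_inter, ← Finsupp.supported_union]
  exact Submodule.map_mono (Finsupp.supported_mono (by grind))

section LeftInvariants

variable (k : Type*) {B W : Type*} [CommRing k] [Group W]

variable {k} in
/-- The subgroup of all `u` for which the function `f` is invariant under left translation
by `u`. -/
def leftStabilizer (f : W → k) : Subgroup W where
  carrier := {u | ∀ w, f (u * w) = f w}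
  mul_mem' {u v} hu hv w := by rw [mul_assoc, hu, hv]
  one_mem' w := by rw [one_mul]
  inv_mem' {u} hu w := by rw [← hu, mul_inv_cancel_left]

/-- The functions on `W` that are constant on the cosets `P w`, i.e. the permutation module
`k[P \ W]` (for finite `W`). -/
def leftInvariants (P : Subgroup W) : Submodule k (W → k) where
  carrier := {f | P ≤ leftStabilizer f}
  add_mem' hf hg u hu w := by rw [Pi.add_apply, hf hu, hg hu, Pi.add_apply]
  zero_mem' _ _ _ := rfl
  smul_mem' c f hf u hu w := by rw [Pi.smul_apply, hf hu, Pi.smul_apply]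

lemma leftInvariants_sup (P P' : Subgroup W) :
    leftInvariants k (P ⊔ P') = leftInvariants k P ⊓ leftInvariants k P' := by
  ext f
  exact sup_le_iff (a := P) (b := P') (c := leftStabilizer f)

variable {M : CoxeterMatrix B} (cs : CoxeterSystem M W)

/-- The left ascent set of `w`. -/
def leftAscents (w : W) : Set B := {i | ¬cs.IsLeftDescent w i}

open Classical in
/-- The indicator function of the coset `P w`, where `P` is the parabolic subgroup generated by
the left ascents of `w`, so that `w` is the shortest element of its coset. As `w` varies, these
functions form a basis of `W → k` adapted to all the submodules of functions invariant under a
parabolic subgroup. -/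
noncomputable def ascentIndicator (w x : W) : k :=
  if x * w⁻¹ ∈ parabolic cs (leftAscents cs w) then 1 else 0

lemma ascentIndicator_self (w : W) : ascentIndicator k cs w w = 1 := by
  simp [ascentIndicator, one_mem]

variable {k} in
lemma length_lt_of_ascentIndicator_ne_zero (w x : W) (h : ascentIndicator k cs w x ≠ 0)
    (hx : x ≠ w) : cs.length w < cs.length x := by
  have hmem : x * w⁻¹ ∈ parabolic cs (leftAscents cs w) := by
    by_contra hc
    exact h (if_neg hc)
  simpa using length_lt_length_mul_of_mem_parabolic cs (fun _ hi => hi) hmem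
    (mul_inv_eq_one.not.2 hx)

lemma linearIndependent_ascentIndicator : LinearIndependent k (ascentIndicator k cs) :=
  linearIndependent_of_triangular (ascentIndicator_self k cs)
    (length_lt_of_ascentIndicator_ne_zero cs)

lemma ascentIndicator_mem_leftInvariants {w : W} {I : Set B} (hI : I ⊆ leftAscents cs w) :
    ascentIndicator k cs w ∈ leftInvariants k (parabolic cs I) := by
  intro u hu x
  have hu' : u ∈ parabolic cs (leftAscents cs w) := Subgroup.closure_mono (Set.image_mono hI) hu
  have h : u * x * w⁻¹ ∈ parabolic cs (leftAscents cs w) ↔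
      x * w⁻¹ ∈ parabolic cs (leftAscents cs w) := by
    rw [mul_assoc, Subgroup.mul_mem_cancel_left _ hu']
  unfold ascentIndicator
  split_ifs <;> tauto

theorem leftInvariants_parabolic_eq_span [Finite W] (I : Set B) :
    leftInvariants k (parabolic cs I) =
      Submodule.span k (ascentIndicator k cs '' {w | I ⊆ leftAscents cs w}) := by
  refine le_antisymm (le_span_of_triangular (ascentIndicator_self k cs)
    (length_lt_of_ascentIndicator_ne_zero cs)
    (fun w hw => ascentIndicator_mem_leftInvariants k cs hw) fun f hf w hfw hmin i hi hd => ?_) ?_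
  · rw [← hf (simple_mem_parabolic cs hi)] at hfw
    exact hfw (hmin _ hd)
  · rw [Submodule.span_le]
    rintro _ ⟨w, hw, rfl⟩
    exact ascentIndicator_mem_leftInvariants k cs hw

/-- The sum of the submodules of functions invariant under one of the generators in `J`. -/
def sumLeftInvariants (J : Set B) : Submodule k (W → k) :=
  ⨆ j ∈ J, leftInvariants k (parabolic cs {j})

lemma sumLeftInvariants_insert (t : B) (J : Set B) :
    sumLeftInvariants k cs (insert t J) =
      leftInvariants k (parabolic cs {t}) ⊔ sumLeftInvariants k cs J :=
  iSup_insert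

lemma leftInvariants_parabolic_insert (t : B) (I : Set B) :
    leftInvariants k (parabolic cs (insert t I)) =
      leftInvariants k (parabolic cs I) ⊓ leftInvariants k (parabolic cs {t}) := by
  rw [← leftInvariants_sup, ← parabolic_union, Set.union_singleton]

lemma leftInvariants_inf_sumLeftInvariants_insert_le [Finite W] (t : B) (I J : Set B) :
    leftInvariants k (parabolic cs I) ⊓
        (leftInvariants k (parabolic cs {t}) ⊔ sumLeftInvariants k cs J) ≤
      leftInvariants k (parabolic cs I) ⊓ leftInvariants k (parabolic cs {t}) ⊔
        sumLeftInvariants k cs J := by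
  have hJ : sumLeftInvariants k cs J = Submodule.span k
      (ascentIndicator k cs '' ⋃ j ∈ J, {w | {j} ⊆ leftAscents cs w}) := by
    simp only [sumLeftInvariants, leftInvariants_parabolic_eq_span, Set.image_iUnion,
      Submodule.span_iUnion]
  rw [hJ]
  simp only [leftInvariants_parabolic_eq_span]
  exact span_image_inf_sup_le (linearIndependent_ascentIndicator k cs) _ _ _

end LeftInvariants

section LongExactSequence

open CategoryTheory CategoryTheory.Limits groupCohomology

universe u

variable {k G : Type u} [CommRing k] [Group G]

lemma isZero_groupCohomology_of_mono {A A' : Rep.{u} k G} (f : A ⟶ A') [Mono f]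
    (h : IsZero (groupCohomology A' 0)) : IsZero (groupCohomology A 0) := by
  have := mono_map_0_of_mono f
  exact .of_mono (groupCohomology.map (MonoidHom.id G) f 0) h

lemma map_zero_eq_zero {A A' : Rep.{u} k G} (f : A ⟶ A') (hf : ∀ v ∈ A.ρ.invariants, f.hom v = 0) :
    (groupCohomology.functor k G 0).map f = 0 := by
  have h : (Rep.invariantsFunctor k G).map f = 0 := by
    ext ⟨v, hv⟩
    exact Subtype.ext (hf v hv)
  have h0 := map_id_comp_H0Iso_hom f
  rwa [h, Limits.comp_zero, ← Limits.zero_comp (f := (H0Iso A').hom), cancel_mono] at h0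

variable {X : ShortComplex (Rep.{u} k G)} (hX : X.ShortExact) {n : ℕ}

include hX

lemma isZero_groupCohomology_X₁_succ (h₂ : IsZero (groupCohomology X.X₂ (n + 1)))
    (h₃ : IsZero (groupCohomology X.X₃ n)) : IsZero (groupCohomology X.X₁ (n + 1)) :=
  (mapShortComplex₁_exact hX rfl).isZero_of_both_zeros (h₃.eq_zero_of_src _) (h₂.eq_zero_of_tgt _)

lemma isZero_groupCohomology_X₃ (h₁ : IsZero (groupCohomology X.X₁ (n + 1)))
    (h₂ : IsZero (groupCohomology X.X₂ n)) : IsZero (groupCohomology X.X₃ n) :=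
  (mapShortComplex₃_exact hX rfl).isZero_of_both_zeros (h₂.eq_zero_of_src _) (h₁.eq_zero_of_tgt _)

lemma isZero_groupCohomology_X₃_zero (h₁ : IsZero (groupCohomology X.X₁ 1))
    (hg : ∀ v ∈ X.X₂.ρ.invariants, X.g.hom v = 0) : IsZero (groupCohomology X.X₃ 0) :=
  (mapShortComplex₃_exact hX rfl).isZero_of_both_zeros (map_zero_eq_zero X.g hg)
    (h₁.eq_zero_of_tgt _)

end LongExactSequence

section Subquotient

open CategoryTheory

universe u

variable {k G V : Type u} [CommRing k] [Group G] [AddCommGroup V] [Module k V]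
  {ρ : Representation k G V}

/-- The subquotient `A / (A ⊓ B)` of a representation. -/
noncomputable def subquotient (A B : Subrepresentation ρ) : Rep.{u} k G :=
  .of (A.toRepresentation.quotient (B.toSubmodule.submoduleOf A.toSubmodule) fun g _ hx =>
    B.apply_mem_toSubmodule g hx)

/-- The projection `A → A / (A ⊓ B)`. -/
noncomputable def toSubquotient (A B : Subrepresentation ρ) : A.toSubmodule →ₗ[k] subquotient A B :=
  Submodule.mkQ _

lemma toSubquotient_surjective (A B : Subrepresentation ρ) :
    Function.Surjective (toSubquotient A B) :=
  Submodule.mkQ_surjective _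

lemma toSubquotient_eq_zero {A B : Subrepresentation ρ} {v : A.toSubmodule} :
    toSubquotient A B v = 0 ↔ (v : V) ∈ B.toSubmodule :=
  Submodule.Quotient.mk_eq_zero _

/-- The map `A / (A ⊓ B) ⟶ A' / (A' ⊓ B')` induced by inclusions. -/
noncomputable def subquotientMap {A A' B B' : Subrepresentation ρ} (hA : A ≤ A') (hB : B ≤ B') :
    subquotient A B ⟶ subquotient A' B' :=
  Rep.ofHom
    ⟨Submodule.mapQ _ _ (Submodule.inclusion hA) fun _ hx => hB hx, fun g => by
      ext
      rfl⟩

/-- The complex `(A ⊓ T) / B → A / B → A / (T ⊔ B)`, all quotients being taken in the sense of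
`subquotient`. -/
noncomputable def subquotientComplex (A B T : Subrepresentation ρ) :
    ShortComplex (Rep.{u} k G) where
  f := subquotientMap (inf_le_left : A ⊓ T ≤ A) le_rfl
  g := subquotientMap le_rfl (le_sup_right : B ≤ T ⊔ B)
  zero := by
    ext v
    obtain ⟨v, rfl⟩ := toSubquotient_surjective _ _ v
    exact toSubquotient_eq_zero.2 (Submodule.mem_sup_left v.2.2)

lemma exists_toSubquotient_eq {A B T : Subrepresentation ρ} (h : A ⊓ (T ⊔ B) ≤ A ⊓ T ⊔ B)
    {v : A.toSubmodule} (hv : (v : V) ∈ (T ⊔ B).toSubmodule) :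
    ∃ u : A.toSubmodule, (u : V) ∈ T.toSubmodule ∧ toSubquotient A B u = toSubquotient A B v := by
  obtain ⟨a, ha, b, hb, hab⟩ := Submodule.mem_sup.1 (h ⟨v.2, hv⟩)
  refine ⟨⟨a, ha.1⟩, ha.2, ?_⟩
  rw [← sub_eq_zero, ← map_sub, toSubquotient_eq_zero, AddSubgroupClass.coe_sub, ← hab,
    sub_add_cancel_left]
  exact neg_mem hb

lemma subquotientComplex_shortExact {A B T : Subrepresentation ρ}
    (h : A ⊓ (T ⊔ B) ≤ A ⊓ T ⊔ B) : (subquotientComplex A B T).ShortExact := by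
  apply ShortExact.reflects_shortExact_of_faithful (forget₂ (Rep k G) (ModuleCat k))
  refine { exact := ?_, mono_f := ?_, epi_g := ?_ }
  · rw [ShortComplex.moduleCat_exact_iff]
    intro v hv
    obtain ⟨v, rfl⟩ := toSubquotient_surjective _ _ v
    obtain ⟨u, hu, huv⟩ := exists_toSubquotient_eq h (toSubquotient_eq_zero.1 hv)
    exact ⟨toSubquotient _ _ ⟨u, u.2, hu⟩, huv⟩
  · refine (ModuleCat.mono_iff_injective _).2 ((injective_iff_map_eq_zero _).2 fun v hv => ?_)
    obtain ⟨v, rfl⟩ := toSubquotient_surjective _ _ v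
    exact toSubquotient_eq_zero.2 (toSubquotient_eq_zero (A := A).1 hv)
  · refine (ModuleCat.epi_iff_surjective _).2 fun v => ?_
    obtain ⟨v, rfl⟩ := toSubquotient_surjective _ _ v
    exact ⟨toSubquotient _ _ v, rfl⟩

/-- Dividing by the zero subrepresentation changes nothing. -/
noncomputable def subquotientIsoOfEqBot {A B : Subrepresentation ρ} (hB : B = ⊥) :
    subquotient A B ≅ Rep.of A.toRepresentation :=
  Rep.mkIso <| .mk (Submodule.quotEquivOfEqBot _ (by
    subst hB
    exact Submodule.ext fun _ => (Submodule.mem_bot k).trans Submodule.coe_eq_zero)) fun g => by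
    ext
    rfl

end Subquotient

section Shapiro

open CategoryTheory CategoryTheory.Limits groupCohomology

universe u

/-- The cohomology of `G` with constant coefficients `k` vanishes in positive degrees below `N`. -/
def CohomologyVanishesBelow (k G : Type u) [CommRing k] [Group G] (N : ℕ) : Prop :=
  ∀ n, 0 < n → n < N → IsZero (groupCohomology (Rep.trivial k G k) n)

lemma CohomologyVanishesBelow.of_mulEquiv {k G G' : Type u} [CommRing k] [Group G] [Group G']
    {N : ℕ} (h : CohomologyVanishesBelow k G N) (e : G ≃* G') : CohomologyVanishesBelow k G' N :=
  fun n hn0 hn => (h n hn0 hn).of_iso <|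
    groupCohomology.mapIso (A := Rep.trivial k G k) (B := Rep.trivial k G' k) e.symm
      (LinearEquiv.refl k k) (fun _ => rfl) n

/-- If `|G|` is invertible in `k`, averaging over `G` exhibits the trivial representation as a
direct summand of the representation coinduced from the trivial group. -/
noncomputable def retractCoindBot {k G : Type u} [CommRing k] [Group G] [Fintype G]
    (h : IsUnit (Nat.card G : k)) :
    Retract (Rep.trivial k G k)
      (Rep.coind (⊥ : Subgroup G).subtype (Rep.trivial k (⊥ : Subgroup G) k)) where
  i := Rep.ofHom ⟨⟨⟨fun c => ⟨fun _ => c, fun _ _ => rfl⟩, fun _ _ => rfl⟩, fun _ _ => rfl⟩,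
    fun _ => rfl⟩
  r := Rep.ofHom
    ⟨⟨⟨fun f => (↑h.unit⁻¹ : k) * ∑ x, f.1 x,
        fun f g => by simp [Finset.sum_add_distrib, mul_add]⟩,
        fun c f => by simp [← Finset.mul_sum, mul_left_comm]⟩,
      fun g => LinearMap.ext fun f =>
        congrArg _ (Fintype.sum_equiv (Equiv.mulRight g) (fun x => f.1 (x * g)) f.1 fun _ => rfl)⟩
  retract := by
    ext
    simp

lemma cohomologyVanishesBelow_of_isUnit_card {k G : Type u} [CommRing k] [Group G] [Finite G]
    (h : IsUnit (Nat.card G : k)) (N : ℕ) : CohomologyVanishesBelow k G N := by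
  intro n hn _
  have := Fintype.ofFinite G
  obtain ⟨n, rfl⟩ := Nat.exists_eq_succ_of_ne_zero hn.ne'
  have hzero := IsZero.of_mono ((retractCoindBot h).map (groupCohomology.functor k G (n + 1))).i
    ((isZero_groupCohomology_succ_of_subsingleton _ n).of_iso (coindIso _ _))
  exact hzero

/-- Both sides are `H ⊓ K`. -/
noncomputable def subgroupOfComm {G : Type*} [Group G] (H K : Subgroup G) :
    H.subgroupOf K ≃* K.subgroupOf H :=
  ((H.subgroupOf K).equivMapOfInjective K.subtype K.subtype_injective).trans <|
    (MulEquiv.subgroupCongr (by simp only [Subgroup.subgroupOf_map_subtype, inf_comm])).trans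
      ((K.subgroupOf H).equivMapOfInjective H.subtype H.subtype_injective).symm

variable (k : Type u) [CommRing k] {W : Type u} [Group W] {H P : Subgroup W} {α : Type*}

/-- The extension of an `H ⊓ P`-invariant function on `H` to a `P`-invariant function on
`W = P H`. -/
noncomputable def extendLeftInvariant (hPH : ∀ w, ∃ u ∈ P, u * w ∈ H) (φ : H → α) (w : W) : α :=
  φ ⟨_, (hPH w).choose_spec.2⟩

lemma extendLeftInvariant_eq (hPH : ∀ w, ∃ u ∈ P, u * w ∈ H) {φ : H → α}
    (hφ : ∀ (s : P.subgroupOf H) (h : H), φ (s * h) = φ h) {u w : W} (hu : u ∈ P)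
    (huw : u * w ∈ H) : extendLeftInvariant hPH φ w = φ ⟨u * w, huw⟩ := by
  obtain ⟨hv, hvw⟩ := (hPH w).choose_spec
  have hmem : (hPH w).choose * w * (u * w)⁻¹ ∈ P := by
    simpa [mul_assoc] using P.mul_mem hv (P.inv_mem hu)
  have := hφ ⟨⟨_, hvw⟩ * ⟨_, huw⟩⁻¹, hmem⟩ ⟨_, huw⟩
  rwa [inv_mul_cancel_right] at this

variable (H P)

/-- The action of `H` on the functions on `W` by right translation of the argument. -/
def rightTranslation : Representation k H (W → k) where
  toFun g := LinearMap.funLeft k k (· * (g : W))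
  map_one' := by
    ext
    simp
  map_mul' g h := by
    refine LinearMap.ext fun f => funext fun w => ?_
    simp [LinearMap.funLeft_apply, mul_assoc]

/-- `leftInvariants k P` as a representation of `H`. -/
def leftInvariantsRep : Subrepresentation (rightTranslation k H) where
  toSubmodule := leftInvariants k P
  apply_mem_toSubmodule g f hf u hu w := by
    simp only [rightTranslation, MonoidHom.coe_mk, OneHom.coe_mk, LinearMap.funLeft_apply,
      mul_assoc]
    exact hf hu _

variable {k H P}

/-- If `W = P H`, then `k[P \ W]`, as a representation of `H`, is coinduced from `P ⊓ H`. -/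
noncomputable def leftInvariantsRepIso (hPH : ∀ w, ∃ u ∈ P, u * w ∈ H) :
    Rep.of (leftInvariantsRep k H P).toRepresentation ≅
      Rep.coind (P.subgroupOf H).subtype (Rep.trivial k (P.subgroupOf H) k) :=
  Rep.mkIso <| .mk
    { toFun f := ⟨fun h => f.1 h, fun s h => f.2 s.2 h⟩
      map_add' _ _ := rfl
      map_smul' _ _ := rfl
      invFun φ := ⟨extendLeftInvariant hPH φ.1, fun v hv w => by
        obtain ⟨u, hu, huw⟩ := hPH w
        rw [extendLeftInvariant_eq hPH φ.2 hu huw,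
          extendLeftInvariant_eq hPH φ.2 (u := u * v⁻¹) (P.mul_mem hu (P.inv_mem hv))
            (by simpa [mul_assoc] using huw)]
        simp [mul_assoc]⟩
      left_inv f := by
        ext w
        exact f.2 (hPH w).choose_spec.1 w
      right_inv φ := by
        ext h
        simpa using extendLeftInvariant_eq hPH φ.2 P.one_mem (w := h) (by simp) }
    fun _ => rfl

/-- Shapiro's lemma for `k[P \ W]`, when `W = P H`. -/
noncomputable def groupCohomologyLeftInvariantsIso (hPH : ∀ w, ∃ u ∈ P, u * w ∈ H) (n : ℕ) :
    groupCohomology (Rep.of (leftInvariantsRep k H P).toRepresentation) n ≅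
      groupCohomology (Rep.trivial k (P.subgroupOf H) k) n :=
  (groupCohomology.functor k H n).mapIso (leftInvariantsRepIso hPH) ≪≫ coindIso _ n

end Shapiro

section Devissage

open CategoryTheory CategoryTheory.Limits groupCohomology

universe u v

variable {B : Type v} {W : Type u} [Group W] {M : CoxeterMatrix B} (cs : CoxeterSystem M W)

lemma signHom_simple (i : B) : cs.signHom (cs.simple i) = -1 :=
  cs.lift_apply_simple _ i

lemma exists_mul_mem_ker_signHom {I : Set B} (hI : I.Nonempty) (w : W) :
    ∃ u ∈ parabolic cs I, u * w ∈ cs.signHom.ker := by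
  obtain ⟨i, hi⟩ := hI
  rcases Int.units_eq_one_or (cs.signHom w) with h | h
  · exact ⟨1, one_mem _, by simpa using h⟩
  · exact ⟨cs.simple i, simple_mem_parabolic cs hi, by simp [signHom_simple, h]⟩

lemma signHom_parabolicSystem (I : Set B) :
    (parabolicSystem cs I).signHom = cs.signHom.comp (parabolic cs I).subtype :=
  (parabolicSystem cs I).ext_simple fun i => by
    simp [signHom_simple, parabolicSystem_simple]

/-- The alternating subgroup of a parabolic subgroup is its intersection with the alternating
subgroup of `W`. -/
noncomputable def kerSignHomParabolicEquiv (I : Set B) :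
    (parabolicSystem cs I).signHom.ker ≃* (parabolic cs I).subgroupOf cs.signHom.ker :=
  (MulEquiv.subgroupCongr (by rw [signHom_parabolicSystem]; rfl)).trans
    (subgroupOfComm cs.signHom.ker (parabolic cs I))

variable (k : Type u) [CommRing k]

/-- The sum of the `k[⟨s_j⟩ \ W]` for `j ∈ J`, as a representation of `H`. -/
def sumLeftInvariantsRep (H : Subgroup W) (J : Set B) :
    Subrepresentation (rightTranslation k H) where
  toSubmodule := sumLeftInvariants k cs J
  apply_mem_toSubmodule g := by
    change sumLeftInvariants k cs J ≤ (sumLeftInvariants k cs J).comap (rightTranslation k H g)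
    refine iSup₂_le fun j hj f hf => ?_
    exact Submodule.mem_iSup_of_mem j (Submodule.mem_iSup_of_mem hj
      ((leftInvariantsRep k H (parabolic cs {j})).apply_mem_toSubmodule g hf))

/-- The representation `M_I / (M_I ∩ ∑_{j ∈ J} M_j)` of the alternating subgroup, where
`M_I = k[W_I \ W]`. -/
noncomputable def parabolicQuotient (I J : Set B) : Rep.{u} k cs.signHom.ker :=
  subquotient (leftInvariantsRep k cs.signHom.ker (parabolic cs I))
    (sumLeftInvariantsRep cs k cs.signHom.ker J)

lemma sumLeftInvariantsRep_empty (H : Subgroup W) : sumLeftInvariantsRep cs k H ∅ = ⊥ :=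
  Subrepresentation.toSubmodule_injective iSup_emptyset

/-- Shapiro's lemma for `k[W_I \ W]`. -/
noncomputable def groupCohomologyParabolicQuotientIso {I : Set B} (hI : I.Nonempty) (n : ℕ) :
    groupCohomology (parabolicQuotient cs k I ∅) n ≅
      groupCohomology (Rep.trivial k ((parabolic cs I).subgroupOf cs.signHom.ker) k) n :=
  (groupCohomology.functor k _ n).mapIso (subquotientIsoOfEqBot (sumLeftInvariantsRep_empty ..)) ≪≫
    groupCohomologyLeftInvariantsIso (exists_mul_mem_ker_signHom cs hI) n

/-- The complex `Q(I ∪ {t}, J) → Q(I, J) → Q(I, J ∪ {t})`, where `Q` is `parabolicQuotient`. -/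
noncomputable def parabolicQuotientComplex (t : B) (I J : Set B) :
    ShortComplex (Rep.{u} k cs.signHom.ker) :=
  subquotientComplex (leftInvariantsRep k cs.signHom.ker (parabolic cs I))
    (sumLeftInvariantsRep cs k cs.signHom.ker J)
    (leftInvariantsRep k cs.signHom.ker (parabolic cs {t}))

lemma parabolicQuotientComplex_X₁ (t : B) (I J : Set B) :
    (parabolicQuotientComplex cs k t I J).X₁ = parabolicQuotient cs k (insert t I) J := by
  have : leftInvariantsRep k cs.signHom.ker (parabolic cs (insert t I)) =
      leftInvariantsRep k _ (parabolic cs I) ⊓ leftInvariantsRep k _ (parabolic cs {t}) :=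
    Subrepresentation.toSubmodule_injective (leftInvariants_parabolic_insert k cs t I)
  rw [parabolicQuotient, this]
  rfl

lemma parabolicQuotientComplex_X₃ (t : B) (I J : Set B) :
    (parabolicQuotientComplex cs k t I J).X₃ = parabolicQuotient cs k I (insert t J) := by
  have : sumLeftInvariantsRep cs k cs.signHom.ker (insert t J) =
      leftInvariantsRep k _ (parabolic cs {t}) ⊔ sumLeftInvariantsRep cs k _ J :=
    Subrepresentation.toSubmodule_injective (sumLeftInvariants_insert k cs t J)
  rw [parabolicQuotient, this]
  rfl

lemma parabolicQuotientComplex_shortExact [Finite W] (t : B) (I J : Set B) :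
    (parabolicQuotientComplex cs k t I J).ShortExact :=
  subquotientComplex_shortExact (leftInvariants_inf_sumLeftInvariants_insert_le k cs t I J)

variable {k} in
lemma apply_eq_apply_one {H P : Subgroup W} (hPH : ∀ w, ∃ u ∈ P, u * w ∈ H) {f : W → k}
    (hP : f ∈ leftInvariants k P) (hH : ∀ h : H, rightTranslation k H h f = f) (w : W) :
    f w = f 1 := by
  obtain ⟨u, hu, huw⟩ := hPH w
  have := congrFun (hH ⟨u * w, huw⟩) 1
  rw [← hP hu w, ← this]
  simp [rightTranslation, LinearMap.funLeft_apply]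

lemma parabolicQuotientComplex_g_eq_zero {t : B} {I : Set B} (hI : I.Nonempty)
    {v : parabolicQuotient cs k I ∅} (hv : v ∈ (parabolicQuotient cs k I ∅).ρ.invariants) :
    (parabolicQuotientComplex cs k t I ∅).g.hom v = 0 := by
  obtain ⟨⟨f, hf⟩, rfl⟩ := toSubquotient_surjective _ _ v
  have hconst : ∀ w, f w = f 1 := by
    refine apply_eq_apply_one (exists_mul_mem_ker_signHom cs hI) hf fun h => sub_eq_zero.1 ?_
    have := (Submodule.Quotient.eq _).1 (hv h)
    exact (sumLeftInvariantsRep_empty cs k cs.signHom.ker).le this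
  refine toSubquotient_eq_zero.2 (Submodule.mem_sup_left fun u _ w => ?_)
  exact (hconst _).trans (hconst _).symm

variable {N : ℕ}

variable {cs k} in
theorem isZero_groupCohomology_parabolicQuotient [Finite W]
    (hN : ∀ I : Set B, I ≠ Set.univ →
      CohomologyVanishesBelow k ((parabolic cs I).subgroupOf cs.signHom.ker) N)
    {I : Set B} {J : Finset B} {n : ℕ} (hI : I.Nonempty) (hIJ : I ∪ J ≠ Set.univ)
    (hn : n + J.card < N) (h0 : n ≠ 0 ∨ J.Nonempty) :
    IsZero (groupCohomology (parabolicQuotient cs k I J) n) := by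
  classical
  induction J using Finset.induction_on generalizing I n with
  | empty =>
    rw [Finset.coe_empty, Set.union_empty] at hIJ
    rw [Finset.coe_empty]
    refine (hN I hIJ n (Nat.pos_of_ne_zero ?_) ?_).of_iso
      (groupCohomologyParabolicQuotientIso cs k hI n)
    exacts [by simpa using h0, by simpa using hn]
  | insert t J ht ih =>
    rw [Finset.card_insert_of_notMem ht] at hn
    rw [Finset.coe_insert] at hIJ ⊢
    have hX₁ : IsZero (groupCohomology (parabolicQuotientComplex cs k t I J).X₁ (n + 1)) := by
      rw [parabolicQuotientComplex_X₁]
      exact ih (Set.insert_nonempty t I) (by rwa [Set.insert_union, ← Set.union_insert])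
        (by lia) (.inl n.succ_ne_zero)
    rw [← parabolicQuotientComplex_X₃]
    by_cases h : n ≠ 0 ∨ J.Nonempty
    · refine isZero_groupCohomology_X₃ (parabolicQuotientComplex_shortExact cs k t I J) hX₁
        (ih hI (fun h' => hIJ ?_) (by lia) h)
      rw [Set.union_insert, h', Set.insert_eq_of_mem (Set.mem_univ t)]
    · obtain ⟨rfl, rfl⟩ : n = 0 ∧ J = ∅ := by simpa [not_or] using h
      rw [Finset.coe_empty] at hX₁ ⊢
      exact isZero_groupCohomology_X₃_zero (parabolicQuotientComplex_shortExact cs k t I ∅) hX₁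
        fun v hv => parabolicQuotientComplex_g_eq_zero cs k hI hv

variable {cs k} in
lemma exists_insert_compl_insert_eq_compl [Finite W]
    (hN : ∀ I : Set B, I ≠ Set.univ →
      CohomologyVanishesBelow k ((parabolic cs I).subgroupOf cs.signHom.ker) N)
    {J : Finset B} {n : ℕ} (hJ : 2 ≤ (J : Set B)ᶜ.ncard) (hn : n + J.card < N)
    (h0 : n ≠ 0 ∨ J.Nonempty) :
    ∃ t ∉ J, insert t (insert t (J : Set B))ᶜ = (J : Set B)ᶜ ∧
      IsZero (groupCohomology (parabolicQuotient cs k (insert t ↑J)ᶜ J) n) := by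
  obtain ⟨s, hs, t, ht, hst⟩ := (Set.one_lt_ncard (Set.finite_of_ncard_ne_zero (by lia))).1 hJ
  exact ⟨t, ht, by grind, isZero_groupCohomology_parabolicQuotient hN ⟨s, by grind⟩
    (fun h => (h ▸ Set.mem_univ t : t ∈ (insert t (J : Set B))ᶜ ∪ J).elim (by simp) ht) hn h0⟩

variable {cs k} in
theorem isZero_groupCohomology_parabolicQuotient_compl [Finite W]
    (hN : ∀ I : Set B, I ≠ Set.univ →
      CohomologyVanishesBelow k ((parabolic cs I).subgroupOf cs.signHom.ker) N)
    {J : Finset B} {n : ℕ} (hJ : n + 2 ≤ (J : Set B)ᶜ.ncard) (hn : n + J.card < N)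
    (h0 : n ≠ 0 ∨ J.Nonempty) :
    IsZero (groupCohomology (parabolicQuotient cs k (↑J)ᶜ J) n) := by
  classical
  induction n generalizing J with
  | zero =>
    obtain ⟨t, -, hcompl, hX₂⟩ := exists_insert_compl_insert_eq_compl hN (by lia) hn h0
    let X := parabolicQuotientComplex cs k t (insert t (J : Set B))ᶜ J
    have : Mono X.f := (parabolicQuotientComplex_shortExact ..).mono_f
    rw [← hcompl, ← parabolicQuotientComplex_X₁]
    exact isZero_groupCohomology_of_mono X.f hX₂
  | succ n ih =>
    obtain ⟨t, ht, hcompl, hX₂⟩ := exists_insert_compl_insert_eq_compl hN (by lia) hn h0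
    have hX := parabolicQuotientComplex_shortExact cs k t (insert t (J : Set B))ᶜ J
    rw [← hcompl, ← parabolicQuotientComplex_X₁]
    refine isZero_groupCohomology_X₁_succ hX hX₂ ?_
    rw [parabolicQuotientComplex_X₃, ← Finset.coe_insert]
    refine ih ?_ (by rw [Finset.card_insert_of_notMem ht]; lia)
      (.inr (Finset.insert_nonempty t J))
    have hfin : (insert t (J : Set B))ᶜ.Finite :=
      (Set.finite_of_ncard_ne_zero (by lia)).subset (hcompl ▸ Set.subset_insert _ _)
    rw [← hcompl, Set.ncard_insert_of_notMem (by simp) hfin] at hJ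
    rw [Finset.coe_insert]
    lia

variable {cs k} in
theorem cohomologyVanishesBelow_of_parabolic [Finite W]
    (hN : ∀ I : Set B, I ≠ Set.univ →
      CohomologyVanishesBelow k (parabolicSystem cs I).signHom.ker N)
    (hB : N + 1 ≤ Nat.card B) : CohomologyVanishesBelow k cs.signHom.ker N := by
  have : Nonempty B := (Nat.card_pos_iff.1 (by lia)).1
  suffices CohomologyVanishesBelow k ((parabolic cs Set.univ).subgroupOf cs.signHom.ker) N from
    this.of_mulEquiv ((MulEquiv.subgroupCongr (by
      rw [parabolic_univ, Subgroup.top_subgroupOf])).trans Subgroup.topEquiv)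
  intro n hn0 hn
  have h := isZero_groupCohomology_parabolicQuotient_compl (cs := cs) (J := ∅)
    (fun I hI => (hN I hI).of_mulEquiv (kerSignHomParabolicEquiv cs I)) (n := n)
    (by rw [Finset.coe_empty, Set.compl_empty, Set.ncard_univ]; lia) (by simpa) (.inl hn0.ne')
  rw [Finset.coe_empty, Set.compl_empty] at h
  exact h.of_iso (groupCohomologyParabolicQuotientIso cs k Set.univ_nonempty n).symm

end Devissage

section RankBound

open IntermediateField

lemma irreducible_cyclotomic_of_coprime (K : Type*) [Field K] [Algebra ℚ K] {m n : ℕ} [NeZero m]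
    [NeZero n] [IsCyclotomicExtension {n} ℚ K] (h : n.Coprime m) :
    Irreducible (cyclotomic m K) := by
  have : CharZero K := algebraRat.charZero K
  let L := CyclotomicField m K
  have : FiniteDimensional ℚ K := IsCyclotomicExtension.finiteDimensional {n} ℚ K
  have : FiniteDimensional K L := IsCyclotomicExtension.finiteDimensional {m} K L
  have : FiniteDimensional ℚ L := .trans ℚ K L
  have hn := (IsCyclotomicExtension.zeta_spec n ℚ K).map_of_injective (algebraMap K L).injective
  have hm := IsCyclotomicExtension.zeta_spec m K L
  set ζ := IsCyclotomicExtension.zeta m K L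
  have hζ : IsIntegral K ζ := .of_finite K ζ
  have hdeg : m.totient ≤ (minpoly K ζ).natDegree := by
    have := hn.lcm_totient_le_finrank hm
      (cyclotomic.irreducible_rat (Nat.lcm_pos (NeZero.pos n) (NeZero.pos m)))
    rw [h.lcm_eq_mul, Nat.totient_mul h, ← Module.finrank_mul_finrank ℚ K L,
      IsCyclotomicExtension.finrank K (cyclotomic.irreducible_rat (NeZero.pos n))] at this
    rw [← hm.powerBasis_dim K, ← (hm.powerBasis K).finrank]
    exact Nat.le_of_mul_le_mul_left this (Nat.totient_pos.2 (NeZero.pos n))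
  have hroot : aeval ζ (cyclotomic m K) = 0 := by
    rw [aeval_def, eval₂_eq_eval_map, map_cyclotomic]
    exact hm.isRoot_cyclotomic (NeZero.pos m)
  rw [eq_of_monic_of_dvd_of_natDegree_le (minpoly.monic hζ) (cyclotomic.monic m K)
    (minpoly.dvd K ζ hroot) (by rwa [natDegree_cyclotomic])]
  exact minpoly.irreducible hζ

lemma sub_one_le_finrank_of_pow_eq_one {K V : Type*} [Field K] [AddCommGroup V] [Module K V]
    [FiniteDimensional K V] {p : ℕ} (hp : p.Prime) (hirr : Irreducible (cyclotomic p K))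
    {f : End K V} (hfp : f ^ p = 1) (hf : f ≠ 1) : p - 1 ≤ finrank K V := by
  have := Fact.mk hp
  have hdvd : minpoly K f ∣ cyclotomic p K * (X - 1) :=
    minpoly.dvd K f (by simp [cyclotomic_prime_mul_X_sub_one, hfp])
  by_contra! hlt
  have hcop : IsCoprime (cyclotomic p K) (minpoly K f) := by
    refine hirr.coprime_iff_not_dvd.2 fun h => hlt.not_ge ?_
    have hle := natDegree_le_of_dvd h (minpoly.monic (.of_finite K f)).ne_zero
    rw [natDegree_cyclotomic, Nat.totient_prime hp] at hle
    exact hle.trans ((natDegree_le_of_dvd (LinearMap.minpoly_dvd_charpoly f)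
      f.charpoly_monic.ne_zero).trans_eq f.charpoly_natDegree)
  have := (minpoly.dvd_iff).1 (hcop.symm.dvd_of_dvd_mul_left hdvd)
  exact hf (sub_eq_zero.1 (by simpa using this))

lemma two_mul_cos_pi_div_mem_adjoin {n m : ℕ} [NeZero n] {ζ : ℂ} (hζ : IsPrimitiveRoot ζ n)
    (hm : 2 * m ∣ n) : ((2 * Real.cos (Real.pi / m) : ℝ) : ℂ) ∈ ℚ⟮ζ⟯ := by
  obtain ⟨d, rfl⟩ := hm
  have hm : (m : ℂ) ≠ 0 := by
    rintro h
    exact NeZero.ne (2 * m * d) (by simp_all)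
  let x := Complex.exp (Real.pi / m * Complex.I)
  have hx : x ∈ ℚ⟮ζ⟯ := by
    have : x ^ (2 * m * d) = 1 := by
      rw [← Complex.exp_nat_mul, Complex.exp_eq_one_iff]
      exact ⟨d, by push_cast; field_simp⟩
    obtain ⟨i, -, hi⟩ := hζ.eq_pow_of_pow_eq_one this
    exact hi ▸ pow_mem (mem_adjoin_simple_self ℚ ζ) i
  have : ((2 * Real.cos (Real.pi / m) : ℝ) : ℂ) = x + x⁻¹ := by
    push_cast
    rw [Complex.two_cos, neg_mul, Complex.exp_neg]
  rw [this]
  exact add_mem hx (inv_mem hx)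

variable {B : Type*} {W : Type*} [Group W] {M : CoxeterMatrix B}

lemma exists_coprime_forall_two_mul_dvd [Finite B] {p : ℕ} (hp : p.Prime) (hodd : Odd p)
    (hfree : M.IsPFree p) :
    ∃ n ≠ 0, n.Coprime p ∧ ∀ i j, M i j ≠ 0 → 2 * M i j ∣ n := by
  classical
  have := Fintype.ofFinite B
  let S : Finset (B × B) := {x | M x.1 x.2 ≠ 0}
  refine ⟨2 * ∏ x ∈ S, M x.1 x.2, ?_, .mul_left (Nat.coprime_two_left.2 hodd) ?_, ?_⟩
  · exact mul_ne_zero two_ne_zero (Finset.prod_ne_zero_iff.2 fun x hx => (Finset.mem_filter.1 hx).2)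
  · exact .prod_left fun x hx => (hp.coprime_iff_not_dvd.2 fun h =>
      (Finset.mem_filter.1 hx).2 (hfree _ _ h)).symm
  · exact fun i j hij => mul_dvd_mul_left 2
      (Finset.dvd_prod_of_mem (fun x : B × B => M x.1 x.2) (a := (i, j)) (by simpa [S]))

/-- `Φ_p` stays irreducible over the trace field of the geometric representation, since this field
lies in `ℚ(ζ_n)` for some `n` prime to `p`. -/
lemma exists_subfield_cartanEntry_mem [Finite B] {p : ℕ} (hp : p.Prime) (hodd : Odd p)
    (hfree : M.IsPFree p) :
    ∃ K : Subfield ℝ, Irreducible (cyclotomic p K) ∧ ∀ i j, cartanEntry M i j ∈ K := by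
  obtain ⟨n, hn0, hn, hM⟩ := exists_coprime_forall_two_mul_dvd hp hodd hfree
  have : NeZero n := ⟨hn0⟩
  have : NeZero p := ⟨hp.ne_zero⟩
  have hζ := Complex.isPrimitiveRoot_exp n hn0
  set ζ := Complex.exp (2 * Real.pi * Complex.I / n)
  have : IsCyclotomicExtension {n} ℚ ℚ⟮ζ⟯ :=
    (IntermediateField.isCyclotomicExtension_singleton_iff_eq_adjoin n ℚ ℂ ℚ⟮ζ⟯ hζ).2 rfl
  let K : Subfield ℝ := ℚ⟮ζ⟯.toSubfield.comap Complex.ofRealHom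
  let φ : K →+* ℚ⟮ζ⟯ := Complex.ofRealHom.restrict K ℚ⟮ζ⟯.toSubfield fun _ hx => hx
  refine ⟨K, (cyclotomic.monic p K).irreducible_of_irreducible_map φ _ ?_, fun i j => ?_⟩
  · rw [map_cyclotomic]
    exact irreducible_cyclotomic_of_coprime ℚ⟮ζ⟯ hn
  · rw [cartanEntry, neg_mul]
    refine neg_mem ?_
    by_cases h : M i j = 0
    · simp [h, ofNat_mem]
    · exact two_mul_cos_pi_div_mem_adjoin hζ (hM i j h)

lemma geometricRep_mem_span (cs : CoxeterSystem M W) {K : Subfield ℝ}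
    (hK : ∀ i j, cartanEntry M i j ∈ K) (w : W) {v : B →₀ ℝ}
    (hv : v ∈ Submodule.span K (Set.range simpleRoot)) :
    geometricRep cs w v ∈ Submodule.span K (Set.range simpleRoot) := by
  induction w using cs.simple_induction_left generalizing v with
  | one => simpa
  | mul_simple_left w i ih =>
    rw [geometricRep_mul_apply, geometricRep_simple]
    refine (Submodule.map_span_le ((simpleReflection M i).toLinearMap.restrictScalars K) _ _).2 ?_
      (Submodule.mem_map_of_mem (ih hv))
    rintro _ ⟨j, rfl⟩
    rw [LinearMap.restrictScalars_apply, LinearEquiv.coe_coe, simpleReflection_simpleRoot]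
    exact sub_mem (Submodule.subset_span ⟨j, rfl⟩)
      (Submodule.smul_mem _ (⟨_, hK i j⟩ : K) (Submodule.subset_span ⟨i, rfl⟩))

theorem sub_one_le_card_of_orderOf_eq [Finite B] (cs : CoxeterSystem M W) {p : ℕ} (hp : p.Prime)
    (hodd : Odd p) (hfree : M.IsPFree p) {w : W} (hw : orderOf w = p) : p - 1 ≤ Nat.card B := by
  have := Fintype.ofFinite B
  obtain ⟨K, hirr, hK⟩ := exists_subfield_cartanEntry_mem hp hodd hfree
  let V := Submodule.span K (Set.range (simpleRoot : B → B →₀ ℝ))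
  have : FiniteDimensional K V := .span_of_finite K (Set.finite_range _)
  let f : W →* End K V :=
    { toFun u := ((geometricRep cs u).toLinearMap.restrictScalars K).restrict (p := V) (q := V)
        fun _ hv => geometricRep_mem_span cs hK u hv
      map_one' := LinearMap.ext fun v => Subtype.ext (by simp)
      map_mul' u w := LinearMap.ext fun v => Subtype.ext (geometricRep_mul_apply cs u w v) }
  refine (sub_one_le_finrank_of_pow_eq_one (V := V) hp hirr (f := f w) ?_ ?_).trans ?_
  · rw [← map_pow, ← hw, pow_orderOf_eq_one, map_one]
  · intro h
    have : geometricRep cs w = geometricRep cs 1 := by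
      refine LinearEquiv.toLinearMap_injective (Finsupp.lhom_ext' fun i => LinearMap.ext_ring ?_)
      have hi : simpleRoot i ∈ V := Submodule.subset_span ⟨i, rfl⟩
      have : geometricRep cs w (simpleRoot i) = simpleRoot i :=
        congrArg Subtype.val (LinearMap.congr_fun h ⟨_, hi⟩)
      exact this.trans (by simp [simpleRoot])
    rw [geometricRep_injective cs this, orderOf_one] at hw
    exact hp.ne_one hw.symm
  · rw [Nat.card_eq_fintype_card]
    exact finrank_range_le_card _

end RankBound

end CoxeterCohomology

section MainTheorem

open CoxeterCohomology

universe u v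

theorem alternating_subgroup_cohomology_vanishes_general {B : Type v} {W k : Type u} [Finite B]
    [Group W] [Finite W] [CommRing k] {M : CoxeterMatrix B} (cs : CoxeterSystem M W) {p : ℕ}
    (hp : p.Prime) (hfree : M.IsPFree p) (hk : ∀ m : ℕ, m.Coprime p → IsUnit (m : k)) :
    CohomologyVanishesBelow k cs.signHom.ker (p - 2) := by
  obtain rfl | hodd := hp.eq_two_or_odd'
  · exact fun _ _ hn => absurd hn (Nat.not_lt_zero _)
  induction hB : Nat.card B using Nat.strong_induction_on generalizing B W with | _ n ih
  by_cases hW : p ∣ Nat.card W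
  · have := Fact.mk hp
    obtain ⟨w, hw⟩ := exists_prime_orderOf_dvd_card' p hW
    have hrank : p - 1 ≤ Nat.card B := sub_one_le_card_of_orderOf_eq cs hp hodd hfree hw
    refine cohomologyVanishesBelow_of_parabolic (fun I hI => ?_) (by have := hp.two_le; lia)
    exact ih (Nat.card I) (hB ▸ Set.ncard_lt_card hI) (parabolicSystem cs I)
      (fun i j => hfree i j) rfl
  · refine cohomologyVanishesBelow_of_isUnit_card (hk _ ?_) _
    exact ((hp.coprime_iff_not_dvd.2 hW).symm).of_dvd_left (Subgroup.card_subgroup_dvd_card _)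

end MainTheorem

/-- Main theorem.  Let `p` be an odd prime and `W` a finite `p`-free
Coxeter group.  Then the mod `p` cohomology `H^k(A_W, 𝔽_p)` of the alternating subgroup
`A_W` (the kernel of the sign homomorphism) vanishes for `0 < k < p - 2`. -/
theorem alternating_subgroup_cohomology_vanishes {B W : Type} [Finite B] [Group W]
    [Finite W] {M : CoxeterMatrix B} (cs : CoxeterSystem M W)
    (p : ℕ) (hp : p.Prime) (hodd : Odd p) (hfree : M.IsPFree p) :
    ∀ k : ℕ, 0 < k → k < p - 2 →
      Subsingleton (groupCohomology
        (Rep.trivial (ZMod p) ↥cs.signHom.ker (ZMod p)) k) := by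
  intro k hk0 hk
  exact ModuleCat.subsingleton_of_isZero <| alternating_subgroup_cohomology_vanishes_general cs hp
    hfree (fun m hm => (ZMod.isUnit_iff_coprime m p).2 hm) k hk0 hk
end

section
/- Let p be an odd prime. The mod p cohomology H^k(A_n, F_p) of the alternating group A_n on n letters vanishes for 0 < k < p - 2. -/
/-!
For a free `G`-set `Y`, the cohomology of `G` is that of the complex of invariant cochains on the
powers of `Y`. Let `G` act on a set `X`, and let `Y → X` be an equivariant map. The bicomplex of
invariant functions on `Y ^ a × X ^ b` has exact rows, by prepending the image of a point of `Y` to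
the `X`-coordinates; its columns are products of invariant cochain complexes on `Y` of the
stabilizers of points of `X ^ b`. Hence vanishing of cohomology passes to `G` from these
stabilizers, provided that the invariant cochains on `X` itself are exact. The latter holds in low
degrees if `G` is multiply transitive on `X`: a fresh point of `X` prepended to a cochain's
arguments acts as a cone point, and all choices of it give the same value.

If `G` is `(|X| - 2)`-transitive on `X`, like the alternating group, then so are the pointwise
stabilizers on the complements of the points they fix. Descending through these, one arrives at a
group that acts faithfully on at most `m` points, whose order divides `m!`. If `m!` is invertible
in the coefficients, averaging kills its cohomology; for coefficients `ZMod p` take `m = p - 1`.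
-/

open Function MulAction

universe u

namespace HomogeneousCochain

section Differential

variable {X Y A B : Type*} [AddCommGroup A] [AddCommGroup B] {n : ℕ}

/-- The differential of the simplicial cochain complex of the full simplex on `X`, augmented by
the cochains on `X ^ 0` and indexed by the number of arguments of a cochain. -/
def simplicialD (X A : Type*) [AddCommGroup A] (n : ℕ) :
    ((Fin n → X) → A) →+ ((Fin (n + 1) → X) → A) where
  toFun f x := ∑ i : Fin (n + 1), (-1 : ℤ) ^ (i : ℕ) • f (i.removeNth x)
  map_zero' := by ext; simp
  map_add' f g := by ext; simp [Finset.sum_add_distrib]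

theorem simplicialD_apply (f : (Fin n → X) → A) (x : Fin (n + 1) → X) :
    simplicialD X A n f x = ∑ i : Fin (n + 1), (-1 : ℤ) ^ (i : ℕ) • f (i.removeNth x) :=
  rfl

theorem simplicialD_congr {f f' : (Fin n → X) → A} {x : Fin (n + 1) → X}
    (h : ∀ i : Fin (n + 1), f (i.removeNth x) = f' (i.removeNth x)) :
    simplicialD X A n f x = simplicialD X A n f' x := by
  simp_rw [simplicialD_apply, h]

theorem simplicialD_zero_apply (f : (Fin 0 → X) → A) (x : Fin 1 → X) (z : Fin 0 → X) :
    simplicialD X A 0 f x = f z := by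
  simp [simplicialD_apply, Subsingleton.elim _ z]

theorem simplicialD_zero_injective [Nonempty X] : Injective (simplicialD X A 0) := by
  intro f f' h
  obtain ⟨x⟩ := ‹Nonempty X›
  funext z
  simpa only [simplicialD_zero_apply _ _ z] using congrFun h fun _ => x

theorem simplicialD_cons (f : (Fin (n + 1) → X) → A) (a : X) (x : Fin (n + 1) → X) :
    simplicialD X A (n + 1) f (Fin.cons a x) =
      f x - simplicialD X A n (fun z => f (Fin.cons a z)) x := by
  have removeNth_succ (i : Fin (n + 1)) :
      i.succ.removeNth (Fin.cons a x : Fin (n + 2) → X) = Fin.cons a (i.removeNth x) :=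
    Fin.cons_comp_succ_succAbove a x i
  simp [simplicialD_apply, Fin.sum_univ_succ (n := n + 1), removeNth_succ, pow_succ, sub_eq_add_neg]

theorem simplicialD_simplicialD (f : (Fin n → X) → A) :
    simplicialD X A (n + 1) (simplicialD X A n f) = 0 := by
  induction n with
  | zero =>
    funext x
    rw [← Fin.cons_self_tail x, simplicialD_cons]
    simp only [simplicialD_zero_apply _ _ Fin.elim0]
    exact sub_self _
  | succ n ih =>
    funext x
    have h : (fun z => simplicialD X A (n + 1) f (Fin.cons (x 0) z)) =
        f - simplicialD X A n fun z => f (Fin.cons (x 0) z) :=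
      funext fun z => simplicialD_cons f (x 0) z
    rw [← Fin.cons_self_tail x, simplicialD_cons, h, map_sub, ih, sub_zero, sub_self, Pi.zero_apply]

theorem simplicialD_cons_eq_of_simplicialD_eq_zero {f : (Fin (n + 1) → X) → A}
    (hf : simplicialD X A (n + 1) f = 0) (a : X) :
    simplicialD X A n (fun z => f (Fin.cons a z)) = f := by
  funext x
  have h := simplicialD_cons f a x
  rw [hf] at h
  exact (sub_eq_zero.mp h.symm).symm

theorem simplicialD_comp_left (φ : A →+ B) (f : (Fin n → X) → A) :
    simplicialD X B n (φ ∘ f) = φ ∘ simplicialD X A n f := by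
  funext x
  simp [simplicialD_apply]

theorem simplicialD_comp_right (φ : Y → X) (f : (Fin n → X) → A) :
    simplicialD Y A n (f ∘ (φ ∘ ·)) = simplicialD X A n f ∘ (φ ∘ ·) :=
  rfl

end Differential

theorem smul_cons {G X : Type*} [SMul G X] {n : ℕ} (g : G) (a : X) (x : Fin n → X) :
    g • (Fin.cons a x : Fin (n + 1) → X) = Fin.cons (g • a) (g • x) :=
  Matrix.smul_cons g a x

section EquivariantChoice

variable {G W Z : Type*} [Group G] [MulAction G W] [MulAction G Z]

theorem exists_mulActionHom_forall {R : W → Z → Prop}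
    (hR : ∀ (g : G) w z, R w z → R (g • w) (g • z))
    (h : ∀ w, ∃ z, R w z ∧ stabilizer G w ≤ stabilizer G z) :
    ∃ f : W →[G] Z, ∀ w, R w (f w) := by
  choose z hRz hz using h
  let rep (w : W) : W := (Quotient.mk'' w : orbitRel.Quotient G W).out
  have rep_smul (g : G) (w : W) : rep (g • w) = rep w :=
    congrArg Quotient.out (Quotient.sound' (mem_orbit w g))
  have exists_smul_rep (w : W) : ∃ g : G, g • rep w = w :=
    mem_orbit_symm.mp (orbitRel_apply.mp (Quotient.mk_out (s := orbitRel G W) w))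
  choose t ht using exists_smul_rep
  have smul_z_congr {g g' : G} {w : W} (hw : g • w = g' • w) : g • z w = g' • z w := by
    have : g'⁻¹ * g ∈ stabilizer G w := by simp [mul_smul, hw]
    simpa [mul_smul, inv_smul_eq_iff] using hz w this
  refine ⟨⟨fun w => t w • z (rep w), fun g w => ?_⟩, fun w => ?_⟩
  · rw [rep_smul, id, smul_smul]
    apply smul_z_congr
    rw [mul_smul, ht, ← rep_smul g w, ht]
  · have h := hR (t w) _ _ (hRz (rep w))
    rwa [ht] at h

theorem nonempty_mulActionHom_of_isCancelSMul [IsCancelSMul G W] [Nonempty Z] :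
    Nonempty (W →[G] Z) := by
  obtain ⟨z⟩ := ‹Nonempty Z›
  obtain ⟨f, -⟩ := exists_mulActionHom_forall (G := G) (W := W) (Z := Z) (R := fun _ _ => True)
    (fun _ _ _ h => h) fun w => ⟨z, trivial, by simp [IsCancelSMul.stabilizer_eq_bot]⟩
  exact ⟨f⟩

end EquivariantChoice

section Bicomplex

variable {K : ℕ → ℕ → Type*} [∀ a b, AddCommGroup (K a b)]
  {dY : ∀ a b, K a b →+ K (a + 1) b} {dX : ∀ a b, K a b →+ K a (b + 1)} {q : ℕ}

/- Descending the staircase of bidegrees `(a, b + 1), (a - 1, b + 2), …, (0, q + 1)` by means of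
exact columns, one lands in row `0`, where a primitive exists, and climbs back by exact rows. -/
theorem exists_dY_dX_eq_of_bicomplex
    (comm : ∀ a b x, dX (a + 1) b (dY a b x) = dY a (b + 1) (dX a b x))
    (exact_dY : ∀ a ≤ q, ∀ b, Exact (dY a (b + 1)) (dY (a + 1) (b + 1)))
    (dY_injective : ∀ b, Injective (dY 0 (b + 1)))
    (exact_dX : ∀ a b, Exact (dX (a + 1) b) (dX (a + 1) (b + 1)))
    (exact_dX_zero : Exact (dX 0 q) (dX 0 (q + 1))) {a b : ℕ} (hab : a + b = q)
    (x : K a (b + 1)) (hx : dY a (b + 2) (dX a (b + 1) x) = 0) :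
    ∃ w : K a b, dY a (b + 1) (dX a b w) = dY a (b + 1) x := by
  induction a generalizing b with
  | zero =>
    obtain rfl : b = q := by omega
    obtain ⟨w, rfl⟩ := (exact_dX_zero x).mp <| dY_injective _ (by rw [hx, map_zero])
    exact ⟨w, rfl⟩
  | succ a ih =>
    obtain ⟨x', hx'⟩ := (exact_dY a (by omega) (b + 1) _).mp hx
    obtain ⟨w', hw'⟩ := ih (b := b + 1) (by omega) x' <| by
      rw [← comm, hx', (exact_dX a (b + 1)).apply_apply_eq_zero]
    obtain ⟨w, hw⟩ := (exact_dX a b (x - dY a (b + 1) w')).mp <| by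
      rw [map_sub, comm, hw', hx', sub_self]
    exact ⟨w, by rw [hw, map_sub, (exact_dY a (by omega) b).apply_apply_eq_zero, sub_zero]⟩

theorem exact_dY_zero_of_bicomplex
    (comm : ∀ a b x, dX (a + 1) b (dY a b x) = dY a (b + 1) (dX a b x))
    (exact_dY : ∀ a ≤ q, ∀ b, Exact (dY a (b + 1)) (dY (a + 1) (b + 1)))
    (dY_injective : ∀ b, Injective (dY 0 (b + 1)))
    (exact_dX : ∀ a b, Exact (dX (a + 1) b) (dX (a + 1) (b + 1)))
    (dX_injective : ∀ a, Injective (dX (a + 1) 0))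
    (exact_dX_zero : Exact (dX 0 q) (dX 0 (q + 1))) :
    Exact (dY q 0) (dY (q + 1) 0) := by
  refine fun x => ⟨fun hx => ?_, ?_⟩
  · obtain ⟨x', hx'⟩ := (exact_dY q le_rfl 0 (dX _ _ x)).mp (by rw [← comm, hx, map_zero])
    obtain ⟨w, hw⟩ := exists_dY_dX_eq_of_bicomplex comm exact_dY dY_injective exact_dX exact_dX_zero
      (add_zero q) x' (by rw [← comm, hx', (exact_dX q 0).apply_apply_eq_zero])
    exact ⟨w, dX_injective q (by rw [comm, hw, hx'])⟩
  · rintro ⟨w, rfl⟩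
    apply dX_injective
    rw [comm, comm, (exact_dY q le_rfl 0).apply_apply_eq_zero, map_zero]

end Bicomplex

section Invariant

variable {G X A : Type*} [Group G] [MulAction G X] [AddCommGroup A] {n q : ℕ}

/-- The cochains on `X ^ n` that are invariant under the diagonal action of `G`, with trivial
action on the coefficients. -/
def invariantCochains (G X A : Type*) [Group G] [MulAction G X] [AddCommGroup A] (n : ℕ) :
    AddSubgroup ((Fin n → X) → A) where
  carrier := {f | ∀ (g : G) x, f (g • x) = f x}
  zero_mem' _ _ := rfl
  add_mem' hf hf' g x := congrArg₂ (· + ·) (hf g x) (hf' g x)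
  neg_mem' hf g x := congrArg Neg.neg (hf g x)

theorem simplicialD_mem_invariantCochains {f : (Fin n → X) → A}
    (hf : f ∈ invariantCochains G X A n) :
    simplicialD X A n f ∈ invariantCochains G X A (n + 1) := fun g x =>
  (congrFun (simplicialD_comp_right (g • ·) f) x).symm.trans <|
    congrArg (simplicialD X A n · x) (funext (hf g))

/-- The simplicial differential on invariant cochains. -/
def invariantD (G X A : Type*) [Group G] [MulAction G X] [AddCommGroup A] (n : ℕ) :
    invariantCochains G X A n →+ invariantCochains G X A (n + 1) :=
  ((simplicialD X A n).comp (invariantCochains G X A n).subtype).codRestrict _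
    fun f => simplicialD_mem_invariantCochains f.2

theorem exact_invariantD_iff :
    Exact (invariantD G X A q) (invariantD G X A (q + 1)) ↔
      ∀ f ∈ invariantCochains G X A (q + 1), simplicialD X A (q + 1) f = 0 →
        ∃ u ∈ invariantCochains G X A q, simplicialD X A q u = f := by
  refine ⟨fun h f hf hdf => ?_, fun h f => ⟨fun hdf => ?_, ?_⟩⟩
  · obtain ⟨u, hu⟩ := (h ⟨f, hf⟩).mp (Subtype.ext hdf)
    exact ⟨u, u.2, congrArg Subtype.val hu⟩
  · obtain ⟨u, hu, huf⟩ := h f f.2 (congrArg Subtype.val hdf)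
    exact ⟨⟨u, hu⟩, Subtype.ext huf⟩
  · rintro ⟨u, rfl⟩
    exact Subtype.ext (simplicialD_simplicialD u.1)

end Invariant

section Transfer

variable {G Y X A : Type*} [Group G] [MulAction G Y] [MulAction G X] [AddCommGroup A] {a b q : ℕ}

/-- The functions on `Y ^ a × X ^ b` that are invariant under the diagonal action of `G`: the
bicomplex that interpolates between the invariant cochains on `Y` and those on `X`. -/
def invariantBicochains (G Y X A : Type*) [Group G] [MulAction G Y] [MulAction G X]
    [AddCommGroup A] (a b : ℕ) : AddSubgroup ((Fin a → Y) → (Fin b → X) → A) where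
  carrier := {F | ∀ (g : G) y x, F (g • y) (g • x) = F y x}
  zero_mem' _ _ _ := rfl
  add_mem' hF hF' g y x := congrArg₂ (· + ·) (hF g y x) (hF' g y x)
  neg_mem' hF g y x := congrArg Neg.neg (hF g y x)

theorem simplicialD_apply_apply (F : (Fin a → Y) → (Fin b → X) → A) (y : Fin (a + 1) → Y)
    (x : Fin b → X) :
    simplicialD Y ((Fin b → X) → A) a F y x = simplicialD Y A a (fun y => F y x) y :=
  (congrFun (simplicialD_comp_left (Pi.evalAddMonoidHom (fun _ => A) x) F) y).symm

/-- The differential of `invariantBicochains` in the direction of `Y`. -/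
def bicochainDLeft (G Y X A : Type*) [Group G] [MulAction G Y] [MulAction G X]
    [AddCommGroup A] (a b : ℕ) :
    invariantBicochains G Y X A a b →+ invariantBicochains G Y X A (a + 1) b :=
  ((simplicialD Y ((Fin b → X) → A) a).comp (invariantBicochains G Y X A a b).subtype).codRestrict _
    fun F g y x => by
      simp_rw [AddMonoidHom.comp_apply, simplicialD_apply_apply]
      exact congrArg (simplicialD Y A a · y) (funext fun y => F.2 g y x)

/-- The differential of `invariantBicochains` in the direction of `X`. -/
def bicochainDRight (G Y X A : Type*) [Group G] [MulAction G Y] [MulAction G X]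
    [AddCommGroup A] (a b : ℕ) :
    invariantBicochains G Y X A a b →+ invariantBicochains G Y X A a (b + 1) :=
  (((simplicialD X A b).compLeft (Fin a → Y)).comp
    (invariantBicochains G Y X A a b).subtype).codRestrict _
    fun F g y x => congrArg (simplicialD X A b · x) (funext fun x => F.2 g y x)

theorem bicochainD_comm (F : invariantBicochains G Y X A a b) :
    bicochainDRight G Y X A (a + 1) b (bicochainDLeft G Y X A a b F) =
      bicochainDLeft G Y X A a (b + 1) (bicochainDRight G Y X A a b F) :=
  Subtype.ext (simplicialD_comp_left (simplicialD X A b) F.1).symm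

theorem bicochainDLeft_zero_injective [Nonempty Y] : Injective (bicochainDLeft G Y X A 0 b) :=
  fun _ _ h => Subtype.ext (simplicialD_zero_injective (congrArg Subtype.val h))

theorem bicochainDRight_zero_injective [Nonempty X] : Injective (bicochainDRight G Y X A a 0) :=
  fun _ _ h => Subtype.ext <| funext fun y =>
    simplicialD_zero_injective (congrFun (congrArg Subtype.val h) y)

theorem exact_bicochainDRight (φ : Y →[G] X) :
    Exact (bicochainDRight G Y X A (a + 1) b) (bicochainDRight G Y X A (a + 1) (b + 1)) := by
  refine fun F => ⟨fun hF => ?_, ?_⟩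
  · refine ⟨⟨fun y x => F.1 y (Fin.cons (φ (y 0)) x), fun g y x => ?_⟩, ?_⟩
    · simpa only [smul_cons, Pi.smul_apply, map_smul] using F.2 g y (Fin.cons (φ (y 0)) x)
    · exact Subtype.ext <| funext fun y =>
        simplicialD_cons_eq_of_simplicialD_eq_zero (congrFun (congrArg Subtype.val hF) y) _
  · rintro ⟨F, rfl⟩
    exact Subtype.ext <| funext fun y => simplicialD_simplicialD (F.1 y)

/- Primitives of the restrictions `F · x` can be chosen equivariantly in `x`, because for each `x`
there is one that is fixed by the stabilizer of `x`. -/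
attribute [local instance] arrowAction in
theorem exact_bicochainDLeft
    (h : ∀ x : Fin b → X,
      Exact (invariantD (stabilizer G x) Y A a) (invariantD (stabilizer G x) Y A (a + 1))) :
    Exact (bicochainDLeft G Y X A a b) (bicochainDLeft G Y X A (a + 1) b) := by
  refine fun F => ⟨fun hF => ?_, ?_⟩
  · have exists_primitive (x : Fin b → X) : ∃ u : (Fin a → Y) → A,
        simplicialD Y A a u = (fun y => F.1 y x) ∧ stabilizer G x ≤ stabilizer G u := by
      obtain ⟨u, hu, huF⟩ := exact_invariantD_iff.mp (h x) (fun y => F.1 y x)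
        (fun g y => (congrArg (F.1 _) g.2.symm).trans (F.2 g y x)) <| funext fun y =>
          (simplicialD_apply_apply F.1 y x).symm.trans
            (congrFun (congrFun (congrArg Subtype.val hF) y) x)
      exact ⟨u, huF, fun g hg => funext fun y => hu ⟨g⁻¹, inv_mem hg⟩ y⟩
    obtain ⟨u, hu⟩ := exists_mulActionHom_forall
      (R := fun x u => simplicialD Y A a u = fun y => F.1 y x)
      (fun g x u hu => funext fun y => by
        rw [← F.2 g⁻¹, inv_smul_smul]
        exact congrFun hu (g⁻¹ • y)) exists_primitive
    refine ⟨⟨fun y x => u x y, fun g y x => ?_⟩, ?_⟩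
    · change u (g • x) (g • y) = u x y
      rw [map_smul]
      exact congrArg (u x) (inv_smul_smul g y)
    · refine Subtype.ext <| funext₂ fun y x => ?_
      exact (simplicialD_apply_apply _ y x).trans (congrFun (hu x) y)
  · rintro ⟨F, rfl⟩
    exact Subtype.ext (simplicialD_simplicialD F.1)

theorem exact_invariantD_of_exact_bicochainDLeft
    (h : Exact (bicochainDLeft G Y X A q 0) (bicochainDLeft G Y X A (q + 1) 0)) :
    Exact (invariantD G Y A q) (invariantD G Y A (q + 1)) := by
  refine exact_invariantD_iff.mpr fun f hf hdf => ?_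
  obtain ⟨u, hu⟩ := (h ⟨fun y _ => f y, fun g y _ => hf g y⟩).mp <|
    Subtype.ext <| funext₂ fun y x => (simplicialD_apply_apply _ y x).trans (congrFun hdf y)
  refine ⟨fun y => u.1 y Fin.elim0, fun g y => ?_, funext fun y => ?_⟩
  · exact (congrArg (u.1 (g • y)) (Subsingleton.elim _ _)).trans (u.2 g y Fin.elim0)
  · rw [← simplicialD_apply_apply]
    exact congrFun (congrFun (congrArg Subtype.val hu) y) Fin.elim0

theorem exact_bicochainDRight_of_exact_invariantD
    (h : Exact (invariantD G X A q) (invariantD G X A (q + 1))) :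
    Exact (bicochainDRight G Y X A 0 q) (bicochainDRight G Y X A 0 (q + 1)) := by
  refine fun F => ⟨fun hF => ?_, ?_⟩
  · obtain ⟨u, hu, huF⟩ := exact_invariantD_iff.mp h (F.1 Fin.elim0)
      (fun g x => (congrArg (F.1 · (g • x)) (Subsingleton.elim _ _)).trans (F.2 g Fin.elim0 x))
      (congrFun (congrArg Subtype.val hF) Fin.elim0)
    refine ⟨⟨fun _ => u, fun g _ x => hu g x⟩, Subtype.ext <| funext fun y => ?_⟩
    rw [Subsingleton.elim y Fin.elim0, ← huF]
    rfl
  · rintro ⟨F, rfl⟩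
    exact Subtype.ext <| funext fun y => simplicialD_simplicialD (F.1 y)

theorem exact_invariantD_of_mulActionHom [Nonempty Y] (φ : Y →[G] X)
    (exact_stabilizer : ∀ a ≤ q, ∀ (b : ℕ) (x : Fin (b + 1) → X),
      Exact (invariantD (stabilizer G x) Y A a) (invariantD (stabilizer G x) Y A (a + 1)))
    (exact_target : Exact (invariantD G X A q) (invariantD G X A (q + 1))) :
    Exact (invariantD G Y A q) (invariantD G Y A (q + 1)) :=
  have : Nonempty X := .map φ ‹_›
  exact_invariantD_of_exact_bicochainDLeft <|
    exact_dY_zero_of_bicomplex (dX := bicochainDRight G Y X A) (fun _ _ => bicochainD_comm)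
      (fun a ha b => exact_bicochainDLeft (exact_stabilizer a ha b))
      (fun _ => bicochainDLeft_zero_injective) (fun _ _ => exact_bicochainDRight φ)
      (fun _ => bicochainDRight_zero_injective)
      (exact_bicochainDRight_of_exact_invariantD exact_target)

end Transfer

section Averaging

variable {k G Y A : Type*} [Semiring k] [Group G] [MulAction G Y] [AddCommGroup A] [Module k A]
  {q : ℕ}

theorem exact_invariantD_of_isUnit_card [Finite G] [Nonempty Y] (hG : IsUnit (Nat.card G : k)) :
    Exact (invariantD G Y A q) (invariantD G Y A (q + 1)) := by
  refine exact_invariantD_iff.mpr fun f hf hdf => ?_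
  have := Fintype.ofFinite G
  obtain ⟨c, hc⟩ := hG.exists_left_inv
  obtain ⟨y₀⟩ := ‹Nonempty Y›
  let s : (Fin q → Y) → A := ∑ g : G, fun y => f (Fin.cons (g • y₀) y)
  have s_smul (h : G) (y : Fin q → Y) : s (h • y) = s y := by
    simp only [s, Finset.sum_apply]
    refine Fintype.sum_equiv (Equiv.mulLeft h⁻¹) _ _ fun g => ?_
    rw [← hf h⁻¹, smul_cons, inv_smul_smul, smul_smul, Equiv.coe_mulLeft]
  have simplicialD_s : simplicialD Y A q s = (Nat.card G : k) • f := by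
    simp_rw [s, map_sum, simplicialD_cons_eq_of_simplicialD_eq_zero hdf]
    simp [Nat.cast_smul_eq_nsmul]
  refine ⟨c • s, fun h y => congrArg (c • ·) (s_smul h y), ?_⟩
  calc simplicialD Y A q (c • s) = c • simplicialD Y A q s :=
        simplicialD_comp_left (DistribSMul.toAddMonoidHom A c) s
    _ = f := by rw [simplicialD_s, smul_smul, hc, one_smul]

end Averaging

section MultiplyTransitive

variable {G X A : Type*} [Group G] [MulAction G X] [AddCommGroup A] {q : ℕ}

theorem exists_notMem_range {n : ℕ} (hn : ↑n < ENat.card X) (x : Fin n → X) :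
    ∃ a, a ∉ Set.range x := by
  by_contra! h
  refine hn.not_ge ?_
  calc ENat.card X = (x '' Set.univ).encard := by
        rw [Set.image_univ, Set.range_eq_univ.mpr h, Set.encard_univ]
    _ ≤ (Set.univ : Set (Fin n)).encard := Set.encard_image_le x _
    _ = n := by simp

theorem cons_eq_cons_of_mem_invariantCochains [IsMultiplyPretransitive G X (q + 1)]
    (hq : ↑(q + 1) ≤ ENat.card X) {f : (Fin (q + 1) → X) → A}
    (hf : f ∈ invariantCochains G X A (q + 1)) {x : Fin q → X} {a b : X}
    (ha : a ∉ Set.range x) (hb : b ∉ Set.range x) :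
    f (Fin.cons a x) = f (Fin.cons b x) := by
  have ncard_range_le : (Set.range x).ncard ≤ q := by
    simpa using Finite.card_range_le x
  have : IsMultiplyPretransitive (fixingSubgroup G (Set.range x))
      (SubMulAction.ofFixingSubgroup G (Set.range x)) 1 :=
    SubMulAction.ofFixingSubgroup.isMultiplyPretransitive' _
      (Nat.add_le_add_right ncard_range_le 1) hq
  have := is_one_pretransitive_iff.mp this
  obtain ⟨g, hg⟩ := exists_smul_eq (fixingSubgroup G (Set.range x))
    (⟨a, ha⟩ : SubMulAction.ofFixingSubgroup G (Set.range x)) ⟨b, hb⟩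
  have smul_a : g.1 • a = b := congrArg Subtype.val hg
  have smul_x : g.1 • x = x := funext fun i =>
    (mem_fixingSubgroup_iff G).mp g.2 (x i) (Set.mem_range_self i)
  rw [← hf g.1, smul_cons, smul_a, smul_x]

theorem exact_invariantD_of_isMultiplyPretransitive [IsMultiplyPretransitive G X (q + 1)]
    (hq : ↑(q + 2) ≤ ENat.card X) :
    Exact (invariantD G X A q) (invariantD G X A (q + 1)) := by
  refine exact_invariantD_iff.mpr fun f hf hdf => ?_
  have succ_lt_card : ((q + 1 : ℕ) : ℕ∞) < ENat.card X := lt_of_lt_of_le (by norm_cast; omega) hq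
  have lt_card : (q : ℕ∞) < ENat.card X := lt_of_lt_of_le (by norm_cast; omega) hq
  choose a ha using exists_notMem_range (X := X) lt_card
  have eq_of_notMem {x : Fin q → X} {b : X} (hb : b ∉ Set.range x) :
      f (Fin.cons (a x) x) = f (Fin.cons b x) :=
    cons_eq_cons_of_mem_invariantCochains succ_lt_card.le hf (ha x) hb
  refine ⟨fun x => f (Fin.cons (a x) x), fun g x => ?_, funext fun x => ?_⟩
  · have hga : g • a x ∉ Set.range (g • x) := fun ⟨i, hi⟩ => ha x ⟨i, smul_left_cancel g hi⟩
    calc f (Fin.cons (a (g • x)) (g • x)) = f (Fin.cons (g • a x) (g • x)) := eq_of_notMem hga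
      _ = f (Fin.cons (a x) x) := by rw [← smul_cons, hf]
  · obtain ⟨b, hb⟩ := exists_notMem_range succ_lt_card x
    calc simplicialD X A q (fun x => f (Fin.cons (a x) x)) x
        = simplicialD X A q (fun z => f (Fin.cons b z)) x :=
          simplicialD_congr fun _ =>
            eq_of_notMem fun hbi => hb (Set.range_comp_subset_range _ _ hbi)
      _ = f x := congrFun (simplicialD_cons_eq_of_simplicialD_eq_zero hdf b) x

end MultiplyTransitive

section FreeAction

variable {G α : Type*} [Group G] [MulAction G α]

theorem stabilizer_eq_fixingSubgroup_range {ι : Type*} (x : ι → α) :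
    stabilizer G x = fixingSubgroup G (Set.range x) := by
  ext g
  simp [mem_fixingSubgroup_iff, funext_iff]

theorem faithfulSMul_ofFixingSubgroup [FaithfulSMul G α] (s : Set α) :
    FaithfulSMul (fixingSubgroup G s) (SubMulAction.ofFixingSubgroup G s) where
  eq_of_smul_eq_smul {g g'} h := by
    refine Subtype.ext <| eq_of_smul_eq_smul fun a : α => ?_
    by_cases ha : a ∈ s
    · rw [(mem_fixingSubgroup_iff G).mp g.2 a ha, (mem_fixingSubgroup_iff G).mp g'.2 a ha]
    · exact congrArg Subtype.val (h ⟨a, ha⟩)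

theorem isMultiplyPretransitive_ofFixingSubgroup_card_sub_two [Finite α]
    [IsMultiplyPretransitive G α (Nat.card α - 2)] (s : Set α) :
    IsMultiplyPretransitive (fixingSubgroup G s) (SubMulAction.ofFixingSubgroup G s)
      (Nat.card (SubMulAction.ofFixingSubgroup G s) - 2) := by
  have hcard : s.ncard + Nat.card (SubMulAction.ofFixingSubgroup G s) = Nat.card α :=
    Set.ncard_add_ncard_compl s
  rcases le_total (Nat.card (SubMulAction.ofFixingSubgroup G s)) 2 with h | h
  · rw [Nat.sub_eq_zero_of_le h]
    exact is_zero_pretransitive'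
  · exact SubMulAction.ofFixingSubgroup.isMultiplyPretransitive G (n := Nat.card α - 2) s (by omega)

theorem card_dvd_factorial_card [Finite α] [FaithfulSMul G α] :
    Nat.card G ∣ (Nat.card α).factorial :=
  Nat.card_perm (α := α) ▸ Subgroup.card_dvd_of_injective (toPermHom G α) toPerm_injective

theorem exact_invariantD_of_isUnit_factorial {k Y A : Type*} [CommRing k] [AddCommGroup A]
    [Module k A] [MulAction G Y] [IsCancelSMul G Y] [Nonempty Y] [Finite α] [FaithfulSMul G α]
    [IsMultiplyPretransitive G α (Nat.card α - 2)] {m q : ℕ} (hm : IsUnit (m.factorial : k))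
    (hq : q + 2 ≤ m) :
    Exact (invariantD G Y A q) (invariantD G Y A (q + 1)) := by
  induction hα : Nat.card α using Nat.strong_induction_on generalizing G α q with
  | _ c ih =>
  subst hα
  rcases le_or_gt (Nat.card α) m with hαm | hαm
  · have : Finite G := .of_injective _ (toPerm_injective (α := G) (β := α))
    have hG := card_dvd_factorial_card (G := G).trans (Nat.factorial_dvd_factorial hαm)
    exact exact_invariantD_of_isUnit_card (isUnit_of_dvd_unit (Nat.cast_dvd_cast hG) hm)
  · have : Nonempty α := Finite.card_pos_iff.mp (by omega)
    obtain ⟨φ⟩ := nonempty_mulActionHom_of_isCancelSMul (G := G) (W := Y) (Z := α)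
    refine exact_invariantD_of_mulActionHom φ (fun a ha b x => ?_) ?_
    · have := faithfulSMul_ofFixingSubgroup (G := G) (Set.range x)
      have := isMultiplyPretransitive_ofFixingSubgroup_card_sub_two (G := G) (Set.range x)
      rw [stabilizer_eq_fixingSubgroup_range]
      refine ih _ ?_ (α := SubMulAction.ofFixingSubgroup G (Set.range x)) (by omega) rfl
      exact Finite.card_subtype_lt (x := x 0) fun h => h (Set.mem_range_self 0)
    · have : IsMultiplyPretransitive G α (q + 1) :=
        isMultiplyPretransitive_of_le (n := Nat.card α - 2) (by omega) (Nat.sub_le _ _)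
      have hcard : ↑(q + 2) ≤ ENat.card α := by
        rw [ENat.card_eq_coe_natCard]
        exact_mod_cast (by omega : q + 2 ≤ Nat.card α)
      exact exact_invariantD_of_isMultiplyPretransitive hcard

end FreeAction

section GroupCohomology

variable {k G A : Type u} [CommRing k] [Group G] [AddCommGroup A] [Module k A] {q : ℕ}

theorem inhomogeneousCochains_d_comp_partialProd {f : (Fin (q + 1) → G) → A}
    (hf : f ∈ invariantCochains G G A (q + 1)) :
    inhomogeneousCochains.d (Rep.trivial k G A) q (f ∘ Fin.partialProd) =
      simplicialD G A (q + 1) f ∘ Fin.partialProd := by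
  funext g
  have smul_partialProd_tail : g 0 • Fin.partialProd (fun i => g i.succ) =
      Fin.removeNth 0 (Fin.partialProd g) :=
    funext fun j => (Fin.partialProd_succ' g j).symm
  calc inhomogeneousCochains.d (Rep.trivial k G A) q (f ∘ Fin.partialProd) g
      = f (Fin.partialProd fun i => g i.succ) + ∑ j : Fin (q + 1),
          (-1 : k) ^ (j + 1 : ℕ) • f (Fin.partialProd (j.contractNth (· * ·) g)) :=
        inhomogeneousCochains.d_hom_apply _ _ _ _
    _ = f (Fin.removeNth 0 (Fin.partialProd g)) + ∑ j : Fin (q + 1),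
          (-1 : ℤ) ^ (j + 1 : ℕ) • f (j.succ.removeNth (Fin.partialProd g)) := by
        rw [← hf (g 0), smul_partialProd_tail]
        congr! 2 with j
        rw [Fin.partialProd_contractNth, ← Int.cast_smul_eq_zsmul k]
        simp only [Int.cast_pow, Int.cast_neg, Int.cast_one]
        rfl
    _ = simplicialD G A (q + 1) f (Fin.partialProd g) := by
        simp [simplicialD_apply, Fin.sum_univ_succ (n := q + 1)]

theorem exists_invariantCochain_comp_partialProd (f : (Fin q → G) → A) :
    ∃ F ∈ invariantCochains G G A (q + 1), F ∘ Fin.partialProd = f := by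
  refine ⟨fun y => f fun i => (y i.castSucc)⁻¹ * y i.succ, fun g y => ?_, funext fun g => ?_⟩
  · simp [mul_assoc]
  · exact congrArg f (funext (Fin.partialProd_right_inv g))

theorem eq_zero_of_comp_partialProd_eq_zero {f : (Fin (q + 1) → G) → A}
    (hf : f ∈ invariantCochains G G A (q + 1)) (h : f ∘ Fin.partialProd = 0) : f = 0 := by
  funext y
  rw [← Fin.partialProd_left_inv y, hf]
  exact congrFun h _

theorem subsingleton_groupCohomology_of_exact_invariantD
    (h : Exact (invariantD G G A (q + 1)) (invariantD G G A (q + 2))) :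
    Subsingleton (groupCohomology (Rep.trivial k G A) (q + 1)) := by
  rw [← ModuleCat.isZero_iff_subsingleton, groupCohomology,
    ← HomologicalComplex.exactAt_iff_isZero_homology,
    HomologicalComplex.exactAt_iff' _ q (q + 1) (q + 2) (by simp) (by simp),
    CategoryTheory.ShortComplex.moduleCat_exact_iff]
  intro (f : (Fin (q + 1) → G) → A) hf
  replace hf : inhomogeneousCochains.d (Rep.trivial k G A) (q + 1) f = 0 := by
    rwa [← groupCohomology.inhomogeneousCochains.d_def]
  obtain ⟨F, hF, rfl⟩ := exists_invariantCochain_comp_partialProd f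
  rw [inhomogeneousCochains_d_comp_partialProd hF] at hf
  obtain ⟨u, hu, rfl⟩ := exact_invariantD_iff.mp h F hF
    (eq_zero_of_comp_partialProd_eq_zero (simplicialD_mem_invariantCochains hF) hf)
  refine ⟨u ∘ Fin.partialProd, ?_⟩
  change (groupCohomology.inhomogeneousCochains (Rep.trivial k G A)).d q (q + 1) _ = _
  rw [groupCohomology.inhomogeneousCochains.d_def]
  exact inhomogeneousCochains_d_comp_partialProd hu

end GroupCohomology

end HomogeneousCochain

theorem alternatingGroup_cohomology_vanishes_general {k G A : Type u} {α : Type*} [CommRing k]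
    [Group G] [AddCommGroup A] [Module k A] [Finite α] [MulAction G α] [FaithfulSMul G α]
    [IsMultiplyPretransitive G α (Nat.card α - 2)] {m : ℕ} (hm : IsUnit (m.factorial : k)) {q : ℕ}
    (hq : 0 < q) (hqm : q + 2 ≤ m) :
    Subsingleton (groupCohomology (Rep.trivial k G A) q) := by
  obtain ⟨q, rfl⟩ := Nat.exists_eq_add_one.mpr hq
  exact HomogeneousCochain.subsingleton_groupCohomology_of_exact_invariantD
    (HomogeneousCochain.exact_invariantD_of_isUnit_factorial (α := α) hm hqm)

/-- Kleshchev–Nakano, Burichenko.  Let `p` be an odd prime.  The mod `p`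
cohomology `H^k(Aₙ, 𝔽_p)` of the alternating group on `n` letters vanishes for
`0 < k < p - 2`. -/
theorem alternatingGroup_cohomology_vanishes (p n : ℕ) (hp : p.Prime) (hodd : Odd p) :
    ∀ k : ℕ, 0 < k → k < p - 2 →
      Subsingleton (groupCohomology
        (Rep.trivial (ZMod p) (alternatingGroup (Fin n)) (ZMod p)) k) := by
  intro k hk hkp
  have : Fact p.Prime := ⟨hp⟩
  have := alternatingGroup.isMultiplyPretransitive (Fin n)
  have isUnit_factorial : IsUnit ((p - 1).factorial : ZMod p) := by
    rw [ZMod.wilsons_lemma]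
    exact isUnit_one.neg
  exact alternatingGroup_cohomology_vanishes_general (α := Fin n) isUnit_factorial hk (by omega)
end

section
/- Let W be an infinite Coxeter group with |S| = n such that every proper standard parabolic subgroup W_T (T ⊊ S) is finite. Then H^*(A_W, Q) ≅ H^*(S^{n-1}, Q); in particular H^{n-1}(A_W, F_p) ≠ 0 for every prime p. -/
/-- The standard parabolic subgroup `W_T` generated by the simple reflections in `T ⊆ S`. -/
def CoxeterSystem.parabolic {B W : Type*} [Group W] {M : CoxeterMatrix B}
    (cs : CoxeterSystem M W) (T : Set B) : Subgroup W :=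
  Subgroup.closure (cs.simple '' T)

/-!
An augmented cochain of the Coxeter complex is a function `f w T` of a chamber `w` and a set `T` of
simple reflections which depends only on the coset `w W_T`, the face of `w` of codimension `#T`. The
cochain complex is exact: a primitive of a closed cochain is built by recursion on the length of
`w`, the faces `w W_T` with a descent of `w` in `T` being settled by shorter chambers, while the
others are filled in by coning off a simple reflection that is not a descent; such a reflection
exists because `W` is infinite.

Averaging over the finite groups `W_T` makes every cochain module but the augmentation, up to a
nonzero integer, a direct summand of the functions on `W`, which are acyclic for every subgroup.
Hence dimension shifting relates the modules of closed cochains by isogenies, i.e. maps with kernel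
and cokernel killed by a nonzero integer, and ends at the augmentation, which is the trivial module.
In the lowest degree, `A_W` has two orbits of chambers, which become identified on all proper faces,
so the only contribution besides degree `0` is one copy of the coefficients in degree `n - 1`.
Isogenies are isomorphisms over a field of characteristic zero. Over `ℤ` the target of an isogeny
from `ℤ` is not `m`-divisible, so the cohomology modulo `m` cannot vanish in degree `n - 1`.
-/

namespace CoxeterComplex

open scoped Finset

universe u

section Words

variable {B W : Type*} [Group W] {M : CoxeterMatrix B} (cs : CoxeterSystem M W)

open Classical in
/-- The action of a simple reflection `s` on pairs (reflection, parity): it conjugates the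
reflection by `s` and changes the parity when that reflection is `s`. -/
noncomputable def reflectionStep (i : B) : Function.End (W × ZMod 2) :=
  fun p => (cs.simple i * p.1 * cs.simple i, p.2 + if p.1 = cs.simple i then 1 else 0)

open Classical in
lemma prod_reflectionStep_reverse (ω : List B) (t : W) (e : ZMod 2) :
    (ω.reverse.map (reflectionStep cs)).prod (t, e) =
      ((cs.wordProd ω)⁻¹ * t * cs.wordProd ω, e + (cs.leftInvSeq ω).count t) := by
  induction ω generalizing t e with
  | nil => simp [show ∀ p, (1 : Function.End (W × ZMod 2)) p = p from fun _ => rfl]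
  | cons i ω ih =>
    have conj_count : ((cs.leftInvSeq ω).map (MulAut.conj (cs.simple i))).count t =
        (cs.leftInvSeq ω).count (cs.simple i * t * cs.simple i) := by
      rw [← List.count_map_of_injective _ _ (MulAut.conj (cs.simple i)).injective]
      simp [Function.comp_def, mul_assoc]
    rw [List.reverse_cons, List.map_append, List.prod_append]
    change (ω.reverse.map (reflectionStep cs)).prod ((reflectionStep cs i * 1) (t, e)) = _
    rw [mul_one, reflectionStep, ih, CoxeterSystem.leftInvSeq, List.count_cons, conj_count]
    simp only [cs.wordProd_cons, mul_inv_rev, cs.inv_simple, beq_iff_eq, mul_assoc, Nat.cast_add,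
      Nat.cast_ite, Nat.cast_one, Nat.cast_zero, eq_comm (a := t)]
    rw [add_assoc, add_comm (ite _ _ _)]

lemma leftInvSeq_alternatingWord (i j : B) (m : ℕ) :
    cs.leftInvSeq (CoxeterSystem.alternatingWord i j (2 * m)) =
      (List.range (2 * m)).map fun k => cs.simple i * (cs.simple j * cs.simple i) ^ k := by
  refine List.ext_getElem (by simp) fun k hk _ => ?_
  rw [cs.getElem_leftInvSeq_alternatingWord i j m k (by simpa using hk),
    cs.prod_alternatingWord_eq_mul_pow]
  simp [show (2 * k + 1) / 2 = k by lia]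

lemma even_count_map_range_two_mul {α : Type*} [DecidableEq α] {f : ℕ → α} {m : ℕ}
    (hf : ∀ k, f (m + k) = f k) (a : α) : Even (((List.range (2 * m)).map f).count a) := by
  rw [two_mul, List.range_add, List.map_append, List.map_map, List.count_append]
  simp [Function.comp_def, hf]

lemma isLiftable_reflectionStep : M.IsLiftable (reflectionStep cs) := by
  classical
  intro i j
  have prod_eq (m : ℕ) : (reflectionStep cs i * reflectionStep cs j) ^ m =
      ((CoxeterSystem.alternatingWord j i (2 * m)).reverse.map (reflectionStep cs)).prod := by
    induction m with
    | zero => simp [CoxeterSystem.alternatingWord]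
    | succ m ih =>
      rw [pow_succ, ih, mul_add_one, CoxeterSystem.alternatingWord_succ',
        CoxeterSystem.alternatingWord_succ']
      simp
  have even_count (t : W) := even_count_map_range_two_mul (m := M i j)
    (f := fun k => cs.simple j * (cs.simple i * cs.simple j) ^ k) (by simp [pow_add]) t
  funext ⟨t, e⟩
  rw [prod_eq, prod_reflectionStep_reverse, leftInvSeq_alternatingWord,
    (ZMod.natCast_eq_zero_iff_even).2 (even_count t), cs.prod_alternatingWord_eq_mul_pow]
  simp [show (1 : Function.End (W × ZMod 2)) (t, e) = (t, e) from rfl]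

open Classical in
lemma count_leftInvSeq_congr {ω ω' : List B} (h : cs.wordProd ω = cs.wordProd ω') (t : W) :
    ((cs.leftInvSeq ω).count t : ZMod 2) = (cs.leftInvSeq ω').count t := by
  have lift_eq (α : List B) : cs.lift ⟨_, isLiftable_reflectionStep cs⟩ (cs.wordProd α)⁻¹ =
      (α.reverse.map (reflectionStep cs)).prod := by
    rw [← cs.wordProd_reverse, CoxeterSystem.wordProd, map_list_prod, List.map_map]
    exact congrArg _ (List.map_congr_left fun i _ =>
      cs.lift_apply_simple (isLiftable_reflectionStep cs) i)
  have := congrFun ((lift_eq ω).symm.trans ((congrArg _ (by rw [h])).trans (lift_eq ω'))) (t, 0)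
  simpa only [prod_reflectionStep_reverse, zero_add] using congrArg Prod.snd this

lemma simple_mem_leftInvSeq_of_isLeftDescent {ω : List B} {i : B}
    (h : cs.IsLeftDescent (cs.wordProd ω) i) : cs.simple i ∈ cs.leftInvSeq ω := by
  classical
  obtain ⟨ω', hω', hprod⟩ := cs.exists_isReduced (cs.simple i * cs.wordProd ω)
  have not_mem : cs.simple i ∉ cs.leftInvSeq ω' := fun hmem => by
    have := (cs.isLeftInversion_of_mem_leftInvSeq hω' hmem).2
    rw [← hprod, cs.simple_mul_simple_cancel_left] at this
    exact this.not_gt h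
  have count_cons : (cs.leftInvSeq (i :: ω')).count (cs.simple i) = 1 := by
    have := List.count_map_of_injective (cs.leftInvSeq ω') _
      (MulAut.conj (cs.simple i)).injective (cs.simple i)
    rw [MulAut.conj_apply, mul_inv_cancel_right, List.count_eq_zero.2 not_mem] at this
    rw [CoxeterSystem.leftInvSeq, List.count_cons_self, this]
  have parity := count_leftInvSeq_congr cs (ω := ω) (ω' := i :: ω')
    (by rw [cs.wordProd_cons, ← hprod, cs.simple_mul_simple_cancel_left]) (cs.simple i)
  rw [count_cons] at parity
  by_contra hn
  simp [List.count_eq_zero.2 hn] at parity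

lemma exists_sublist_of_isLeftDescent {ω : List B} {i : B}
    (h : cs.IsLeftDescent (cs.wordProd ω) i) :
    ∃ ω', ω'.Sublist ω ∧ ω'.length + 1 = ω.length ∧
      cs.wordProd ω' = cs.simple i * cs.wordProd ω := by
  obtain ⟨j, hj, hij⟩ := List.mem_iff_getElem.1 (simple_mem_leftInvSeq_of_isLeftDescent cs h)
  refine ⟨ω.eraseIdx j, List.eraseIdx_sublist .., List.length_eraseIdx_add_one (by simpa using hj),
    ?_⟩
  rw [← cs.getD_leftInvSeq_mul_wordProd, List.getD_eq_getElem _ _ hj, hij]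

lemma exists_sublist_of_isRightDescent {ω : List B} {i : B}
    (h : cs.IsRightDescent (cs.wordProd ω) i) :
    ∃ ω', ω'.Sublist ω ∧ ω'.length + 1 = ω.length ∧
      cs.wordProd ω' = cs.wordProd ω * cs.simple i := by
  rw [← cs.isLeftDescent_inv_iff, ← cs.wordProd_reverse] at h
  obtain ⟨ω', hsub, hlen, hprod⟩ := exists_sublist_of_isLeftDescent cs h
  refine ⟨ω'.reverse, by simpa using hsub.reverse, by simpa using hlen, ?_⟩
  rw [cs.wordProd_reverse, hprod]
  simp

lemma exists_isReduced_sublist (ω : List B) :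
    ∃ ω', ω'.Sublist ω ∧ cs.IsReduced ω' ∧ cs.wordProd ω' = cs.wordProd ω := by
  induction ω with
  | nil => exact ⟨[], .refl _, by simp [CoxeterSystem.IsReduced], rfl⟩
  | cons i ω ih =>
    obtain ⟨α, hαω, hα, hprod⟩ := ih
    by_cases hi : cs.IsLeftDescent (cs.wordProd α) i
    · obtain ⟨β, hβα, hlen, hβ⟩ := exists_sublist_of_isLeftDescent cs hi
      have hi' := cs.isLeftDescent_iff.1 hi
      refine ⟨β, (hβα.trans hαω).cons i, ?_, by rw [hβ, hprod, cs.wordProd_cons]⟩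
      rw [← hβ, hα.eq] at hi'
      exact (by lia : cs.length (cs.wordProd β) = β.length)
    · refine ⟨i :: α, hαω.cons_cons i, ?_, by rw [cs.wordProd_cons, hprod, cs.wordProd_cons]⟩
      rw [CoxeterSystem.IsReduced, cs.wordProd_cons, cs.not_isLeftDescent_iff.1 hi, hα.eq,
        List.length_cons]

lemma exists_sublist_of_isRightDescent_append {α ω : List B} {i : B}
    (hω : cs.IsReduced (ω ++ [i])) (h : cs.IsRightDescent (cs.wordProd (α ++ ω)) i) :
    ∃ β, β.Sublist α ∧ β.length + 1 = α.length ∧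
      cs.wordProd (β ++ (ω ++ [i])) = cs.wordProd (α ++ ω) := by
  obtain ⟨γ, hsub, hlen, hγ⟩ := exists_sublist_of_isRightDescent cs h
  obtain ⟨β, ψ, rfl, hβ, hψ⟩ := List.sublist_append_iff.1 hsub
  rw [List.length_append, List.length_append] at hlen
  have hψω : ψ.length = ω.length := by
    refine hψ.length_le.antisymm (not_lt.1 fun hlt => ?_)
    obtain rfl : β = α := hβ.eq_of_length (by have := hβ.length_le; lia)
    have hψi : cs.wordProd ψ = cs.wordProd (ω ++ [i]) := by
      simpa only [cs.wordProd_append, cs.wordProd_singleton, mul_assoc, mul_right_inj] using hγ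
    have := cs.length_wordProd_le ψ
    rw [hψi, hω.eq, List.length_append, List.length_singleton] at this
    lia
  obtain rfl := hψ.eq_of_length hψω
  refine ⟨β, hβ, by lia, ?_⟩
  rw [← List.append_assoc, cs.wordProd_append, hγ, cs.wordProd_singleton,
    cs.simple_mul_simple_cancel_right]

lemma isReduced_of_isReduced_append {α ω : List B} (h : cs.IsReduced (α ++ ω)) :
    cs.IsReduced α := by
  simpa using h.take α.length

lemma exists_not_isRightDescent [Finite B] [Infinite W] (w : W) :
    ∃ i, ¬ cs.IsRightDescent w i := by
  by_contra! all_descents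
  have exists_reduced_suffix (ω : List B) (hω : cs.IsReduced ω) :
      ∃ α, w = cs.wordProd (α ++ ω) ∧ (α ++ ω).length = cs.length w := by
    induction ω using List.reverseRecOn with
    | nil =>
      obtain ⟨α, hα, rfl⟩ := cs.exists_isReduced w
      exact ⟨α, by simp, by simpa using hα.eq.symm⟩
    | append_singleton ω i ih =>
      obtain ⟨α, rfl, hlen⟩ := ih (isReduced_of_isReduced_append cs hω)
      obtain ⟨β, -, hβlen, hβ⟩ := exists_sublist_of_isRightDescent_append cs hω (all_descents i)
      exact ⟨β, hβ.symm, by simp at hlen ⊢; lia⟩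
  have : (Set.univ : Set W) ⊆ cs.wordProd '' {ω | ω.length ≤ cs.length w} := fun v _ => by
    obtain ⟨ω, hω, rfl⟩ := cs.exists_isReduced v
    obtain ⟨α, -, hlen⟩ := exists_reduced_suffix ω hω
    exact ⟨ω, by simp at hlen ⊢; lia, rfl⟩
  exact Set.infinite_univ (((List.finite_length_le B _).image _).subset this)

end Words

section Cosets

variable {B W : Type*} [Group W] {M : CoxeterMatrix B} (cs : CoxeterSystem M W)

lemma parabolic_mono {T T' : Set B} (h : T ⊆ T') : cs.parabolic T ≤ cs.parabolic T' :=
  Subgroup.closure_mono (Set.image_mono h)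

lemma simple_mem_parabolic {T : Set B} {i : B} (hi : i ∈ T) : cs.simple i ∈ cs.parabolic T :=
  Subgroup.subset_closure (Set.mem_image_of_mem _ hi)

lemma wordProd_mem_parabolic {T : Set B} {ω : List B} (hω : ∀ i ∈ ω, i ∈ T) :
    cs.wordProd ω ∈ cs.parabolic T :=
  Subgroup.list_prod_mem _ <| List.forall_mem_map.2 fun i hi => simple_mem_parabolic cs (hω i hi)

lemma exists_isReduced_of_mem_parabolic {T : Set B} {u : W} (hu : u ∈ cs.parabolic T) :
    ∃ ω, (∀ i ∈ ω, i ∈ T) ∧ cs.IsReduced ω ∧ cs.wordProd ω = u := by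
  obtain ⟨ω, hωT, rfl⟩ : ∃ ω : List B, (∀ i ∈ ω, i ∈ T) ∧ cs.wordProd ω = u := by
    induction hu using Subgroup.closure_induction with
    | mem _ hx =>
      obtain ⟨i, hi, rfl⟩ := hx
      exact ⟨[i], by simpa using hi, cs.wordProd_singleton i⟩
    | one => exact ⟨[], by simp, cs.wordProd_nil⟩
    | mul _ _ _ _ hx hy =>
      obtain ⟨α, hα, rfl⟩ := hx
      obtain ⟨β, hβ, rfl⟩ := hy
      exact ⟨α ++ β, fun i hi => (List.mem_append.1 hi).elim (hα i) (hβ i),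
        cs.wordProd_append α β⟩
    | inv _ _ hx =>
      obtain ⟨α, hα, rfl⟩ := hx
      exact ⟨α.reverse, by simpa using hα, cs.wordProd_reverse α⟩
  obtain ⟨ω', hsub, hred, hprod⟩ := exists_isReduced_sublist cs ω
  exact ⟨ω', fun i hi => hωT i (hsub.subset hi), hred, hprod⟩

lemma exists_minRep (T : Set B) (q : W ⧸ cs.parabolic T) :
    ∃ w : W, (w : W ⧸ cs.parabolic T) = q ∧
      ∀ v : W, (v : W ⧸ cs.parabolic T) = q → cs.length w ≤ cs.length v := by
  obtain ⟨w, hw, hmin⟩ := (measure cs.length).wf.has_min {w : W | (w : W ⧸ cs.parabolic T) = q}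
    (QuotientGroup.mk_surjective q)
  exact ⟨w, hw, fun v hv => not_lt.1 (hmin v hv)⟩

/-- A chosen element of minimal length in the coset of `w` modulo a standard parabolic subgroup. -/
noncomputable def minRep (T : Set B) (w : W) : W := (exists_minRep cs T w).choose

lemma inv_minRep_mul_mem (T : Set B) (w : W) : (minRep cs T w)⁻¹ * w ∈ cs.parabolic T :=
  QuotientGroup.eq.1 (exists_minRep cs T w).choose_spec.1

lemma length_minRep_le (T : Set B) (w : W) : cs.length (minRep cs T w) ≤ cs.length w :=
  (exists_minRep cs T w).choose_spec.2 w rfl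

lemma minRep_eq_minRep {T : Set B} {v w : W} (h : v⁻¹ * w ∈ cs.parabolic T) :
    minRep cs T v = minRep cs T w := by
  rw [minRep, minRep]
  simp only [QuotientGroup.eq.2 h]

lemma minRep_mul_of_mem {T : Set B} (w : W) {u : W} (hu : u ∈ cs.parabolic T) :
    minRep cs T (w * u) = minRep cs T w :=
  (minRep_eq_minRep cs (by simpa using hu)).symm

lemma minRep_minRep {T U : Set B} (h : T ⊆ U) (w : W) :
    minRep cs U (minRep cs T w) = minRep cs U w :=
  minRep_eq_minRep cs (parabolic_mono cs h (inv_minRep_mul_mem cs T w))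

lemma length_minRep_lt {T : Set B} {w : W} {i : B} (hi : i ∈ T) (h : cs.IsRightDescent w i) :
    cs.length (minRep cs T w) < cs.length w := by
  rw [← minRep_mul_of_mem cs w (simple_mem_parabolic cs hi)]
  exact (length_minRep_le cs T _).trans_lt h

lemma isReduced_append_of_minRep {T : Set B} {w : W} {α ω : List B} (hα : cs.IsReduced α)
    (hw : cs.wordProd α = minRep cs T w) (hω : cs.IsReduced ω) (hωT : ∀ i ∈ ω, i ∈ T) :
    cs.IsReduced (α ++ ω) := by
  obtain ⟨γ, hsub, hγ, hprod⟩ := exists_isReduced_sublist cs (α ++ ω)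
  obtain ⟨β, ψ, rfl, hβ, hψ⟩ := List.sublist_append_iff.1 hsub
  rw [cs.wordProd_append, cs.wordProd_append] at hprod
  have hψT : cs.wordProd ψ ∈ cs.parabolic T :=
    wordProd_mem_parabolic cs fun i hi => hωT i (hψ.subset hi)
  have hlen := length_minRep_le cs T (cs.wordProd β)
  rw [← minRep_mul_of_mem cs _ hψT, hprod,
    minRep_mul_of_mem cs _ (wordProd_mem_parabolic cs hωT), hw, minRep_minRep cs subset_rfl, ← hw,
    hα.eq] at hlen
  obtain rfl := hβ.eq_of_length_le (hlen.trans (cs.length_wordProd_le β))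
  rw [mul_right_inj] at hprod
  have := cs.length_wordProd_le ψ
  rw [hprod, hω.eq] at this
  rwa [hψ.eq_of_length_le this] at hγ

lemma minRep_eq_self {T : Set B} {w : W} (h : ∀ i ∈ T, ¬ cs.IsRightDescent w i) :
    minRep cs T w = w := by
  obtain ⟨α, hα, hprod⟩ := cs.exists_isReduced (minRep cs T w)
  obtain ⟨ω, hωT, hω, hωprod⟩ :=
    exists_isReduced_of_mem_parabolic cs (inv_minRep_mul_mem cs T w)
  have hw : cs.wordProd (α ++ ω) = w := by
    rw [cs.wordProd_append, hωprod, ← hprod, mul_inv_cancel_left]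
  have hred := isReduced_append_of_minRep cs hα hprod.symm hω hωT
  rcases List.eq_nil_or_concat' ω with rfl | ⟨ω', i, rfl⟩
  · rw [hprod, ← hw, List.append_nil]
  · refine absurd ?_ (h i (hωT i (by simp)))
    have hwi : w * cs.simple i = cs.wordProd (α ++ ω') := by
      rw [← hw, ← List.append_assoc, cs.wordProd_append, cs.wordProd_singleton,
        cs.simple_mul_simple_cancel_right]
    rw [CoxeterSystem.IsRightDescent, hwi, ← hw, hred.eq]
    exact (cs.length_wordProd_le _).trans_lt (by simp)

lemma two_le_card (cs : CoxeterSystem M W) [Fintype B] [Infinite W] : 2 ≤ Fintype.card B := by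
  obtain ⟨i, -⟩ := exists_not_isRightDescent cs 1
  obtain ⟨j, hj⟩ := exists_not_isRightDescent cs (cs.simple i)
  have : i ≠ j := by
    rintro rfl
    simp [CoxeterSystem.IsRightDescent] at hj
  exact Fintype.one_lt_card_iff.2 ⟨i, j, this⟩

end Cosets

section Koszul

variable {k B : Type*} [LinearOrder B] [CommRing k]

/-- The incidence sign `(-1) ^ #{t ∈ T | t < s}` of the face `T` in the simplex `insert s T`. -/
def incidenceSign (k : Type*) [CommRing k] (s : B) (T : Finset B) : k := (-1) ^ #{t ∈ T | t < s}

lemma incidenceSign_mul_self (s : B) (T : Finset B) :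
    incidenceSign k s T * incidenceSign k s T = 1 := by
  rw [incidenceSign, ← mul_pow, neg_one_mul, neg_neg, one_pow]

lemma incidenceSign_insert {s : B} {T : Finset B} (hs : s ∉ T) (s' : B) :
    incidenceSign k s' (insert s T) = (if s < s' then -1 else 1) * incidenceSign k s' T := by
  rw [incidenceSign, incidenceSign, Finset.filter_insert]
  split_ifs
  · rw [Finset.card_insert_of_notMem (by simp [hs]), pow_succ']
  · rw [one_mul]

lemma incidenceSign_mul_incidenceSign_insert {s s' : B} {T : Finset B} (hs : s ∉ T) (hs' : s' ∉ T)
    (hne : s ≠ s') : incidenceSign k s T * incidenceSign k s' (insert s T) =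
      -(incidenceSign k s' T * incidenceSign k s (insert s' T)) := by
  rw [incidenceSign_insert hs, incidenceSign_insert hs']
  rcases hne.lt_or_gt with h | h <;> rw [if_pos h, if_neg h.asymm] <;> ring

lemma incidenceSign_insert_mul_incidenceSign_insert {s s' : B} {T : Finset B} (hs : s ∉ T)
    (hs' : s' ∉ T) (hne : s ≠ s') :
    incidenceSign k s (insert s' T) * incidenceSign k s' (insert s T) =
      -(incidenceSign k s' T * incidenceSign k s T) := by
  rw [incidenceSign_insert hs, incidenceSign_insert hs']
  rcases hne.lt_or_gt with h | h <;> rw [if_pos h, if_neg h.asymm] <;> ring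

variable (k B) in
/-- The functions on the power set of `B` which are supported on the subsets with `c` elements. -/
def homogeneous (c : ℕ) : Submodule k (Finset B → k) where
  carrier := {f | ∀ T : Finset B, #T ≠ c → f T = 0}
  add_mem' hf hg T hT := by rw [Pi.add_apply, hf T hT, hg T hT, add_zero]
  zero_mem' _ _ := rfl
  smul_mem' a f hf T hT := by rw [Pi.smul_apply, hf T hT, smul_zero]

/-- The contraction of the Koszul differential `koszulD` which adjoins the vertex `b`. -/
def cone (b : B) : (Finset B → k) →ₗ[k] (Finset B → k) where
  toFun f T := if b ∈ T then incidenceSign k b (T.erase b) * f (T.erase b) else 0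
  map_add' f g := by ext T; simp only [Pi.add_apply]; split_ifs <;> ring
  map_smul' a f := by
    ext T; simp only [Pi.smul_apply, smul_eq_mul, RingHom.id_apply]; split_ifs <;> ring

lemma cone_insert {b : B} {T : Finset B} (hb : b ∉ T) (f : Finset B → k) :
    cone b f (insert b T) = incidenceSign k b T * f T := by
  simp [cone, Finset.erase_insert hb]

lemma cone_of_notMem {b : B} {T : Finset B} (hb : b ∉ T) (f : Finset B → k) : cone b f T = 0 :=
  if_neg hb

lemma cone_mem_homogeneous {c : ℕ} {f : Finset B → k} (hf : f ∈ homogeneous k B c) (b : B) :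
    cone b f ∈ homogeneous k B (c + 1) := fun T hT => by
  by_cases hb : b ∈ T
  · obtain ⟨T, hbT, rfl⟩ : ∃ T', b ∉ T' ∧ insert b T' = T :=
      ⟨_, T.notMem_erase b, Finset.insert_erase hb⟩
    rw [Finset.card_insert_of_notMem hbT] at hT
    rw [cone_insert hbT, hf T (by lia), mul_zero]
  · exact cone_of_notMem hb f

variable [Fintype B]

/-- The simplicial differential, lowering the number of elements of the simplices on which a
function is supported: its value at `T` is the signed sum of the values at the sets
`insert s T`, `s ∉ T`. -/
def koszulD : (Finset B → k) →ₗ[k] (Finset B → k) where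
  toFun f T := ∑ s ∈ Tᶜ, incidenceSign k s T * f (insert s T)
  map_add' f g := by ext T; simp [mul_add, Finset.sum_add_distrib]
  map_smul' a f := by ext T; simp [Finset.mul_sum, mul_left_comm]

lemma koszulD_apply (f : Finset B → k) (T : Finset B) :
    koszulD f T = ∑ s ∈ Tᶜ, incidenceSign k s T * f (insert s T) := rfl

lemma koszulD_koszulD (f : Finset B → k) : koszulD (koszulD f) = 0 := by
  ext T
  simp only [koszulD_apply, Pi.zero_apply, Finset.mul_sum]
  rw [Finset.sum_sigma']
  refine Finset.sum_involution (fun p _ => ⟨p.2, p.1⟩) ?_ ?_ ?_ fun _ _ => rfl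
  · rintro ⟨s, s'⟩ h
    simp only [Finset.mem_sigma, Finset.mem_compl, Finset.mem_insert, not_or] at h
    dsimp only
    rw [Finset.insert_comm, ← mul_assoc, ← mul_assoc,
      incidenceSign_mul_incidenceSign_insert h.1 h.2.2 (Ne.symm h.2.1), neg_mul, neg_add_cancel]
  · rintro ⟨s, s'⟩ h _ heq
    simp only [Finset.mem_sigma, Finset.mem_compl, Finset.mem_insert, not_or] at h
    simp only [Sigma.mk.injEq, heq_eq_eq] at heq
    exact h.2.1 heq.1
  · rintro ⟨s, s'⟩ h
    simp only [Finset.mem_sigma, Finset.mem_compl, Finset.mem_insert, not_or] at h ⊢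
    exact ⟨h.2.2, Ne.symm h.2.1, h.1⟩

lemma koszulD_cone_add_cone_koszulD (b : B) (f : Finset B → k) :
    koszulD (cone b f) + cone b (koszulD f) = f := by
  ext T
  rw [Pi.add_apply]
  by_cases hb : b ∈ T
  · obtain ⟨T, hbT, rfl⟩ : ∃ T', b ∉ T' ∧ insert b T' = T :=
      ⟨_, T.notMem_erase b, Finset.insert_erase hb⟩
    rw [cone_insert hbT, koszulD_apply, koszulD_apply, Finset.compl_insert,
      ← Finset.add_sum_erase _ _ (Finset.mem_compl.2 hbT), mul_add, ← mul_assoc,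
      incidenceSign_mul_self, one_mul, add_left_comm, Finset.mul_sum, ← Finset.sum_add_distrib,
      Finset.sum_eq_zero, add_zero]
    intro s hs
    rw [Finset.mem_erase, Finset.mem_compl] at hs
    rw [Finset.insert_comm, cone_insert (by simp [hs.1.symm, hbT]), ← mul_assoc, ← mul_assoc,
      incidenceSign_insert_mul_incidenceSign_insert hs.2 hbT hs.1, neg_mul, neg_add_cancel]
  · rw [cone_of_notMem hb, add_zero, koszulD_apply, Finset.sum_eq_single_of_mem b (by simpa),
      cone_insert hb, ← mul_assoc, incidenceSign_mul_self, one_mul]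
    intro s _ hsb
    rw [cone_of_notMem (by simp [hsb.symm, hb]), mul_zero]

lemma koszulD_cone {b : B} {f : Finset B → k} (hf : koszulD f = 0) : koszulD (cone b f) = f := by
  simpa [hf] using koszulD_cone_add_cone_koszulD b f

lemma koszulD_mem_homogeneous {c : ℕ} {f : Finset B → k} (hf : f ∈ homogeneous k B (c + 1)) :
    koszulD f ∈ homogeneous k B c := fun T hT => Finset.sum_eq_zero fun s hs => by
  rw [hf _ (by rw [Finset.card_insert_of_notMem (Finset.mem_compl.1 hs)]; lia), mul_zero]

lemma koszulD_eq_zero_of_mem_homogeneous_zero {f : Finset B → k} (hf : f ∈ homogeneous k B 0) :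
    koszulD f = 0 := by
  ext T
  refine Finset.sum_eq_zero fun s _ => ?_
  rw [hf _ (Finset.card_ne_zero_of_mem (Finset.mem_insert_self s T)), mul_zero]

lemma eq_zero_of_koszulD_eq_zero {c : ℕ} (hc : c + 1 = Fintype.card B) {f : Finset B → k}
    (hf : f ∈ homogeneous k B (c + 1)) (hf_closed : koszulD f = 0) : f = 0 := by
  obtain ⟨b⟩ : Nonempty B := Fintype.card_pos_iff.1 (hc ▸ c.succ_pos)
  have cone_eq_zero : cone b f = 0 := funext fun T =>
    cone_mem_homogeneous hf b T (T.card_le_univ.trans_lt (hc ▸ Nat.lt_succ_self _)).ne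
  rw [← koszulD_cone (b := b) hf_closed, cone_eq_zero, map_zero]

end Koszul

section Contraction

variable {B W : Type*} [Group W] {M : CoxeterMatrix B} (cs : CoxeterSystem M W)
variable {k : Type*}

/-- Functions on `W × 𝒫(B)` which, at `T`, only depend on the coset modulo `W_T`; those supported
on the sets `T` with `c` elements are the cochains of codimension `c` of the Coxeter complex. -/
def IsParabolicInvariant (f : W → Finset B → k) : Prop :=
  ∀ w (T : Finset B), ∀ u ∈ cs.parabolic (T : Set B), f (w * u) T = f w T

lemma IsParabolicInvariant.apply_minRep {f : W → Finset B → k} (hf : IsParabolicInvariant cs f)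
    (w : W) (T : Finset B) : f (minRep cs T w) T = f w T := by
  rw [← hf (minRep cs T w) T _ (inv_minRep_mul_mem cs T w), mul_inv_cancel_left]

variable [Fintype B] [LinearOrder B] [CommRing k]

lemma IsParabolicInvariant.koszulD {f : W → Finset B → k} (hf : IsParabolicInvariant cs f) :
    IsParabolicInvariant cs fun w => koszulD (f w) := fun w T u hu =>
  Finset.sum_congr rfl fun s _ => by
    rw [hf w (insert s T) u (parabolic_mono cs (by simp) hu)]

variable [Infinite W]

open Classical in
/-- A primitive of `g` under `koszulD`, built by recursion on the length of `w`: on the sets which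
contain a descent of `w` it is dictated by the shorter chambers, and on the other sets it is found
by coning off a non-descent. -/
noncomputable def primitive (g : W → Finset B → k) (w : W) : Finset B → k :=
  let inherited (U : Finset B) : k :=
    if _ : ∃ i ∈ U, cs.IsRightDescent w i then
      primitive g (minRep cs U w) U
    else 0
  inherited + cone (exists_not_isRightDescent cs w).choose (g w - koszulD inherited)
termination_by cs.length w
decreasing_by
  rename_i h
  obtain ⟨i, hi, hd⟩ := h
  exact length_minRep_lt cs hi hd

open Classical in
/-- The part of `primitive cs g w` dictated by the chambers shorter than `w`. -/
noncomputable def inherited (g : W → Finset B → k) (w : W) (U : Finset B) : k :=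
  if ∃ i ∈ U, cs.IsRightDescent w i then
    primitive cs g (minRep cs U w) U
  else 0

lemma exists_primitive_eq (g : W → Finset B → k) (w : W) : ∃ b, ¬ cs.IsRightDescent w b ∧
    primitive cs g w = inherited cs g w + cone b (g w - koszulD (inherited cs g w)) :=
  ⟨_, (exists_not_isRightDescent cs w).choose_spec, by rw [primitive]; rfl⟩

lemma koszulD_primitive {g : W → Finset B → k} {w : W} (hg : koszulD (g w) = 0) :
    koszulD (primitive cs g w) = g w := by
  obtain ⟨b, -, hprim⟩ := exists_primitive_eq cs g w
  rw [hprim, map_add, koszulD_cone (by rw [map_sub, hg, koszulD_koszulD, sub_zero]),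
    add_sub_cancel]

lemma primitive_mem_homogeneous {g : W → Finset B → k} {c : ℕ}
    (hg : ∀ w, g w ∈ homogeneous k B c) (w : W) :
    primitive cs g w ∈ homogeneous k B (c + 1) := by
  induction hn : cs.length w using Nat.strong_induction_on generalizing w with
  | _ n ih =>
    obtain ⟨b, -, hprim⟩ := exists_primitive_eq cs g w
    have inherited_mem : inherited cs g w ∈ homogeneous k B (c + 1) := fun U hU => by
      rw [inherited]
      split_ifs with h
      · obtain ⟨i, hi, hd⟩ := h
        exact ih _ (hn ▸ length_minRep_lt cs hi hd) _ rfl U hU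
      · rfl
    rw [hprim]
    exact add_mem inherited_mem
      (cone_mem_homogeneous (sub_mem (hg w) (koszulD_mem_homogeneous inherited_mem)) b)

lemma primitive_minRep {g : W → Finset B → k} (hg : IsParabolicInvariant cs g)
    (hclosed : ∀ w, koszulD (g w) = 0) (w : W) (U : Finset B) :
    primitive cs g (minRep cs U w) U = primitive cs g w U := by
  induction hn : cs.length w using Nat.strong_induction_on generalizing w U with
  | _ n ih =>
    by_cases hU : ∃ i ∈ U, cs.IsRightDescent w i
    swap
    · rw [minRep_eq_self cs fun i hi hd => hU ⟨i, hi, hd⟩]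
    obtain ⟨b, hb, hprim⟩ := exists_primitive_eq cs g w
    have koszulD_inherited {V : Finset B} (hV : ∃ i ∈ V, cs.IsRightDescent w i) :
        koszulD (inherited cs g w) V = g w V := by
      obtain ⟨i, hi, hd⟩ := hV
      have hlt : cs.length (minRep cs V w) < n := hn ▸ length_minRep_lt cs hi hd
      rw [← hg.apply_minRep cs, ← koszulD_primitive cs (hclosed _), koszulD_apply, koszulD_apply]
      refine Finset.sum_congr rfl fun s _ => ?_
      rw [inherited, if_pos ⟨i, Finset.mem_insert_of_mem hi, hd⟩,
        ← ih _ hlt _ (insert s V) rfl,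
        minRep_minRep cs (Finset.coe_subset.2 (Finset.subset_insert s V))]
    have cone_eq_zero : cone b (g w - koszulD (inherited cs g w)) U = 0 := by
      obtain ⟨i, hi, hd⟩ := hU
      by_cases hbU : b ∈ U
      · rw [← Finset.insert_erase hbU, cone_insert (U.notMem_erase b), Pi.sub_apply,
          koszulD_inherited ⟨i, Finset.mem_erase.2 ⟨fun h : i = b => hb (h ▸ hd), hi⟩, hd⟩,
          sub_self, mul_zero]
      · exact cone_of_notMem hbU _
    rw [hprim, Pi.add_apply, cone_eq_zero, add_zero, inherited, if_pos hU]

lemma isParabolicInvariant_primitive {g : W → Finset B → k} (hg : IsParabolicInvariant cs g)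
    (hclosed : ∀ w, koszulD (g w) = 0) : IsParabolicInvariant cs (primitive cs g) :=
  fun w T u hu => by
    rw [← primitive_minRep cs hg hclosed, minRep_mul_of_mem cs w hu, primitive_minRep cs hg hclosed]

end Contraction

section GroupCohomology

open CategoryTheory groupCohomology

variable {k G : Type u} [CommRing k] [Group G]

/-- The map induced on the cohomology of `G` by a morphism of coefficients. -/
noncomputable abbrev cohomologyMap {A B : Rep.{u} k G} (f : A ⟶ B) (i : ℕ) :
    groupCohomology A i →ₗ[k] groupCohomology B i :=
  (groupCohomology.map (MonoidHom.id G) f i).hom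

lemma cohomologyMap_comp_apply {A B C : Rep.{u} k G} (f : A ⟶ B) (g : B ⟶ C) (i : ℕ)
    (x : groupCohomology A i) :
    cohomologyMap (f ≫ g) i x = cohomologyMap g i (cohomologyMap f i x) :=
  congr($(map_id_comp f g i) x)

lemma cohomologyMap_bijective {A B : Rep.{u} k G} {f : A ⟶ B} (hf : Function.Bijective f.hom)
    (i : ℕ) : Function.Bijective (cohomologyMap f i) := by
  have : Mono f := (Rep.mono_iff_injective f).2 hf.1
  have : Epi f := (Rep.epi_iff_surjective f).2 hf.2
  have : IsIso f := isIso_of_mono_of_epi f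
  exact (ConcreteCategory.isIso_iff_bijective ((functor k G i).map f)).1 inferInstance

lemma iCocycles_injective (A : Rep.{u} k G) (i : ℕ) : Function.Injective (iCocycles A i) :=
  (ModuleCat.mono_iff_injective (iCocycles A i)).1 inferInstance

lemma cohomologyMap_eq_smul {A : Rep.{u} k G} {f : A ⟶ A} {c : k} (hf : ∀ v, f.hom v = c • v)
    (i : ℕ) (x : groupCohomology A i) : cohomologyMap f i x = c • x := by
  induction x using groupCohomology_induction_on with
  | h x =>
    have cocyclesMap_eq : cocyclesMap (MonoidHom.id G) f i x = c • x := by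
      apply iCocycles_injective A i
      refine congr($(HomologicalComplex.cyclesMap_i (cochainsMap (MonoidHom.id G) f) i) x).trans ?_
      ext g
      simp [cochainsMap_id_f_hom_eq_compLeft, hf]
    refine congr($(groupCohomology.π_map (MonoidHom.id G) f i) x).trans ?_
    exact (congrArg (π A i) cocyclesMap_eq).trans (map_smul _ _ _)

lemma exists_cocyclesMk_eq {A : Rep.{u} k G} {i : ℕ} (x : groupCohomology A i) :
    ∃ (z : (Fin i → G) → A) (hz : inhomogeneousCochains.d A i z = 0),
      π A i (cocyclesMk z hz) = x := by
  induction x using groupCohomology_induction_on with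
  | h x =>
    have d_eq_zero : inhomogeneousCochains.d A i (iCocycles A i x) = 0 := by
      simpa [inhomogeneousCochains.d_def] using
        congr($((inhomogeneousCochains A).iCycles_d i (i + 1)) x)
    exact ⟨_, d_eq_zero, congrArg _ (iCocycles_injective A i (iCocycles_mk _ d_eq_zero))⟩

lemma π_cocyclesMk_eq_zero_iff {A : Rep.{u} k G} {i : ℕ} {z : (Fin (i + 1) → G) → A}
    (hz : inhomogeneousCochains.d A (i + 1) z = 0) : π A (i + 1) (cocyclesMk z hz) = 0 ↔
      ∃ b : (Fin i → G) → A, inhomogeneousCochains.d A i b = z := by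
  let K := inhomogeneousCochains A
  have exact_toCycles : (ShortComplex.mk (K.toCycles i (i + 1)) (K.homologyπ (i + 1))
      (K.toCycles_comp_homologyπ i (i + 1))).Exact :=
    ShortComplex.exact_of_g_is_cokernel _ (K.homologyIsCokernel i (i + 1) (by simp))
  have iCocycles_toCocycles (b : (Fin i → G) → A) :
      iCocycles A (i + 1) (toCocycles A i (i + 1) b) = inhomogeneousCochains.d A i b := by
    rw [← inhomogeneousCochains.d_def]
    exact congr($(K.toCycles_i i (i + 1)) b)
  constructor
  · intro h
    obtain ⟨b, hb⟩ := (ShortComplex.moduleCat_exact_iff _).1 exact_toCycles _ h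
    exact ⟨b, by rw [← iCocycles_toCocycles, ← iCocycles_mk z hz]; exact congrArg _ hb⟩
  · rintro ⟨b, hb⟩
    have toCocycles_eq : toCocycles A i (i + 1) b = cocyclesMk z hz :=
      iCocycles_injective A (i + 1) <| by rw [iCocycles_toCocycles, iCocycles_mk, hb]
    rw [← toCocycles_eq]
    exact congr($(K.toCycles_comp_homologyπ i (i + 1)) b)

lemma exists_exact_connecting {A B C : Rep.{u} k G} {f : A ⟶ B} {g : B ⟶ C}
    (hf : Function.Injective f.hom) (hg : Function.Surjective g.hom)
    (hfg : Function.Exact f.hom g.hom) (i : ℕ) :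
    ∃ D : groupCohomology C i →ₗ[k] groupCohomology A (i + 1),
      Function.Exact (cohomologyMap g i) D ∧ Function.Exact D (cohomologyMap f (i + 1)) := by
  let X : ShortComplex (Rep k G) := ShortComplex.mk f g (by ext a; exact hfg.apply_apply_eq_zero a)
  have exact_map : (X.map (forget₂ (Rep k G) (ModuleCat k))).Exact :=
    (ShortComplex.moduleCat_exact_iff _).2 fun b hb => (hfg b).1 hb
  have hX : X.ShortExact :=
    { exact := (X.exact_map_iff_of_faithful (forget₂ (Rep k G) (ModuleCat k))).1 exact_map
      mono_f := (Rep.mono_iff_injective f).2 hf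
      epi_g := (Rep.epi_iff_surjective g).2 hg }
  exact ⟨(groupCohomology.δ hX i (i + 1) rfl).hom,
    (ShortComplex.ShortExact.moduleCat_exact_iff_function_exact _).1
      (mapShortComplex₃_exact hX (i := i) rfl),
    (ShortComplex.ShortExact.moduleCat_exact_iff_function_exact _).1
      (mapShortComplex₁_exact hX (i := i) rfl)⟩

lemma exists_exact_connecting_invariants {A B C : Rep.{u} k G} {f : A ⟶ B} {g : B ⟶ C}
    (hf : Function.Injective f.hom) (hg : Function.Surjective g.hom)
    (hfg : Function.Exact f.hom g.hom) :
    ∃ D : C.ρ.invariants →ₗ[k] groupCohomology A 1,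
      Function.Exact ((Rep.invariantsFunctor k G).map g).hom D ∧
      Function.Exact D (cohomologyMap f 1) := by
  obtain ⟨D, exact_left, exact_right⟩ := exists_exact_connecting hf hg hfg 0
  refine ⟨D ∘ₗ (H0Iso C).toLinearEquiv.symm.toLinearMap, ?_, ?_⟩
  · refine Function.Exact.of_ladder_linearEquiv_of_exact (e₁ := (H0Iso B).toLinearEquiv)
      (e₂ := (H0Iso C).toLinearEquiv) (e₃ := LinearEquiv.refl k _) ?_ ?_ exact_left
    · exact congr(ModuleCat.Hom.hom $(map_id_comp_H0Iso_hom g)).symm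
    · exact LinearMap.ext fun x => congrArg D ((H0Iso C).toLinearEquiv.symm_apply_apply x)
  · refine Function.Exact.of_ladder_linearEquiv_of_exact (e₁ := (H0Iso C).toLinearEquiv)
      (e₂ := LinearEquiv.refl k _) (e₃ := LinearEquiv.refl k _) ?_ rfl exact_right
    exact LinearMap.ext fun x => congrArg D ((H0Iso C).toLinearEquiv.symm_apply_apply x)

end GroupCohomology

section TrivialCoefficients

open groupCohomology

variable {R S G : Type u} [CommRing R] [CommRing S] [Group G]

lemma d_trivial_comp (φ : R →+* S) {i : ℕ} (z : (Fin i → G) → R) :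
    inhomogeneousCochains.d (Rep.trivial S G S) i (φ ∘ z) =
      φ ∘ inhomogeneousCochains.d (Rep.trivial R G R) i z := by
  ext g
  rw [Function.comp_apply, inhomogeneousCochains.d_hom_apply, inhomogeneousCochains.d_hom_apply]
  refine .trans ?_ (map_add φ (z fun j => g j.succ) _).symm
  simp [map_sum]

lemma exists_smul_eq_of_subsingleton {φ : R →+* S} (hφ : Function.Surjective φ) {a : R}
    (ha : ∀ r, a * r = 0 → r = 0) (hker : ∀ r, φ r = 0 → a ∣ r) {i : ℕ}
    (hS : Subsingleton (groupCohomology (Rep.trivial S G S) (i + 1)))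
    (x : groupCohomology (Rep.trivial R G R) (i + 1)) : ∃ y, a • y = x := by
  let dR (i : ℕ) := (inhomogeneousCochains.d (Rep.trivial R G R) i).hom
  obtain ⟨z, hz, rfl⟩ := exists_cocyclesMk_eq x
  have hφz : inhomogeneousCochains.d (Rep.trivial S G S) (i + 1) (φ ∘ z) = 0 := by
    rw [d_trivial_comp, hz]
    exact funext fun _ => map_zero φ
  obtain ⟨b', hb'⟩ := (π_cocyclesMk_eq_zero_iff hφz).1 (Subsingleton.elim _ _)
  obtain ⟨b, rfl⟩ := hφ.comp_left b'
  have exists_quotient (g : Fin (i + 1) → G) : ∃ w : R, z g - dR i b g = a * w :=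
    hker _ <| by
      rw [map_sub, sub_eq_zero]
      exact congrFun (hb'.symm.trans (d_trivial_comp φ b)) g
  choose w hw using exists_quotient
  have z_eq : z = dR i b + a • w := funext fun g => sub_eq_iff_eq_add'.1 (hw g)
  have dR_dR : dR (i + 1) (dR i b) = 0 :=
    congr($(inhomogeneousCochains.d_comp_d i (Rep.trivial R G R)) b)
  have dR_w : dR (i + 1) w = 0 := by
    have smul_dR_w : a • dR (i + 1) w = 0 := by
      have dR_z : dR (i + 1) z = 0 := hz
      rwa [z_eq, map_add, map_smul, dR_dR, zero_add] at dR_z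
    exact funext fun g => ha _ (congrFun smul_dR_w g)
  refine ⟨π _ (i + 1) (cocyclesMk w dR_w), ?_⟩
  have cocyclesMk_eq : cocyclesMk z hz = cocyclesMk _ dR_dR + a • cocyclesMk w dR_w :=
    iCocycles_injective _ _ <| by
      rw [map_add, map_smul, iCocycles_mk, iCocycles_mk, iCocycles_mk]
      exact z_eq
  rw [cocyclesMk_eq, map_add, map_smul, (π_cocyclesMk_eq_zero_iff dR_dR).2 ⟨b, rfl⟩, zero_add]

end TrivialCoefficients

section FunctionRep

lemma contractNth_zero_cons {G : Type*} [Mul G] {i : ℕ} (h : G) (g : Fin (i + 1) → G) :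
    Fin.contractNth 0 (· * ·) (Fin.cons h g : Fin (i + 2) → G) =
      Fin.cons (h * g 0) (fun j => g j.succ) := by
  funext j
  cases j using Fin.cases <;> simp [Fin.contractNth]

lemma contractNth_succ_cons {G : Type*} [Mul G] {i : ℕ} (j : Fin (i + 1)) (h : G)
    (g : Fin (i + 1) → G) :
    Fin.contractNth j.succ (· * ·) (Fin.cons h g : Fin (i + 2) → G) =
      Fin.cons h (Fin.contractNth j (· * ·) g) := by
  funext l
  cases l using Fin.cases <;> simp [Fin.contractNth]

lemma exists_equivariant {W : Type*} [Group W] (H : Subgroup W) :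
    ∃ r : W → H, ∀ (h : H) (x : W), r (h • x) = h * r x := by
  obtain ⟨S, hS, -⟩ := H.exists_isComplement_right 1
  exact ⟨fun x => (hS.equiv x).1, fun h x => congrArg Prod.fst (hS.equiv_mul_left h x)⟩

variable (k G X V : Type*) [CommRing k] [Group G] [MulAction G X] [AddCommGroup V] [Module k V]

/-- The representation of `G` on the functions `X → V` by translation of the argument. -/
def functionRep : Representation k G (X → V) where
  toFun g := LinearMap.funLeft k V (g⁻¹ • ·)
  map_one' := by ext; simp
  map_mul' g g' := by ext; simp [mul_smul]

variable {k G X V}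

lemma functionRep_apply (g : G) (f : X → V) (x : X) :
    functionRep k G X V g f x = f (g⁻¹ • x) := rfl

end FunctionRep

section Acyclicity

open groupCohomology

variable {k G X V : Type u} [CommRing k] [Group G] [MulAction G X] [AddCommGroup V] [Module k V]

lemma groupCohomology_functionRep_eq_zero {r : X → G} (hr : ∀ (g : G) (x : X), r (g • x) = g * r x)
    {i : ℕ} (c : groupCohomology (Rep.of (functionRep k G X V)) (i + 1)) : c = 0 := by
  obtain ⟨z, hz, rfl⟩ := exists_cocyclesMk_eq c
  refine (π_cocyclesMk_eq_zero_iff hz).2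
    ⟨fun g x => z (Fin.cons (r x)⁻¹ g) ((r x)⁻¹ • x), ?_⟩
  ext g x
  have cocycle_eq := congrFun (congrFun hz (Fin.cons (r x)⁻¹ g)) ((r x)⁻¹ • x)
  have r_inv_smul : r ((g 0)⁻¹ • x) = (g 0)⁻¹ * r x := hr _ _
  rw [inhomogeneousCochains.d_hom_apply, Fin.sum_univ_succ] at cocycle_eq
  rw [inhomogeneousCochains.d_hom_apply]
  simp only [contractNth_succ_cons, contractNth_zero_cons, Pi.add_apply, Finset.sum_apply,
    Pi.smul_apply, functionRep_apply, Fin.cons_zero, Fin.cons_succ, inv_inv, smul_inv_smul,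
    r_inv_smul, mul_inv_rev, mul_smul] at cocycle_eq ⊢
  simp only [Fin.val_zero, Fin.val_succ, zero_add, pow_one, pow_succ (-1 : k) (_ + 1), mul_neg_one,
    neg_smul, one_smul, Finset.sum_neg_distrib, ← neg_add] at cocycle_eq
  exact (eq_of_sub_eq_zero ((sub_eq_add_neg _ _).trans cocycle_eq)).symm

end Acyclicity

section Isogeny

variable {k X Y Z : Type*} [Ring k] [AddCommGroup X] [Module k X] [AddCommGroup Y] [Module k Y]
  [AddCommGroup Z] [Module k Z] {N N' : ℕ}

/-- An `N`-isogeny is a linear map whose kernel and cokernel are killed by `N`. -/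
structure IsIsogeny (N : ℕ) (f : X →ₗ[k] Y) : Prop where
  nsmul_eq_zero (x : X) : f x = 0 → N • x = 0
  exists_eq_nsmul (y : Y) : ∃ x, f x = N • y

lemma isIsogeny_one_of_bijective {f : X →ₗ[k] Y} (hf : Function.Bijective f) :
    IsIsogeny 1 f where
  nsmul_eq_zero x hx := by rw [one_smul, (map_eq_zero_iff f hf.1).1 hx]
  exists_eq_nsmul y := by simpa using hf.2 y

lemma IsIsogeny.comp {f : X →ₗ[k] Y} {g : Y →ₗ[k] Z} (hg : IsIsogeny N' g) (hf : IsIsogeny N f) :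
    IsIsogeny (N' * N) (g ∘ₗ f) where
  nsmul_eq_zero x hx := by
    rw [mul_comm, mul_smul]
    apply hf.nsmul_eq_zero
    rw [map_nsmul, hg.nsmul_eq_zero _ hx]
  exists_eq_nsmul z := by
    obtain ⟨y, hy⟩ := hg.exists_eq_nsmul z
    obtain ⟨x, hx⟩ := hf.exists_eq_nsmul y
    exact ⟨x, by rw [LinearMap.comp_apply, hx, map_nsmul, hy, smul_smul, mul_comm]⟩

lemma IsIsogeny.nsmul_eq_zero_of_forall {f : X →ₗ[k] Y} (hf : IsIsogeny N f)
    (hX : ∀ x : X, N' • x = 0) (y : Y) : (N' * N) • y = 0 := by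
  obtain ⟨x, hx⟩ := hf.exists_eq_nsmul y
  rw [mul_smul, ← hx, ← map_nsmul, hX, map_zero]

lemma isIsogeny_of_exact {X' : Type*} [AddCommGroup X'] [Module k X'] {e : X →ₗ[k] Y}
    {D : Y →ₗ[k] Z} {f : Z →ₗ[k] X'}
    (heD : Function.Exact e D) (hDf : Function.Exact D f)
    (hX : ∀ x : X, N • x = 0) (hX' : ∀ x : X', N • x = 0) : IsIsogeny N D where
  nsmul_eq_zero y hy := by
    obtain ⟨x, rfl⟩ := (heD y).1 hy
    rw [← map_nsmul, hX, map_zero]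
  exists_eq_nsmul z := (hDf _).1 (by rw [map_nsmul, hX'])

lemma exists_isIsogeny_of_ker_eq {f : X →ₗ[k] Y} {g : X →ₗ[k] Z} (hg : Function.Surjective g)
    (hker : LinearMap.ker g = LinearMap.ker f) (hf : ∀ y, ∃ x, f x = N • y) :
    ∃ h : Z →ₗ[k] Y, IsIsogeny N h := by
  let e : (X ⧸ LinearMap.ker g) ≃ₗ[k] Z := g.quotKerEquivOfSurjective hg
  let h : Z →ₗ[k] Y := (LinearMap.ker g).liftQ f hker.le ∘ₗ e.symm.toLinearMap
  have h_apply (x : X) : h (g x) = f x :=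
    congrArg ((LinearMap.ker g).liftQ f hker.le) (e.symm_apply_apply (Submodule.Quotient.mk x))
  refine ⟨h, fun z hz => ?_, fun y => ?_⟩
  · obtain ⟨x, rfl⟩ := hg z
    rw [h_apply, ← LinearMap.mem_ker, ← hker, LinearMap.mem_ker] at hz
    rw [hz, smul_zero]
  · obtain ⟨x, hx⟩ := hf y
    exact ⟨g x, by rw [h_apply, hx]⟩

lemma IsIsogeny.bijective {K : Type*} [DivisionRing K] [CharZero K] [Module K X] [Module K Y]
    {f : X →ₗ[K] Y} (hf : IsIsogeny N f) (hN : N ≠ 0) : Function.Bijective f := by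
  have hN' : (N : K) ≠ 0 := Nat.cast_ne_zero.2 hN
  refine ⟨(injective_iff_map_eq_zero f).2 fun x hx => ?_, fun y => ?_⟩
  · refine (smul_eq_zero_iff_right hN').1 ?_
    rw [Nat.cast_smul_eq_nsmul, hf.nsmul_eq_zero x hx]
  · obtain ⟨x, hx⟩ := hf.exists_eq_nsmul y
    exact ⟨(N : K)⁻¹ • x, by
      rw [map_smul, hx, ← Nat.cast_smul_eq_nsmul K, inv_smul_smul₀ hN']⟩

lemma IsIsogeny.not_divisible [Module ℤ X] {φ : ℤ →ₗ[ℤ] X} (hφ : IsIsogeny N φ) (hN : N ≠ 0)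
    {p : ℕ} (hp : 1 < p) : ¬ ∀ x : X, ∃ y, p • y = x := by
  intro hdiv
  have pow_divisible (r : ℕ) (x : X) : ∃ y, p ^ r • y = x := by
    induction r generalizing x with
    | zero => exact ⟨x, by simp⟩
    | succ r ih =>
      obtain ⟨x, rfl⟩ := hdiv x
      obtain ⟨y, rfl⟩ := ih x
      exact ⟨y, by rw [smul_smul, pow_succ']⟩
  obtain ⟨y, hy⟩ := pow_divisible N (φ 1)
  obtain ⟨z, hz⟩ := hφ.exists_eq_nsmul y
  have map_sub_eq_zero : φ (N • 1 - p ^ N • z) = 0 := by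
    rw [map_sub, map_nsmul, map_nsmul, hz, ← hy, smul_comm, sub_self]
  have eq_pow_mul : (N : ℤ) = (p ^ N : ℕ) * z := by
    simpa [hN, sub_eq_zero] using hφ.nsmul_eq_zero _ map_sub_eq_zero
  have pow_dvd : p ^ N ∣ N := Int.natCast_dvd_natCast.1 ⟨z, eq_pow_mul⟩
  exact (Nat.lt_pow_self hp).not_ge (Nat.le_of_dvd (Nat.pos_of_ne_zero hN) pow_dvd)

end Isogeny

section Coefficients

open CategoryTheory groupCohomology

variable {k G V V' : Type u} [CommRing k] [Group G] [AddCommGroup V] [Module k V] [AddCommGroup V']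
  [Module k V']

/-- The morphism of representations obtained by restricting an equivariant linear map `φ` to
subrepresentations of its source and target. -/
def restrictHom {ρ : Representation k G V} {ρ' : Representation k G V'} (P : Subrepresentation ρ)
    (Q : Subrepresentation ρ') (φ : V →ₗ[k] V') (hφ : ∀ g v, φ (ρ g v) = ρ' g (φ v))
    (hPQ : ∀ v ∈ P.toSubmodule, φ v ∈ Q.toSubmodule) :
    Rep.of P.toRepresentation ⟶ Rep.of Q.toRepresentation :=
  Rep.ofHom (LinearMap.intertwiningMap_of_isIntertwiningMap _ _ (φ.restrict hPQ)
    fun g v => Subtype.ext (hφ g v))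

lemma groupCohomology_subrepresentation_nsmul_eq_zero {ρ : Representation k G V}
    (P : Subrepresentation ρ) {φ : V →ₗ[k] V} (hφ : ∀ g v, φ (ρ g v) = ρ g (φ v))
    (hφ_mem : ∀ v, φ v ∈ P.toSubmodule) {N : ℕ} (hφ_eq : ∀ v ∈ P.toSubmodule, φ v = N • v) {i : ℕ}
    (hρ : ∀ c : groupCohomology (Rep.of ρ) i, c = 0)
    (c : groupCohomology (Rep.of P.toRepresentation) i) : N • c = 0 := by
  let inclusion : Rep.of P.toRepresentation ⟶ Rep.of ρ :=
    Rep.ofHom (LinearMap.intertwiningMap_of_isIntertwiningMap _ _ P.toSubmodule.subtype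
      fun _ _ => rfl)
  let projection : Rep.of ρ ⟶ Rep.of P.toRepresentation :=
    Rep.ofHom (LinearMap.intertwiningMap_of_isIntertwiningMap _ _ (φ.codRestrict _ hφ_mem)
      fun g v => Subtype.ext (hφ g v))
  have comp_eq_smul (v : P.toSubmodule) : (inclusion ≫ projection).hom v = (N : k) • v :=
    Subtype.ext ((hφ_eq v.1 v.2).trans (Nat.cast_smul_eq_nsmul k N v.1).symm)
  rw [← Nat.cast_smul_eq_nsmul k, ← cohomologyMap_eq_smul comp_eq_smul, cohomologyMap_comp_apply,
    hρ (cohomologyMap inclusion i c), map_zero]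

end Coefficients

section Cochains

variable {B W : Type u} [Group W] {M : CoxeterMatrix B} (cs : CoxeterSystem M W)
  (k : Type u) [CommRing k] (H : Subgroup W) (c : ℕ)

/-- The cochains of the Coxeter complex on the faces `w W_T` of codimension `#T = c`, as a
representation of the subgroup `H` of `W`. -/
def cochains : Subrepresentation (functionRep k H W (Finset B → k)) where
  toSubmodule :=
    { carrier := {f | IsParabolicInvariant cs f ∧ ∀ w, f w ∈ homogeneous k B c}
      add_mem' := fun hf hg => ⟨fun w T u hu => congrArg₂ (· + ·) (hf.1 w T u hu) (hg.1 w T u hu),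
        fun w => add_mem (hf.2 w) (hg.2 w)⟩
      zero_mem' := ⟨fun _ _ _ _ => rfl, fun _ => zero_mem _⟩
      smul_mem' := fun a _ hf => ⟨fun w T u hu => congrArg (a * ·) (hf.1 w T u hu),
        fun w => Submodule.smul_mem _ a (hf.2 w)⟩ }
  apply_mem_toSubmodule h f hf :=
    ⟨fun _ T u hu => by
      rw [functionRep_apply, functionRep_apply, ← smul_mul_assoc, hf.1 _ T u hu],
      fun _ => hf.2 _⟩

variable [Fintype B] [LinearOrder B]

/-- The cochains which are closed under `koszulD`. -/
def closedCochains : Subrepresentation (functionRep k H W (Finset B → k)) where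
  toSubmodule := (cochains cs k H c).toSubmodule ⊓ (koszulD.compLeft W).ker
  apply_mem_toSubmodule h _ hf :=
    ⟨(cochains cs k H c).apply_mem_toSubmodule h hf.1, funext fun _ => congrFun hf.2 _⟩

variable {k H c} in
lemma mem_closedCochains {f : W → Finset B → k} : f ∈ (closedCochains cs k H c).toSubmodule ↔
    f ∈ (cochains cs k H c).toSubmodule ∧ ∀ w, koszulD (f w) = 0 :=
  and_congr_right fun _ => funext_iff

variable {k H c} in
lemma koszulD_mem_closedCochains {f : W → Finset B → k}
    (hf : f ∈ (cochains cs k H (c + 1)).toSubmodule) :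
    koszulD.compLeft W f ∈ (closedCochains cs k H c).toSubmodule :=
  (mem_closedCochains cs).2 ⟨⟨hf.1.koszulD, fun w => koszulD_mem_homogeneous (hf.2 w)⟩,
    fun w => koszulD_koszulD (f w)⟩

/-- The inclusion of the closed cochains into the cochains. -/
def closedInclusion : Rep.of (closedCochains cs k H c).toRepresentation ⟶
    Rep.of (cochains cs k H c).toRepresentation :=
  restrictHom _ _ LinearMap.id (fun _ _ => rfl) fun _ hf => hf.1

/-- The differential of the cochain complex of the Coxeter complex, with values in the closed
cochains. -/
def differential : Rep.of (cochains cs k H (c + 1)).toRepresentation ⟶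
    Rep.of (closedCochains cs k H c).toRepresentation :=
  restrictHom _ _ (koszulD.compLeft W) (fun _ _ => rfl) fun _ => koszulD_mem_closedCochains cs

lemma closedInclusion_injective : Function.Injective (closedInclusion cs k H c).hom :=
  fun _ _ h => Subtype.ext (congrArg Subtype.val h :)

lemma closedInclusion_zero_bijective : Function.Bijective (closedInclusion cs k H 0).hom :=
  ⟨closedInclusion_injective cs k H 0, fun f => ⟨⟨f.1, (mem_closedCochains cs).2
    ⟨f.2, fun w => koszulD_eq_zero_of_mem_homogeneous_zero (f.2.2 w)⟩⟩, rfl⟩⟩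

lemma exact_closedInclusion_differential :
    Function.Exact (closedInclusion cs k H (c + 1)).hom (differential cs k H c).hom := by
  intro f
  constructor
  · intro hf
    exact ⟨⟨f.1, f.2, congrArg Subtype.val hf⟩, rfl⟩
  · rintro ⟨f, rfl⟩
    exact Subtype.ext f.2.2

variable [Infinite W]

lemma differential_surjective : Function.Surjective (differential cs k H c).hom := by
  rintro ⟨g, hg⟩
  obtain ⟨⟨hg_inv, hg_hom⟩, hg_closed⟩ := (mem_closedCochains cs).1 hg
  exact ⟨⟨primitive cs g, isParabolicInvariant_primitive cs hg_inv hg_closed,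
      primitive_mem_homogeneous cs hg_hom⟩,
    Subtype.ext (funext fun w => koszulD_primitive cs (hg_closed w))⟩

end Cochains

section Transfer

variable {B W : Type*} [Group W] {M : CoxeterMatrix B} (cs : CoxeterSystem M W)
  {k : Type*} [CommRing k]

/-- The average of the right translates of `f` over the finite sets `s T` with weights `a T`. -/
def weightedAverage (s : Finset B → Finset W) (a : Finset B → k) :
    (W → Finset B → k) →ₗ[k] (W → Finset B → k) where
  toFun f w T := a T * ∑ u ∈ s T, f (w * u) T
  map_add' f g := by ext; simp [Finset.sum_add_distrib, mul_add]
  map_smul' r f := by ext; simp [← Finset.mul_sum, mul_left_comm]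

lemma weightedAverage_apply (s : Finset B → Finset W) (a : Finset B → k) (f : W → Finset B → k)
    (w : W) (T : Finset B) : weightedAverage s a f w T = a T * ∑ u ∈ s T, f (w * u) T := rfl

lemma weightedAverage_functionRep (s : Finset B → Finset W) (a : Finset B → k) (H : Subgroup W)
    (h : H) (f : W → Finset B → k) : weightedAverage s a (functionRep k H W (Finset B → k) h f) =
      functionRep k H W (Finset B → k) h (weightedAverage s a f) := by
  ext w T
  simp only [weightedAverage_apply, functionRep_apply, smul_mul_assoc]

variable {s : Finset B → Finset W} {a : Finset B → k}

lemma isParabolicInvariant_weightedAverage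
    (hs : ∀ T, a T ≠ 0 → ∀ u, u ∈ s T ↔ u ∈ cs.parabolic (T : Set B)) (f : W → Finset B → k) :
    IsParabolicInvariant cs (weightedAverage s a f) := fun w T u hu => by
  rw [weightedAverage_apply, weightedAverage_apply]
  by_cases hT : a T = 0
  · rw [hT, zero_mul, zero_mul]
  refine congrArg (a T * ·) (Finset.sum_equiv (Equiv.mulLeft u) (fun v => ?_) fun v _ => ?_)
  · rw [hs T hT, hs T hT, Equiv.coe_mulLeft, Subgroup.mul_mem_cancel_left _ hu]
  · rw [mul_assoc, Equiv.coe_mulLeft]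

lemma weightedAverage_of_isParabolicInvariant
    (hs : ∀ T, a T ≠ 0 → ∀ u, u ∈ s T ↔ u ∈ cs.parabolic (T : Set B)) {f : W → Finset B → k}
    (hf : IsParabolicInvariant cs f) (w : W) (T : Finset B) :
    weightedAverage s a f w T = a T * #(s T) * f w T := by
  rw [weightedAverage_apply]
  by_cases hT : a T = 0
  · rw [hT, zero_mul, zero_mul, zero_mul]
  rw [Finset.sum_congr rfl fun u hu => hf w T u ((hs T hT u).1 hu), Finset.sum_const,
    nsmul_eq_mul, mul_assoc]

lemma exists_finset_eq_parabolic [Fintype B]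
    (hpar : ∀ T : Set B, T ≠ Set.univ → Finite (cs.parabolic T))
    (T : Finset B) :
    ∃ s : Finset W, T ≠ Finset.univ → ∀ u, u ∈ s ↔ u ∈ cs.parabolic (T : Set B) := by
  by_cases hT : T = Finset.univ
  · exact ⟨∅, fun h => absurd hT h⟩
  · have : Finite (cs.parabolic (T : Set B)) := hpar T (by simpa using hT)
    exact ⟨(Set.toFinite (cs.parabolic (T : Set B) : Set W)).toFinset, fun _ u => by simp⟩

end Transfer

section Torsion

variable {B W : Type u} [Fintype B] [Group W] {M : CoxeterMatrix B} (cs : CoxeterSystem M W)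
  (k : Type u) [CommRing k] (H : Subgroup W)

lemma exists_weightedAverage_eq_nsmul
    (hpar : ∀ T : Set B, T ≠ Set.univ → Finite (cs.parabolic T)) :
    ∃ N ≠ 0, ∀ c < Fintype.card B, ∃ φ : (W → Finset B → k) →ₗ[k] (W → Finset B → k),
      (∀ h f, φ (functionRep k H W (Finset B → k) h f) = functionRep k H W (Finset B → k) h (φ f)) ∧
      (∀ f, φ f ∈ (cochains cs k H c).toSubmodule) ∧
      ∀ f ∈ (cochains cs k H c).toSubmodule, φ f = N • f := by
  classical
  choose s hs using fun T : Finset B => exists_finset_eq_parabolic cs hpar T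
  have card_ne_zero : ∀ T ∈ Finset.univ.erase Finset.univ, #(s T) ≠ 0 := fun T hT =>
    Finset.card_ne_zero_of_mem ((hs T (Finset.ne_of_mem_erase hT) 1).2 (one_mem _))
  refine ⟨∏ T ∈ Finset.univ.erase Finset.univ, #(s T), Finset.prod_ne_zero_iff.2 card_ne_zero,
    fun c hc => ?_⟩
  let a (T : Finset B) : k :=
    if #T = c then ∏ T' ∈ (Finset.univ.erase Finset.univ).erase T, (#(s T') : k) else 0
  have ne_univ {T : Finset B} (hT : #T = c) : T ≠ Finset.univ := by
    rintro rfl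
    exact hc.ne hT.symm
  have hs_of_ne_zero (T : Finset B) (hT : a T ≠ 0) : ∀ u, u ∈ s T ↔ u ∈ cs.parabolic (T : Set B) :=
    hs T (ne_univ (ite_ne_right_iff.1 hT).1)
  refine ⟨weightedAverage s a, weightedAverage_functionRep s a H, fun f =>
    ⟨isParabolicInvariant_weightedAverage cs hs_of_ne_zero f, fun w T hT => ?_⟩, fun f hf => ?_⟩
  · rw [weightedAverage_apply, show a T = 0 from if_neg hT, zero_mul]
  · ext w T
    rw [weightedAverage_of_isParabolicInvariant cs hs_of_ne_zero hf.1, Pi.smul_apply, Pi.smul_apply,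
      nsmul_eq_mul]
    by_cases hT : #T = c
    · rw [show a T = _ from if_pos hT, Nat.cast_prod,
        Finset.prod_erase_mul _ _ (by simpa using ne_univ hT)]
    · rw [hf.2 w T hT, mul_zero, mul_zero]

lemma exists_nsmul_groupCohomology_cochains_eq_zero
    (hpar : ∀ T : Set B, T ≠ Set.univ → Finite (cs.parabolic T)) :
    ∃ N ≠ 0, ∀ c < Fintype.card B, ∀ (i : ℕ)
      (x : groupCohomology (Rep.of (cochains cs k H c).toRepresentation) (i + 1)), N • x = 0 := by
  obtain ⟨N, hN, exists_average⟩ := exists_weightedAverage_eq_nsmul cs k H hpar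
  obtain ⟨r, hr⟩ := exists_equivariant H
  refine ⟨N, hN, fun c hc i => ?_⟩
  obtain ⟨φ, hφ, hφ_mem, hφ_eq⟩ := exists_average c hc
  exact groupCohomology_subrepresentation_nsmul_eq_zero _ hφ hφ_mem hφ_eq
    (groupCohomology_functionRep_eq_zero hr)

end Torsion

section Augmentation

variable {B W : Type u} [Fintype B] [LinearOrder B] [Group W] {M : CoxeterMatrix B}
  (cs : CoxeterSystem M W) (k : Type u) [CommRing k] (H : Subgroup W) {c : ℕ}

/-- The morphism identifying the trivial representation with the cochains on the coset `W` of `W_B`,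
the empty face, in which the augmented cochain complex starts. -/
def augmentation (hc : c = Fintype.card B) :
    Rep.trivial k H k ⟶ Rep.of (cochains cs k H c).toRepresentation :=
  Rep.ofHom (LinearMap.intertwiningMap_of_isIntertwiningMap _ _
    (LinearMap.codRestrict (cochains cs k H c).toSubmodule
      (LinearMap.pi fun _ => LinearMap.single k (fun _ => k) Finset.univ)
      fun a => ⟨fun _ _ _ _ => rfl, fun _ T hT => Pi.single_eq_of_ne
        (M := fun _ => k) (fun h : T = Finset.univ => hT (h ▸ hc.symm)) a⟩)
    fun _ _ => rfl)

lemma augmentation_apply (hc : c = Fintype.card B) (a : k) (w : W) :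
    ((augmentation cs k H hc).hom a).1 w = Pi.single Finset.univ a := rfl

lemma augmentation_bijective (hc : c = Fintype.card B) :
    Function.Bijective (augmentation cs k H hc).hom := by
  refine ⟨fun a a' h => Pi.single_injective (M := fun _ => k) Finset.univ
    (congrFun (congrArg Subtype.val h) 1 :),
    fun f => ⟨f.1 1 Finset.univ, Subtype.ext (funext₂ fun w T => ?_)⟩⟩
  rw [augmentation_apply]
  by_cases hT : T = Finset.univ
  · subst hT
    have w_mem : w ∈ cs.parabolic ((Finset.univ : Finset B) : Set B) := by
      rw [Finset.coe_univ, CoxeterSystem.parabolic, Set.image_univ,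
        cs.subgroup_closure_range_simple]
      trivial
    rw [Pi.single_eq_same, ← f.2.1 1 Finset.univ w w_mem, one_mul]
  · rw [Pi.single_eq_of_ne hT,
      f.2.2 w T fun h => hT ((Finset.card_eq_iff_eq_univ T).1 (h.trans hc))]

lemma differential_bijective [Infinite W] (hc : c + 1 = Fintype.card B) :
    Function.Bijective (differential cs k H c).hom :=
  ⟨(injective_iff_map_eq_zero (differential cs k H c).hom.toLinearMap).2 fun f hf =>
    Subtype.ext (funext fun w => eq_zero_of_koszulD_eq_zero hc (f.2.2 w)
      (congrFun (congrArg Subtype.val hf :) w)), differential_surjective cs k H c⟩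

end Augmentation

section DimensionShift

variable {B W : Type u} [Fintype B] [LinearOrder B] [Group W] [Infinite W] {M : CoxeterMatrix B}
  (cs : CoxeterSystem M W) (k : Type u) [CommRing k] (H : Subgroup W)

lemma exists_isIsogeny_closedCochains
    (hpar : ∀ T : Set B, T ≠ Set.univ → Finite (cs.parabolic T)) {c d : ℕ} (i : ℕ)
    (hcd : c + d < Fintype.card B) :
    ∃ N ≠ 0, ∃ f : groupCohomology (Rep.of (closedCochains cs k H c).toRepresentation) (i + 1) →ₗ[k]
      groupCohomology (Rep.of (closedCochains cs k H (c + d)).toRepresentation) (i + d + 1),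
      IsIsogeny N f := by
  obtain ⟨N, hN, torsion⟩ := exists_nsmul_groupCohomology_cochains_eq_zero cs k H hpar
  induction d with
  | zero => exact ⟨1, one_ne_zero, LinearMap.id, isIsogeny_one_of_bijective Function.bijective_id⟩
  | succ d ih =>
    obtain ⟨N', hN', f, hf⟩ := ih (by lia)
    obtain ⟨D, exact_left, exact_right⟩ := exists_exact_connecting
      (closedInclusion_injective cs k H (c + d + 1)) (differential_surjective cs k H (c + d))
      (exact_closedInclusion_differential cs k H (c + d)) (i + d + 1)
    have hD : IsIsogeny N D := isIsogeny_of_exact exact_left exact_right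
      (torsion (c + d + 1) hcd _) (torsion (c + d + 1) hcd _)
    exact ⟨N * N', mul_ne_zero hN hN', D ∘ₗ f, hD.comp hf⟩

lemma exists_isIsogeny_trivial
    (hpar : ∀ T : Set B, T ≠ Set.univ → Finite (cs.parabolic T)) {c d : ℕ} (i : ℕ)
    (hcd : c + d + 1 = Fintype.card B) :
    ∃ N ≠ 0, ∃ f : groupCohomology (Rep.of (closedCochains cs k H c).toRepresentation) (i + 1) →ₗ[k]
      groupCohomology (Rep.trivial k H k) (i + d + 1), IsIsogeny N f := by
  obtain ⟨N, hN, f, hf⟩ := exists_isIsogeny_closedCochains cs k H hpar i (by lia : c + d < _)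
  let e := (LinearEquiv.ofBijective _ (cohomologyMap_bijective (augmentation_bijective cs k H hcd)
    (i + d + 1))).trans (LinearEquiv.ofBijective _
      (cohomologyMap_bijective (differential_bijective cs k H hcd) (i + d + 1)))
  exact ⟨1 * N, mul_ne_zero one_ne_zero hN, e.symm.toLinearMap ∘ₗ f,
    (isIsogeny_one_of_bijective e.symm.bijective).comp hf⟩

end DimensionShift

section SignKernel

variable {B W : Type*} [Group W] {M : CoxeterMatrix B} (cs : CoxeterSystem M W)

lemma signHom_simple (b : B) : cs.signHom (cs.simple b) = -1 :=
  cs.lift_apply_simple _ b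

variable {cs} {k : Type*} [CommRing k] {f : W → Finset B → k}

lemma apply_eq_of_signHom_eq
    (hf : ∀ h : cs.signHom.ker, functionRep k cs.signHom.ker W (Finset B → k) h f = f) {w w' : W}
    (hw : cs.signHom w = cs.signHom w') : f w = f w' := by
  have mem_ker : w * w'⁻¹ ∈ cs.signHom.ker := by
    rw [MonoidHom.mem_ker, map_mul, map_inv, hw, mul_inv_cancel]
  rw [← congrFun (hf ⟨_, mem_ker⟩) w, functionRep_apply]
  simp [Subgroup.smul_def]

lemma apply_eq_apply_one_of_nonempty
    (hf : ∀ h : cs.signHom.ker, functionRep k cs.signHom.ker W (Finset B → k) h f = f)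
    (hf_inv : IsParabolicInvariant cs f) (w : W) {T : Finset B} (hT : T.Nonempty) :
    f w T = f 1 T := by
  obtain ⟨b, hb⟩ := hT
  obtain hw | hw := Int.units_eq_one_or (cs.signHom w)
  · rw [apply_eq_of_signHom_eq hf (hw.trans (map_one _).symm)]
  · rw [← hf_inv w T (cs.simple b) (simple_mem_parabolic cs (Finset.mem_coe.2 hb)),
      apply_eq_of_signHom_eq hf (w' := 1) (by rw [map_mul, hw, signHom_simple, map_one]; rfl)]

end SignKernel

section LowDegree

variable {B W : Type u} [Fintype B] [LinearOrder B] [Group W] {M : CoxeterMatrix B}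
  (cs : CoxeterSystem M W) {k : Type u} [CommRing k] {c : ℕ}

lemma mem_range_differential_of_constant [Nonempty B] {H : Subgroup W}
    {f : (Rep.of (closedCochains cs k H c).toRepresentation).ρ.invariants}
    (hf : ∀ w, f.1.1 w = f.1.1 1) :
    f ∈ LinearMap.range ((Rep.invariantsFunctor k H).map (differential cs k H c)).hom := by
  obtain ⟨⟨f, hf_mem⟩, hf_inv⟩ := f
  obtain ⟨⟨-, hf_hom⟩, hf_closed⟩ := (mem_closedCochains cs).1 hf_mem
  let b := Classical.arbitrary B
  exact ⟨⟨⟨fun _ => cone b (f 1), fun _ _ _ _ => rfl, fun _ => cone_mem_homogeneous (hf_hom 1) b⟩,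
    fun _ => rfl⟩, Subtype.ext (Subtype.ext (funext fun w =>
      (koszulD_cone (hf_closed 1)).trans (hf w).symm))⟩

variable (k) in
/-- The linear functional measuring how an invariant closed cochain on the chambers fails to be
constant. -/
def chamberDifference (b : B) :
    (Rep.of (closedCochains cs k cs.signHom.ker 0).toRepresentation).ρ.invariants →ₗ[k] k where
  toFun f := f.1.1 1 ∅ - f.1.1 (cs.simple b) ∅
  map_add' _ _ := add_sub_add_comm _ _ _ _
  map_smul' a _ := (mul_sub a _ _).symm

lemma chamberDifference_surjective (b : B) : Function.Surjective (chamberDifference cs k b) := by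
  intro a
  let f : W → Finset B → k := fun w T => if T = ∅ ∧ cs.signHom w = 1 then a else 0
  have f_invariant : IsParabolicInvariant cs f := fun w T u hu => by
    obtain rfl | hT := eq_or_ne T ∅
    · rw [show u = 1 by simpa [CoxeterSystem.parabolic] using hu, mul_one]
    · simp [f, hT]
  have f_homogeneous (w : W) : f w ∈ homogeneous k B 0 := fun T hT =>
    if_neg fun h => hT (Finset.card_eq_zero.2 h.1)
  have f_closed (w : W) : koszulD (f w) = 0 :=
    koszulD_eq_zero_of_mem_homogeneous_zero (f_homogeneous w)
  have f_fixed (h : cs.signHom.ker) :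
      functionRep k cs.signHom.ker W (Finset B → k) h f = f := by
    have sign_h : cs.signHom h = 1 := h.2
    ext w T
    simp [functionRep_apply, f, Subgroup.smul_def, sign_h]
  refine ⟨⟨⟨f, (mem_closedCochains cs).2 ⟨⟨f_invariant, f_homogeneous⟩, f_closed⟩⟩,
    fun h => Subtype.ext (f_fixed h)⟩, ?_⟩
  change f 1 ∅ - f (cs.simple b) ∅ = a
  simp [f, signHom_simple]

lemma ker_chamberDifference (b : B) : LinearMap.ker (chamberDifference cs k b) = LinearMap.range
    ((Rep.invariantsFunctor k cs.signHom.ker).map (differential cs k cs.signHom.ker 0)).hom := by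
  ext f
  have f_fixed (h : cs.signHom.ker) :
      functionRep k cs.signHom.ker W (Finset B → k) h f.1.1 = f.1.1 := congrArg Subtype.val (f.2 h)
  constructor
  · intro hf
    have : Nonempty B := ⟨b⟩
    refine mem_range_differential_of_constant cs fun w => funext fun T => ?_
    obtain rfl | hT := T.eq_empty_or_nonempty
    · obtain hw | hw := Int.units_eq_one_or (cs.signHom w)
      · rw [apply_eq_of_signHom_eq f_fixed (hw.trans (map_one _).symm)]
      · rw [apply_eq_of_signHom_eq f_fixed (hw.trans (signHom_simple cs b).symm)]
        exact (sub_eq_zero.1 hf).symm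
    · exact apply_eq_apply_one_of_nonempty f_fixed f.1.2.1.1 w hT
  · rintro ⟨e, rfl⟩
    have e_fixed (h : cs.signHom.ker) :
        functionRep k cs.signHom.ker W (Finset B → k) h e.1.1 = e.1.1 :=
      congrArg Subtype.val (e.2 h)
    change koszulD (e.1.1 1) ∅ - koszulD (e.1.1 (cs.simple b)) ∅ = 0
    rw [koszulD_apply, koszulD_apply, sub_eq_zero]
    refine Finset.sum_congr rfl fun s _ => ?_
    rw [apply_eq_apply_one_of_nonempty e_fixed e.1.2.1 (cs.simple b) (Finset.insert_nonempty _ _)]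

lemma range_differential_succ_eq_top [Nonempty B] (c : ℕ) : LinearMap.range
    ((Rep.invariantsFunctor k cs.signHom.ker).map (differential cs k cs.signHom.ker (c + 1))).hom =
      ⊤ := by
  refine eq_top_iff.2 fun f _ => mem_range_differential_of_constant cs fun w => funext fun T => ?_
  obtain rfl | hT := T.eq_empty_or_nonempty
  · rw [f.1.2.1.2 w ∅ (by simp), f.1.2.1.2 1 ∅ (by simp)]
  · exact apply_eq_apply_one_of_nonempty (fun h => congrArg Subtype.val (f.2 h)) f.1.2.1.1 w hT

end LowDegree

section Cohomology

variable {B W : Type u} [Fintype B] [LinearOrder B] [Group W] [Infinite W] {M : CoxeterMatrix B}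
  (cs : CoxeterSystem M W) (k : Type u) [CommRing k]

lemma exists_connecting_invariants (H : Subgroup W)
    (hpar : ∀ T : Set B, T ≠ Set.univ → Finite (cs.parabolic T)) {c : ℕ}
    (hc : c + 1 < Fintype.card B) :
    ∃ N ≠ 0, ∃ D : (Rep.of (closedCochains cs k H c).toRepresentation).ρ.invariants →ₗ[k]
        groupCohomology (Rep.of (closedCochains cs k H (c + 1)).toRepresentation) 1,
      LinearMap.ker D =
        LinearMap.range ((Rep.invariantsFunctor k H).map (differential cs k H c)).hom ∧
      ∀ y, ∃ x, D x = N • y := by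
  obtain ⟨N, hN, torsion⟩ := exists_nsmul_groupCohomology_cochains_eq_zero cs k H hpar
  obtain ⟨D, exact_left, exact_right⟩ := exists_exact_connecting_invariants
    (closedInclusion_injective cs k H (c + 1)) (differential_surjective cs k H c)
    (exact_closedInclusion_differential cs k H c)
  exact ⟨N, hN, D, exact_left.linearMap_ker_eq,
    fun y => (exact_right _).1 (by rw [map_nsmul, torsion _ hc])⟩

lemma exists_nsmul_groupCohomology_eq_zero_of_card_le (H : Subgroup W)
    (hpar : ∀ T : Set B, T ≠ Set.univ → Finite (cs.parabolic T)) {i : ℕ}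
    (hi : Fintype.card B ≤ i) :
    ∃ N ≠ 0, ∀ x : groupCohomology (Rep.trivial k H k) i, N • x = 0 := by
  obtain ⟨d, hd⟩ : ∃ d, 0 + d + 1 = Fintype.card B :=
    ⟨Fintype.card B - 1, by have := two_le_card cs; lia⟩
  obtain ⟨j, rfl⟩ : ∃ j, i = j + d + 1 := ⟨i - Fintype.card B, by lia⟩
  obtain ⟨N, hN, torsion⟩ := exists_nsmul_groupCohomology_cochains_eq_zero cs k H hpar
  obtain ⟨N', hN', f, hf⟩ := exists_isIsogeny_trivial cs k H hpar j hd
  refine ⟨N * N', mul_ne_zero hN hN', hf.nsmul_eq_zero_of_forall fun x => ?_⟩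
  apply (cohomologyMap_bijective (closedInclusion_zero_bijective cs k H) (j + 1)).1
  rw [map_nsmul, torsion 0 (by lia), map_zero]

lemma exists_nsmul_groupCohomology_ker_signHom_eq_zero
    (hpar : ∀ T : Set B, T ≠ Set.univ → Finite (cs.parabolic T)) {i : ℕ} (hi : i ≠ 0)
    (hi' : i ≠ Fintype.card B - 1) :
    ∃ N ≠ 0, ∀ x : groupCohomology (Rep.trivial k cs.signHom.ker k) i, N • x = 0 := by
  obtain hi_le | hi_lt := le_or_gt (Fintype.card B) i
  · exact exists_nsmul_groupCohomology_eq_zero_of_card_le cs k _ hpar hi_le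
  obtain ⟨d, rfl⟩ : ∃ d, i = 0 + d + 1 := ⟨i - 1, by lia⟩
  obtain ⟨c, hc⟩ : ∃ c, c + 1 + 1 + d + 1 = Fintype.card B := ⟨Fintype.card B - d - 3, by lia⟩
  have : Nonempty B := Fintype.card_pos_iff.1 (by lia)
  obtain ⟨N, hN, D, ker_D, coker_D⟩ :=
    exists_connecting_invariants cs k cs.signHom.ker hpar (by lia : c + 1 + 1 < _)
  have D_eq_zero : D = 0 :=
    LinearMap.ker_eq_top.1 (ker_D.trans (range_differential_succ_eq_top cs c))
  obtain ⟨N', hN', f, hf⟩ := exists_isIsogeny_trivial cs k cs.signHom.ker hpar 0 hc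
  refine ⟨N * N', mul_ne_zero hN hN', hf.nsmul_eq_zero_of_forall fun y => ?_⟩
  obtain ⟨x, hx⟩ := coker_D y
  rw [← hx, D_eq_zero, LinearMap.zero_apply]

lemma exists_isIsogeny_groupCohomology_ker_signHom
    (hpar : ∀ T : Set B, T ≠ Set.univ → Finite (cs.parabolic T)) :
    ∃ N ≠ 0, ∃ f : k →ₗ[k] groupCohomology (Rep.trivial k cs.signHom.ker k) (Fintype.card B - 1),
      IsIsogeny N f := by
  obtain ⟨d, hd⟩ : ∃ d, 1 + d + 1 = Fintype.card B :=
    ⟨Fintype.card B - 2, by have := two_le_card cs; lia⟩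
  obtain ⟨b⟩ : Nonempty B := Fintype.card_pos_iff.1 (by lia)
  obtain ⟨N, hN, D, ker_D, coker_D⟩ :=
    exists_connecting_invariants cs k cs.signHom.ker hpar (by lia : 0 + 1 < _)
  obtain ⟨g, hg⟩ := exists_isIsogeny_of_ker_eq (chamberDifference_surjective cs b)
    ((ker_chamberDifference cs b).trans ker_D.symm) coker_D
  obtain ⟨N', hN', f, hf⟩ := exists_isIsogeny_trivial cs k cs.signHom.ker hpar 0 hd
  rw [show Fintype.card B - 1 = 0 + d + 1 by lia]
  exact ⟨N' * N, mul_ne_zero hN' hN, f ∘ₗ g, hf.comp hg⟩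

lemma not_subsingleton_groupCohomology_ker_signHom_zmod {B W : Type} [Fintype B] [LinearOrder B]
    [Group W] [Infinite W] {M : CoxeterMatrix B} (cs : CoxeterSystem M W)
    (hpar : ∀ T : Set B, T ≠ Set.univ → Finite (cs.parabolic T)) {m : ℕ} (hm : 1 < m) :
    ¬ Subsingleton (groupCohomology
      (Rep.trivial (ZMod m) cs.signHom.ker (ZMod m)) (Fintype.card B - 1)) := by
  intro hS
  obtain ⟨i, hi⟩ : ∃ i, Fintype.card B - 1 = i + 1 :=
    ⟨Fintype.card B - 2, by have := two_le_card cs; lia⟩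
  have divisible : ∀ x : groupCohomology (Rep.trivial ℤ cs.signHom.ker ℤ) (Fintype.card B - 1),
      ∃ y, m • y = x := by
    rw [hi] at hS ⊢
    intro x
    obtain ⟨y, hy⟩ := exists_smul_eq_of_subsingleton (φ := Int.castRingHom (ZMod m))
      (ZMod.ringHom_surjective _) (a := (m : ℤ))
      (fun r hr => (mul_eq_zero.1 hr).resolve_left (by lia))
      (fun r hr => (ZMod.intCast_zmod_eq_zero_iff_dvd r m).1 hr) hS x
    exact ⟨y, (Nat.cast_smul_eq_nsmul ℤ m y).symm.trans hy⟩
  obtain ⟨N, hN, f, hf⟩ := exists_isIsogeny_groupCohomology_ker_signHom cs ℤ hpar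
  exact hf.not_divisible hN hm divisible

end Cohomology

end CoxeterComplex

theorem rational_cohomology_of_alternating_subgroup_sphere_general {B W : Type} [Fintype B]
    [Group W] [Infinite W] {M : CoxeterMatrix B} (cs : CoxeterSystem M W)
    (K : Type) [Field K] [CharZero K] (hpar : ∀ T : Set B, T ≠ Set.univ → Finite (cs.parabolic T)) :
    (∀ i : ℕ, (i = 0 ∨ i = Fintype.card B - 1) →
        Nonempty (groupCohomology (Rep.trivial K cs.signHom.ker K) i ≃ₗ[K] K)) ∧
    (∀ i : ℕ, ¬ (i = 0 ∨ i = Fintype.card B - 1) →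
        Subsingleton (groupCohomology (Rep.trivial K cs.signHom.ker K) i)) ∧
    (∀ m : ℕ, 1 < m →
        ¬ Subsingleton (groupCohomology
          (Rep.trivial (ZMod m) cs.signHom.ker (ZMod m)) (Fintype.card B - 1))) := by
  let : LinearOrder B := LinearOrder.lift' (Fintype.equivFin B) (Fintype.equivFin B).injective
  refine ⟨?_, fun i hi => ?_, fun m hm =>
    CoxeterComplex.not_subsingleton_groupCohomology_ker_signHom_zmod cs hpar hm⟩
  · rintro i (rfl | rfl)
    · exact ⟨(groupCohomology.H0IsoOfIsTrivial (Rep.trivial K _ K)).toLinearEquiv⟩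
    · obtain ⟨N, hN, f, hf⟩ :=
        CoxeterComplex.exists_isIsogeny_groupCohomology_ker_signHom cs K hpar
      exact ⟨(LinearEquiv.ofBijective f (hf.bijective hN)).symm⟩
  · obtain ⟨hi_ne_zero, hi_ne_top⟩ := not_or.1 hi
    obtain ⟨N, hN, torsion⟩ := CoxeterComplex.exists_nsmul_groupCohomology_ker_signHom_eq_zero
      cs K hpar hi_ne_zero hi_ne_top
    refine subsingleton_of_forall_eq 0 fun x => ?_
    rw [← smul_eq_zero_iff_right (Nat.cast_ne_zero.2 hN : (N : K) ≠ 0), Nat.cast_smul_eq_nsmul,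
      torsion x]

/-- Let `W` be an infinite Coxeter group of rank `n = |S|` all of whose
proper standard parabolic subgroups are finite, and `A_W` its alternating subgroup.  Then
`H^*(A_W, ℚ) ≅ H^*(S^{n-1}, ℚ)`, i.e. `H^k(A_W, ℚ) ≅ ℚ` for `k = 0` and `k = n - 1` and
`H^k(A_W, ℚ) = 0` otherwise; in particular `H^{n-1}(A_W, 𝔽_p) ≠ 0` for every prime `p`. -/
theorem rational_cohomology_of_alternating_subgroup_sphere {B W : Type} [Fintype B]
    [Group W] [Infinite W] {M : CoxeterMatrix B} (cs : CoxeterSystem M W)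
    (hpar : ∀ T : Set B, T ≠ Set.univ → Finite (cs.parabolic T)) :
    (∀ k : ℕ, (k = 0 ∨ k = Fintype.card B - 1) →
        Nonempty ((groupCohomology (Rep.trivial ℚ ↥cs.signHom.ker ℚ) k) ≃ₗ[ℚ] ℚ)) ∧
    (∀ k : ℕ, ¬ (k = 0 ∨ k = Fintype.card B - 1) →
        Subsingleton (groupCohomology (Rep.trivial ℚ ↥cs.signHom.ker ℚ) k)) ∧
    (∀ p : ℕ, p.Prime →
        ¬ Subsingleton (groupCohomology
          (Rep.trivial (ZMod p) ↥cs.signHom.ker (ZMod p)) (Fintype.card B - 1))) := by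
  obtain ⟨iso, vanishing, nonvanishing⟩ :=
    rational_cohomology_of_alternating_subgroup_sphere_general cs ℚ hpar
  exact ⟨iso, vanishing, fun p hp => nonvanishing p hp.one_lt⟩
end
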